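/- There exists an infinite-dimensional Banach space X with a Schauder basis such that the algebra L(X) of bounded operators on X decomposes as a topological direct sum V ⊕ SS(X), where V is an infinite-dimensional reflexive Banach space with an unconditional basis (I_s)_{s=0}^∞ consisting of projections (I_0 the identity of X, and each I_s for s≥1 a norm-one projection onto an infinite-dimensional subspace of X spanned by a subsequence of the basis); moreover V, as a Banach algebra, is the unitisation of the closed linear span of {I_s : s≥1} endowed with pointwise multiplication (I_s I_t = δ_{st} I_s for s,t≥1). -/

import Mathlib

noncomputable section

/-- A bounded operator is strictly singular if its restriction to every
infinite-dimensional closed subspace fails to be an isomorphism onto its image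
(equivalently, is not bounded below there). -/
def StrictlySingular {E : Type*} [NormedAddCommGroup E] [NormedSpace ℝ E]
    (T : E →L[ℝ] E) : Prop :=
  ∀ U : Submodule ℝ E, IsClosed (U : Set E) → ¬ FiniteDimensional ℝ U →
    ¬ ∃ c : ℝ, 0 < c ∧ ∀ x ∈ U, c * ‖x‖ ≤ ‖T x‖


noncomputable section
namespace HISp

/-! ### Parameters -/

def mm (j : ℕ) : ℕ := 2 ^ 2 ^ j

def nn : ℕ → ℕ
  | 0 => 16
  | (j + 1) => mm (j + 1) ^ 4 * (2 * nn j) ^ (2 ^ (j + 3))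

lemma mm_succ (j : ℕ) : mm (j + 1) = mm j ^ 2 := by
  unfold mm; rw [← pow_mul, pow_succ]

lemma mm_two_le (j : ℕ) : 2 ≤ mm j := by
  unfold mm
  calc 2 = 2 ^ 1 := by norm_num
    _ ≤ 2 ^ 2 ^ j := Nat.pow_le_pow_right (by norm_num) Nat.one_le_two_pow

lemma mm_pos (j : ℕ) : 0 < mm j := by have := mm_two_le j; omega

lemma mm_mono : Monotone mm := by
  intro i j h
  exact Nat.pow_le_pow_right (by norm_num) (Nat.pow_le_pow_right (by norm_num) h)

lemma le_mm (j : ℕ) : j ≤ mm j :=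
  (Nat.lt_two_pow_self (n := j)).le.trans ((Nat.lt_two_pow_self (n := 2 ^ j)).le)

lemma mm_posR (j : ℕ) : (0 : ℝ) < mm j := by exact_mod_cast mm_pos j

lemma mm_invR_mono {i j : ℕ} (h : i ≤ j) : ((mm j : ℝ))⁻¹ ≤ ((mm i : ℝ))⁻¹ := by
  apply inv_anti₀ (mm_posR i)
  exact_mod_cast mm_mono h

lemma nn_pos (j : ℕ) : 0 < nn j := by
  induction j with
  | zero => simp [nn]
  | succ j ih =>
    have := mm_pos (j + 1)
    simp only [nn]; positivity

lemma nn_lb (j : ℕ) : mm (j + 1) ^ 4 * (2 * nn j) ^ (2 ^ (j + 3)) ≤ nn (j + 1) := le_rfl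

lemma nn_le_succ (j : ℕ) : nn j ≤ nn (j + 1) := by
  have h1 := nn_pos j
  have h2 := mm_pos (j + 1)
  calc nn j ≤ 1 * (2 * nn j) ^ 1 := by rw [one_mul, pow_one]; omega
    _ ≤ mm (j + 1) ^ 4 * (2 * nn j) ^ (2 ^ (j + 3)) :=
      Nat.mul_le_mul (Nat.one_le_pow _ _ h2)
        (Nat.pow_le_pow_right (by omega) Nat.one_le_two_pow)

lemma nn_mono : Monotone nn := monotone_nat_of_le_succ nn_le_succ

lemma mm_sq_le_nn (j : ℕ) : mm j ^ 2 ≤ nn j := by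
  cases j with
  | zero => simp [mm, nn]
  | succ j =>
    have h1 := nn_pos j
    have h2 := mm_pos (j + 1)
    calc mm (j + 1) ^ 2 ≤ mm (j + 1) ^ 4 * 1 := by
          rw [mul_one]; exact Nat.pow_le_pow_right h2 (by norm_num)
      _ ≤ _ := Nat.mul_le_mul le_rfl (Nat.one_le_pow _ _ (by omega))

lemma two_le_nn (j : ℕ) : 2 ≤ nn j := by
  have h := nn_mono (Nat.zero_le j)
  have : nn 0 = 16 := rfl
  omega

/-! ### Functionals, vectors -/

abbrev Fn := ℕ →₀ ℚ
abbrev Vc := ℕ →₀ ℝ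

def lab (n : ℕ) : ℕ := (Nat.unpair n).1 + 1

def Bm (β : ℕ → ℚ) : Prop :=
  (∃ c : ℚ, |c| ≤ 1 ∧ ∀ s, β s = c) ∨ ∀ F : Finset ℕ, ∑ s ∈ F, β s ^ 2 ≤ 1

def Mu (μ : ℕ → ℚ) : Prop :=
  ∃ (a b : ℕ) (β : ℕ → ℚ), Bm β ∧ ∀ n, μ n = if a ≤ n ∧ n < b then β (lab n) else 0

lemma Bm.abs_le {β : ℕ → ℚ} (h : Bm β) (s : ℕ) : |β s| ≤ 1 := by
  rcases h with ⟨c, hc, h⟩ | h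
  · rw [h]; exact hc
  · have := h {s}
    simp at this
    exact this

lemma Bm.mul {β γ : ℕ → ℚ} (h : Bm β) (h' : Bm γ) : Bm (fun s => β s * γ s) := by
  have key : ∀ β γ : ℕ → ℚ, Bm β → (∀ F : Finset ℕ, ∑ s ∈ F, γ s ^ 2 ≤ 1) →
      ∀ F : Finset ℕ, ∑ s ∈ F, (β s * γ s) ^ 2 ≤ 1 := by
    intro β γ hβ hγ F
    refine le_trans (Finset.sum_le_sum fun s _ => ?_) (hγ F)
    rw [mul_pow]
    have := (sq_le_one_iff_abs_le_one _).2 (hβ.abs_le s)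
    nlinarith [sq_nonneg (γ s)]
  rcases h' with ⟨c', hc', h'⟩ | h'
  · rcases h with ⟨c, hc, h⟩ | h
    · left
      refine ⟨c * c', ?_, fun s => by simp only [h, h']⟩
      rw [abs_mul]
      exact mul_le_one₀ hc (abs_nonneg _) hc'
    · right
      intro F
      have := key γ β (Or.inl ⟨c', hc', h'⟩) h F
      simpa [mul_comm] using this
  · right
    exact key β γ h h'

lemma Mu.abs_le {μ : ℕ → ℚ} (h : Mu μ) (n : ℕ) : |μ n| ≤ 1 := by
  obtain ⟨a, b, β, hβ, h⟩ := h
  rw [h]; split_ifs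
  · exact hβ.abs_le _
  · simp

lemma Mu.mul {μ ν : ℕ → ℚ} (h : Mu μ) (h' : Mu ν) : Mu (fun n => μ n * ν n) := by
  obtain ⟨a, b, β, hβ, h⟩ := h
  obtain ⟨a', b', β', hβ', h'⟩ := h'
  refine ⟨max a a', min b b', _, hβ.mul hβ', fun n => ?_⟩
  simp only [h, h', max_le_iff, lt_min_iff]
  by_cases h1 : a ≤ n ∧ n < b
  · by_cases h2 : a' ≤ n ∧ n < b'
    · rw [if_pos h1, if_pos h2, if_pos ⟨⟨h1.1, h2.1⟩, ⟨h1.2, h2.2⟩⟩]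
    · rw [if_neg h2, mul_zero, if_neg fun h => h2 ⟨h.1.2, h.2.2⟩]
  · rw [if_neg h1, zero_mul, if_neg fun h => h1 ⟨h.1.1, h.2.1⟩]

def act (μ : ℕ → ℚ) (f : Fn) : Fn :=
  Finsupp.onFinset f.support (fun n => μ n * f n) (by
    intro n hn
    rw [Finsupp.mem_support_iff]
    exact right_ne_zero_of_mul hn)

@[simp] lemma act_apply (μ : ℕ → ℚ) (f : Fn) (n : ℕ) : act μ f n = μ n * f n := rfl

lemma act_sum (μ : ℕ → ℚ) (d : ℕ) (f : ℕ → Fn) :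
    act μ (∑ i ∈ Finset.range d, f i) = ∑ i ∈ Finset.range d, act μ (f i) := by
  ext n; simp [Finsupp.finsetSum_apply, Finset.mul_sum]

lemma act_smul (μ : ℕ → ℚ) (c : ℚ) (f : Fn) : act μ (c • f) = c • act μ f := by
  ext n; simp; ring

lemma act_act (μ ν : ℕ → ℚ) (f : Fn) : act μ (act ν f) = act (fun n => μ n * ν n) f := by
  ext n; simp; ring

def SuccF (d : ℕ) (f : ℕ → Fn) : Prop :=
  ∀ r r', r < r' → r' < d → ∀ a b, f r a ≠ 0 → f r' b ≠ 0 → a < b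

lemma SuccF.act {d : ℕ} {f : ℕ → Fn} (h : SuccF d f) (μ : ℕ → ℚ) :
    SuccF d (fun i => act μ (f i)) := by
  intro r r' h1 h2 a b ha hb
  exact h r r' h1 h2 a b (right_ne_zero_of_mul ha) (right_ne_zero_of_mul hb)

lemma exists_enc : ∃ e : List (Fn × ℕ) → ℕ, Function.Injective e :=
  Countable.exists_injective_nat _

def enc : List (Fn × ℕ) → ℕ := Classical.choose exists_enc
lemma enc_inj : Function.Injective enc := Classical.choose_spec exists_enc

def sg (j : ℕ) (l : List (Fn × ℕ)) : ℕ :=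
  2 * Nat.pair (enc l) (nn j ^ 2 + (l.map Prod.snd).sum)

lemma sg_inj {j : ℕ} {l l' : List (Fn × ℕ)} (h : sg j l = sg j l') : l = l' := by
  unfold sg at h
  have h2 := Nat.eq_of_mul_eq_mul_left (by norm_num) h
  exact enc_inj (Nat.pair_eq_pair.1 h2).1

lemma le_sg (j : ℕ) (l : List (Fn × ℕ)) : nn j ^ 2 + (l.map Prod.snd).sum ≤ sg j l := by
  unfold sg
  have := Nat.right_le_pair (enc l) (nn j ^ 2 + (l.map Prod.snd).sum)
  omega

def pre (f : ℕ → Fn) (t : ℕ → ℕ) (r : ℕ) : List (Fn × ℕ) :=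
  (List.range r).map fun i => (f i, t i)

lemma pre_eq {f f' : ℕ → Fn} {t t' : ℕ → ℕ} {r r' : ℕ} (h : pre f t r = pre f' t' r') :
    r = r' ∧ ∀ i < r, f i = f' i := by
  have hl := congrArg List.length h
  simp [pre] at hl
  subst hl
  refine ⟨rfl, fun i hi => ?_⟩
  have := (List.map_inj_left.1 h) i (List.mem_range.2 hi)
  exact (Prod.mk.inj this).1

inductive Q : Option ℕ → Fn → Prop
  | leaf (n : ℕ) (q : ℚ) (h : |q| ≤ 1) : Q none (Finsupp.single n q)
  | even (j d : ℕ) (f : ℕ → Fn) (w : ℕ → Option ℕ) (hd : d ≤ nn (2 * j))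
      (hf : ∀ i, i < d → Q (w i) (f i)) (hs : SuccF d f) :
      Q (some (2 * j)) ((mm (2 * j) : ℚ)⁻¹ • ∑ i ∈ Finset.range d, f i)
  | odd (j d : ℕ) (f : ℕ → Fn) (t : ℕ → ℕ) (μ : ℕ → ℚ) (hμ : Mu μ)
      (hd : d ≤ nn (2 * j + 1))
      (hf : ∀ i, i < d → Q (some (sg (2 * j + 1) (pre f t i))) (f i)) (hs : SuccF d f) :
      Q (some (2 * j + 1)) ((mm (2 * j + 1) : ℚ)⁻¹ • act μ (∑ i ∈ Finset.range d, f i))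

def W (f : Fn) : Prop := ∃ w, Q w f

lemma Q.act {w : Option ℕ} {f : Fn} (h : Q w f) {μ : ℕ → ℚ} (hμ : Mu μ) :
    Q w (act μ f) := by
  induction h with
  | leaf n q h =>
    have : HISp.act μ (Finsupp.single n q) = Finsupp.single n (μ n * q) := by
      ext k
      by_cases hk : n = k
      · subst hk; simp
      · simp [Finsupp.single_apply, hk]
    rw [this]
    refine Q.leaf _ _ ?_
    rw [abs_mul]
    exact mul_le_one₀ (hμ.abs_le n) (abs_nonneg _) h
  | even j d f w hd hf hs ih =>
    rw [act_smul, act_sum]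
    exact Q.even j d _ w hd ih (hs.act μ)
  | odd j d f t ν hν hd hf hs ih =>
    rw [act_smul, act_act]
    exact Q.odd j d f t _ (hμ.mul hν) hd hf hs

lemma W.act {f : Fn} (h : W f) {μ : ℕ → ℚ} (hμ : Mu μ) : W (act μ f) := by
  obtain ⟨w, h⟩ := h
  exact ⟨w, h.act hμ⟩

/-- every node functional is an average of successive elements of `W` -/
lemma Q.decomp {i : ℕ} {f : Fn} (h : Q (some i) f) :
    ∃ d, d ≤ nn i ∧ ∃ g : ℕ → Fn, (∀ r < d, W (g r)) ∧ SuccF d g ∧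
      f = (mm i : ℚ)⁻¹ • ∑ r ∈ Finset.range d, g r := by
  cases h with
  | even j d f w hd hf hs => exact ⟨d, hd, f, fun r hr => ⟨_, hf r hr⟩, hs, rfl⟩
  | odd j d f t μ hμ hd hf hs =>
    exact ⟨d, hd, _, fun r hr => ⟨_, (hf r hr).act hμ⟩, hs.act μ, by rw [act_sum]⟩

lemma W.abs_le {f : Fn} (h : W f) (n : ℕ) : |f n| ≤ 1 := by
  obtain ⟨w, h⟩ := h
  have key : ∀ (i d : ℕ) (g : ℕ → Fn), (∀ r < d, |g r n| ≤ 1) → SuccF d g →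
      |((mm i : ℚ)⁻¹ • ∑ r ∈ Finset.range d, g r) n| ≤ 1 := by
    intro i d g hg hs
    have hm : (1 : ℚ) ≤ mm i := by exact_mod_cast mm_pos i
    have hm' : (mm i : ℚ)⁻¹ ≤ 1 := inv_le_one_of_one_le₀ hm
    have h0 : (0 : ℚ) ≤ (mm i : ℚ)⁻¹ := by positivity
    have : |∑ r ∈ Finset.range d, g r n| ≤ 1 := by
      by_cases hex : ∃ r < d, g r n ≠ 0
      · obtain ⟨r, hr, hrn⟩ := hex
        rw [Finset.sum_eq_single r]
        · exact hg r hr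
        · intro b hb hbr
          by_contra hne
          rcases lt_or_gt_of_ne hbr with h1 | h1
          · exact lt_irrefl _ (hs b r h1 hr n n hne hrn)
          · exact lt_irrefl _ (hs r b h1 (Finset.mem_range.1 hb) n n hrn hne)
        · intro h; exact absurd (Finset.mem_range.2 hr) h
      · push Not at hex
        rw [Finset.sum_eq_zero (fun r hr => hex r (Finset.mem_range.1 hr))]; simp
    simp only [Finsupp.smul_apply, Finsupp.finsetSum_apply, smul_eq_mul, abs_mul,
      abs_of_nonneg h0]
    exact mul_le_one₀ hm' (abs_nonneg _) this
  induction h with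
  | leaf k q h =>
    by_cases hk : k = n
    · subst hk; simpa using h
    · simp [Finsupp.single_apply, hk]
  | even j d f w hd hf hs ih => exact key _ _ _ ih hs
  | odd j d f t ν hν hd hf hs ih =>
    rw [act_sum]
    refine key _ _ _ (fun r hr => ?_) (hs.act ν)
    rw [act_apply, abs_mul]
    exact mul_le_one₀ (hν.abs_le n) (abs_nonneg _) (ih r hr)

lemma W.zero : W 0 := ⟨_, by simpa using Q.leaf 0 0 (by simp)⟩

lemma Mu_Ico (a b : ℕ) : Mu (fun n => if a ≤ n ∧ n < b then 1 else 0) :=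
  ⟨a, b, fun _ => 1, Or.inl ⟨1, by simp, fun _ => rfl⟩, fun _ => rfl⟩

/-! ### Pairing -/

def pr (f : Fn) : Vc →ₗ[ℝ] ℝ := Finsupp.linearCombination ℝ (fun n => (f n : ℝ))

lemma pr_eq (f : Fn) (v : Vc) : pr f v = ∑ n ∈ v.support, v n * (f n : ℝ) := by
  simp [pr, Finsupp.linearCombination_apply, Finsupp.sum]

lemma pr_single (f : Fn) (n : ℕ) (c : ℝ) : pr f (Finsupp.single n c) = c * f n := by
  simp [pr]

lemma pr_add (f g : Fn) (v : Vc) : pr (f + g) v = pr f v + pr g v := by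
  simp [pr_eq, mul_add, Finset.sum_add_distrib]

lemma pr_smul (c : ℚ) (f : Fn) (v : Vc) : pr (c • f) v = c * pr f v := by
  simp only [pr_eq, Finset.mul_sum, Finsupp.smul_apply, smul_eq_mul, Rat.cast_mul]
  exact Finset.sum_congr rfl fun n _ => by ring

lemma pr_zero (v : Vc) : pr 0 v = 0 := by simp [pr_eq]

lemma pr_sum {ι : Type*} (s : Finset ι) (f : ι → Fn) (v : Vc) :
    pr (∑ i ∈ s, f i) v = ∑ i ∈ s, pr (f i) v := by
  classical
  induction s using Finset.induction_on with
  | empty => simp [pr_zero]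
  | insert a s ha ih => rw [Finset.sum_insert ha, Finset.sum_insert ha, pr_add, ih]

lemma pr_disj {f : Fn} {v : Vc} (h : ∀ n, f n ≠ 0 → v n ≠ 0 → False) : pr f v = 0 := by
  rw [pr_eq]
  refine Finset.sum_eq_zero fun n hn => ?_
  by_cases hf : f n = 0
  · simp [hf]
  · exact absurd (h n hf (Finsupp.mem_support_iff.1 hn)) id

lemma pr_congr {f g : Fn} {v : Vc} (h : ∀ n, v n ≠ 0 → f n = g n) : pr f v = pr g v := by
  rw [pr_eq, pr_eq]
  exact Finset.sum_congr rfl fun n hn => by rw [h n (Finsupp.mem_support_iff.1 hn)]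

/-! ### Splitting along a node -/

def InBlk (a : ℕ → ℕ) (x : ℕ → Vc) : Prop := ∀ k n, x k n ≠ 0 → a k ≤ n ∧ n < a (k + 1)

lemma blk_lt {a : ℕ → ℕ} (ha : Monotone a) {k k' n n' : ℕ} (h : k < k') (hn : n < a (k + 1))
    (hn' : a k' ≤ n') : n < n' :=
  lt_of_lt_of_le hn ((ha h).trans hn')

theorem split {i : ℕ} {f : Fn} (hf : Q (some i) f) {a : ℕ → ℕ} {x : ℕ → Vc}
    (ha : Monotone a) (hx : InBlk a x) (A : Finset ℕ) :
    ∃ d, d ≤ nn i ∧ ∃ g : ℕ → Fn, (∀ r < d, W (g r)) ∧ ∃ Ar : ℕ → Finset ℕ,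
      (∀ r, Ar r ⊆ A) ∧ ∑ r ∈ Finset.range d, (Ar r).card ≤ A.card ∧
      ∃ Bd ⊆ A, Bd.card ≤ nn i ∧
      pr f (∑ k ∈ A, x k) = ∑ k ∈ Bd, pr f (x k) +
        (mm i : ℝ)⁻¹ * ∑ r ∈ Finset.range d, pr (g r) (∑ k ∈ Ar r, x k) := by
  classical
  obtain ⟨d, hd, g, hg, hs, hfe⟩ := hf.decomp
  let meets : ℕ → ℕ → Prop := fun r k => ∃ n, g r n ≠ 0 ∧ a k ≤ n ∧ n < a (k + 1)
  let P : ℕ → Prop := fun k => ∃ r r', r < r' ∧ r' < d ∧ meets r k ∧ meets r' k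
  let Bd := A.filter P
  let Ar : ℕ → Finset ℕ := fun r => A.filter fun k => ¬ P k ∧ meets r k
  have hprm : ∀ r k, ¬ meets r k → pr (g r) (x k) = 0 := by
    intro r k h
    refine pr_disj fun n h1 h2 => h ⟨n, h1, hx k n h2⟩
  refine ⟨d, hd, g, hg, Ar, fun r => Finset.filter_subset _ _, ?_, Bd,
    Finset.filter_subset _ _, ?_, ?_⟩
  · rw [← Finset.card_biUnion]
    · exact Finset.card_le_card (Finset.biUnion_subset.2 fun r _ => Finset.filter_subset _ _)
    · intro r hr r' hr' hne
      rw [Function.onFun, Finset.disjoint_left]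
      intro k hk hk'
      simp only [Ar, Finset.mem_filter] at hk hk'
      have hr := Finset.mem_range.1 hr
      have hr' := Finset.mem_range.1 hr'
      rcases lt_or_gt_of_ne hne with h | h
      · exact hk.2.1 ⟨r, r', h, hr', hk.2.2, hk'.2.2⟩
      · exact hk.2.1 ⟨r', r, h, hr, hk'.2.2, hk.2.2⟩
  · refine le_trans ?_ hd
    have hP : ∀ k ∈ Bd, ∃ r, ∃ r', r < r' ∧ r' < d ∧ meets r k ∧ meets r' k :=
      fun k hk => (Finset.mem_filter.1 hk).2
    choose! ρ hρ using hP
    rw [← Finset.card_range d]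
    refine Finset.card_le_card_of_injOn ρ ?_ ?_
    · intro k hk
      obtain ⟨r', h1, h2, -⟩ := hρ k hk
      exact Finset.mem_coe.2 (Finset.mem_range.2 (h1.trans h2))
    · have : ∀ k ∈ Bd, ∀ k' ∈ Bd, k < k' → ρ k = ρ k' → False := by
        intro k hk k' hk' hlt he
        obtain ⟨r1, h1, h2, h3, n1, h4, h5, h6⟩ := hρ k hk
        obtain ⟨r2, h1', h2', ⟨n2, h3', h4', h5'⟩, -⟩ := hρ k' hk'
        rw [← he] at h3'
        have := hs _ _ h1 h2 n2 n1 h3' h4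
        have h7 := blk_lt ha hlt h6 h4'
        omega
      intro k hk k' hk' he
      rcases lt_trichotomy k k' with h | h | h
      · exact absurd (this k hk k' hk' h he) id
      · exact h
      · exact absurd (this k' hk' k hk h he.symm) id
  · rw [map_sum, ← Finset.sum_filter_add_sum_filter_not A P]
    congr 1
    have h1 : ∀ k, pr f (x k) = (mm i : ℝ)⁻¹ * ∑ r ∈ Finset.range d, pr (g r) (x k) := by
      intro k
      rw [hfe, pr_smul, pr_sum]; simp
    simp_rw [h1, ← Finset.mul_sum]
    rw [Finset.sum_comm]
    congr 1
    refine Finset.sum_congr rfl fun r _ => ?_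
    rw [map_sum]
    have : Ar r = (A.filter fun k => ¬ P k).filter (meets r) := by
      ext k; simp [Ar, and_assoc]
    rw [this, Finset.sum_filter (p := meets r)]
    refine Finset.sum_congr rfl fun k _ => ?_
    split_ifs with h
    · rfl
    · exact hprm r k h

/-! ### The tree lemma -/

theorem tree {j ν : ℕ} (hν1 : 1 ≤ ν) (hν : ∀ i < j, nn i ≤ ν) {a : ℕ → ℕ} {x : ℕ → Vc}
    (ha : Monotone a) (hx : InBlk a x) {C τ L : ℝ} (hC : 0 ≤ C) (hτ : 0 ≤ τ) (hL : 1 ≤ L)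
    (K : Finset ℕ) (H1 : ∀ f, W f → ∀ k ∈ K, |pr f (x k)| ≤ C)
    (H3 : ∀ i, j ≤ i → ∀ f, Q (some i) f → ∀ A ⊆ K,
      |pr f (∑ k ∈ A, x k)| ≤ C * (A.card * τ + L)) (t : ℕ) :
    ∀ f, W f → ∀ A ⊆ K,
      |pr f (∑ k ∈ A, x k)| ≤ C * (A.card * (τ + (1 / 2) ^ t) + L * (2 * ν) ^ t) := by
  have hν1' : (1 : ℝ) ≤ ν := by exact_mod_cast hν1
  have sumle : ∀ f, W f → ∀ A ⊆ K, |∑ k ∈ A, pr f (x k)| ≤ C * A.card := by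
    intro f hf A hA
    refine (Finset.abs_sum_le_sum_abs _ _).trans ?_
    refine (Finset.sum_le_sum fun k hk => H1 f hf k (hA hk)).trans ?_
    simp [mul_comm]
  induction t with
  | zero =>
    intro f hf A hA
    rw [map_sum]
    refine (sumle f hf A hA).trans (mul_le_mul_of_nonneg_left ?_ hC)
    simp only [pow_zero, mul_one]
    have : (0 : ℝ) ≤ A.card := by positivity
    nlinarith
  | succ t ih =>
    intro f hf A hA
    have hpow : (1 : ℝ) ≤ (2 * (ν : ℝ)) ^ t := one_le_pow₀ (by linarith)
    have hpow' : (1 : ℝ) ≤ (2 * (ν : ℝ)) ^ (t + 1) := one_le_pow₀ (by linarith)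
    have hAc : (0 : ℝ) ≤ A.card := by positivity
    have hh : (0 : ℝ) < (1 / 2 : ℝ) ^ (t + 1) := by positivity
    obtain ⟨w, hw⟩ := hf
    cases w with
    | none =>
      generalize hwn : (none : Option ℕ) = w at hw
      cases hw with
      | leaf n q h =>
        have hWf : W (Finsupp.single n q) := ⟨_, Q.leaf n q h⟩
        have h1 : |pr (Finsupp.single n q) (∑ k ∈ A, x k)| ≤ C := by
          by_cases hex : ∃ k ∈ A, x k n ≠ 0
          · obtain ⟨k, hk, hkn⟩ := hex
            rw [map_sum, Finset.sum_eq_single k]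
            · exact H1 _ hWf k (hA hk)
            · intro k' _ hne
              refine pr_disj fun n' h1 h2 => ?_
              have : n = n' := by
                by_contra h; exact h1 (by simp [Finsupp.single_apply, h])
              subst this
              have e1 := hx k n hkn
              have e2 := hx k' n h2
              rcases lt_or_gt_of_ne hne with h | h
              · exact lt_irrefl _ (blk_lt ha h e2.2 e1.1)
              · exact lt_irrefl _ (blk_lt ha h e1.2 e2.1)
            · intro h; exact absurd hk h
          · push Not at hex
            rw [map_sum, Finset.sum_eq_zero]
            · simpa using hC
            · intro k hk
              refine pr_disj fun n' h1 h2 => ?_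
              have : n = n' := by
                by_contra h; exact h1 (by simp [Finsupp.single_apply, h])
              subst this
              exact h2 (hex k hk)
        refine h1.trans (le_mul_of_one_le_right hC ?_)
        nlinarith [mul_nonneg hAc (add_nonneg hτ hh.le)]
      | even => cases hwn
      | odd => cases hwn
    | some i =>
      by_cases hij : j ≤ i
      · refine (H3 i hij f hw A hA).trans (mul_le_mul_of_nonneg_left ?_ hC)
        nlinarith [mul_nonneg hAc hh.le]
      · push Not at hij
        obtain ⟨d, hd, g, hg, Ar, hAr, hcard, Bd, hBd, hBdc, heq⟩ := split hw ha hx A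
        rw [heq]
        have hdν : (d : ℝ) ≤ ν := by exact_mod_cast hd.trans (hν i hij)
        have hBν : (Bd.card : ℝ) ≤ ν := by exact_mod_cast hBdc.trans (hν i hij)
        have e1 : |∑ k ∈ Bd, pr f (x k)| ≤ C * ν :=
          (sumle f ⟨_, hw⟩ Bd (hBd.trans hA)).trans (mul_le_mul_of_nonneg_left hBν hC)
        have e2 : |∑ r ∈ Finset.range d, pr (g r) (∑ k ∈ Ar r, x k)| ≤
            C * (A.card * (τ + (1 / 2) ^ t) + ν * (L * (2 * ν) ^ t)) := by
          refine (Finset.abs_sum_le_sum_abs _ _).trans ?_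
          refine (Finset.sum_le_sum fun r hr =>
            ih (g r) (hg r (Finset.mem_range.1 hr)) (Ar r) ((hAr r).trans hA)).trans ?_
          rw [← Finset.mul_sum, Finset.sum_add_distrib, ← Finset.sum_mul]
          refine mul_le_mul_of_nonneg_left (add_le_add ?_ ?_) hC
          · refine mul_le_mul_of_nonneg_right ?_ (by positivity)
            exact_mod_cast hcard
          · simp only [Finset.sum_const, Finset.card_range, nsmul_eq_mul]
            exact mul_le_mul_of_nonneg_right hdν (by positivity)
        have hm : (2 : ℝ) ≤ mm i := by exact_mod_cast mm_two_le i
        have hm' : (mm i : ℝ)⁻¹ ≤ 1 / 2 := by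
          rw [one_div]; exact inv_anti₀ (by norm_num) hm
        have e3 : |(mm i : ℝ)⁻¹ * ∑ r ∈ Finset.range d, pr (g r) (∑ k ∈ Ar r, x k)| ≤
            1 / 2 * (C * (A.card * (τ + (1 / 2) ^ t) + ν * (L * (2 * ν) ^ t))) := by
          rw [abs_mul, abs_of_nonneg (by positivity : (0 : ℝ) ≤ (mm i : ℝ)⁻¹)]
          exact mul_le_mul hm' e2 (abs_nonneg _) (by norm_num)
        refine (abs_add_le _ _).trans ((add_le_add e1 e3).trans ?_)
        have e4 : (ν : ℝ) + 1 / 2 * (A.card * (τ + (1 / 2) ^ t) + ν * (L * (2 * ν) ^ t)) ≤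
            A.card * (τ + (1 / 2) ^ (t + 1)) + L * (2 * ν) ^ (t + 1) := by
          have p1 : (ν : ℝ) ≤ ν * (L * (2 * ν) ^ t) := by
            refine le_mul_of_one_le_right (by linarith) ?_
            nlinarith
          have p2 : L * (2 * (ν : ℝ)) ^ (t + 1) = 2 * (ν * (L * (2 * ν) ^ t)) := by ring
          have p3 : (1 / 2 : ℝ) ^ (t + 1) = 1 / 2 * (1 / 2) ^ t := by ring
          rw [p2, p3]
          nlinarith [mul_nonneg hAc hτ]
        calc C * ν + 1 / 2 * (C * (A.card * (τ + (1 / 2) ^ t) + ν * (L * (2 * ν) ^ t)))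
            = C * (ν + 1 / 2 * (A.card * (τ + (1 / 2) ^ t) + ν * (L * (2 * ν) ^ t))) := by ring
          _ ≤ _ := mul_le_mul_of_nonneg_left e4 hC

end HISp
end


noncomputable section
namespace HISp

lemma Q.abs_le {i : ℕ} {f : Fn} (h : Q (some i) f) (n : ℕ) : |f n| ≤ (mm i : ℚ)⁻¹ := by
  obtain ⟨d, -, g, hg, hs, rfl⟩ := h.decomp
  have h0 : (0 : ℚ) ≤ (mm i : ℚ)⁻¹ := by positivity
  have : |∑ r ∈ Finset.range d, g r n| ≤ 1 := by
    by_cases hex : ∃ r < d, g r n ≠ 0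
    · obtain ⟨r, hr, hrn⟩ := hex
      rw [Finset.sum_eq_single r]
      · exact (hg r hr).abs_le n
      · intro b hb hbr
        by_contra hne
        rcases lt_or_gt_of_ne hbr with h1 | h1
        · exact lt_irrefl _ (hs b r h1 hr n n hne hrn)
        · exact lt_irrefl _ (hs r b h1 (Finset.mem_range.1 hb) n n hrn hne)
      · intro h; exact absurd (Finset.mem_range.2 hr) h
    · push Not at hex
      rw [Finset.sum_eq_zero (fun r hr => hex r (Finset.mem_range.1 hr))]; simp
  simp only [Finsupp.smul_apply, Finsupp.finsetSum_apply, smul_eq_mul, abs_mul,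
    abs_of_nonneg h0]
  exact mul_le_of_le_one_right h0 this

/-- the `ℓ¹` norm of a finitely supported vector -/
def l1 (x : Vc) : ℝ := ∑ n ∈ x.support, |x n|

lemma l1_nonneg (x : Vc) : 0 ≤ l1 x := Finset.sum_nonneg fun _ _ => abs_nonneg _

lemma pr_le_l1 {f : Fn} {c : ℚ} (h : ∀ n, |f n| ≤ c) (x : Vc) : |pr f x| ≤ l1 x * c := by
  rw [pr_eq, l1, Finset.sum_mul]
  refine (Finset.abs_sum_le_sum_abs _ _).trans (Finset.sum_le_sum fun n _ => ?_)
  rw [abs_mul]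
  refine mul_le_mul_of_nonneg_left ?_ (abs_nonneg _)
  exact_mod_cast h n

lemma W.le_l1 {f : Fn} (h : W f) (x : Vc) : |pr f x| ≤ l1 x := by
  simpa using pr_le_l1 (c := 1) h.abs_le x

lemma Q.le_l1 {i : ℕ} {f : Fn} (h : Q (some i) f) (x : Vc) : |pr f x| ≤ l1 x / mm i := by
  simpa [div_eq_mul_inv] using pr_le_l1 h.abs_le x

def Good (C : ℝ) (N : ℕ) (x : Vc) : Prop :=
  (∀ f, W f → |pr f x| ≤ C) ∧ ∀ i < N, ∀ f, Q (some i) f → |pr f x| ≤ C / mm i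

lemma Good.nonneg {C : ℝ} {N : ℕ} {x : Vc} (h : Good C N x) : 0 ≤ C :=
  (abs_nonneg _).trans (h.1 0 W.zero)

lemma Good.mono {C : ℝ} {N M : ℕ} {x : Vc} (h : Good C N x) (hM : M ≤ N) : Good C M x :=
  ⟨h.1, fun i hi => h.2 i (hi.trans_le hM)⟩

lemma Good.mono_C {C D : ℝ} {N : ℕ} {x : Vc} (h : Good C N x) (hM : C ≤ D) : Good D N x :=
  ⟨fun f hf => (h.1 f hf).trans hM, fun i hi f hf => (h.2 i hi f hf).trans
    (div_le_div_of_nonneg_right hM (mm_posR i).le)⟩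

lemma Good.add {C D : ℝ} {N : ℕ} {x y : Vc} (h : Good C N x) (h' : Good D N y) :
    Good (C + D) N (x + y) := by
  refine ⟨fun f hf => ?_, fun i hi f hf => ?_⟩
  · rw [map_add]; exact (abs_add_le _ _).trans (add_le_add (h.1 f hf) (h'.1 f hf))
  · rw [map_add, add_div]
    exact (abs_add_le _ _).trans (add_le_add (h.2 i hi f hf) (h'.2 i hi f hf))

lemma Good.smul {C : ℝ} {N : ℕ} {x : Vc} (h : Good C N x) (c : ℝ) :
    Good (|c| * C) N (c • x) := by
  refine ⟨fun f hf => ?_, fun i hi f hf => ?_⟩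
  · rw [map_smul, smul_eq_mul, abs_mul]
    exact mul_le_mul_of_nonneg_left (h.1 f hf) (abs_nonneg _)
  · rw [map_smul, smul_eq_mul, abs_mul, mul_div_assoc]
    exact mul_le_mul_of_nonneg_left (h.2 i hi f hf) (abs_nonneg _)

lemma l1_single (n : ℕ) : l1 (Finsupp.single n 1) = 1 := by
  rw [l1, Finsupp.support_single_ne_zero _ one_ne_zero]; simp

lemma Good.basis (n N : ℕ) : Good 1 N (Finsupp.single n 1) :=
  ⟨fun f hf => by simpa [l1_single] using hf.le_l1 (Finsupp.single n 1),
   fun i _ f hf => by simpa only [l1_single] using hf.le_l1 (Finsupp.single n 1)⟩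

structure EV (C : ℝ) (w : ℕ) (z : Vc) : Prop where
  bd : ∀ f, W f → |pr f z| ≤ C
  lt : ∀ i < w, ∀ f, Q (some i) f → |pr f z| ≤ C / mm i
  gt : ∀ i > w, ∀ f, Q (some i) f → |pr f z| ≤ C / mm w

structure RIS (C : ℝ) (L : Finset ℕ) (J : ℕ → ℕ) (x : ℕ → Vc) : Prop where
  good : ∀ l ∈ L, Good C (J l) (x l)
  dec : ∀ l ∈ L, ∀ l' ∈ L, l < l' → ∀ i ≥ J l', ∀ f, Q (some i) f →
    |pr f (x l)| ≤ C / mm (J l)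

/-- sum of bounds with one exceptional index -/
lemma sum_exc {A : Finset ℕ} {F : ℕ → ℝ} {b c : ℝ} (hb : 0 ≤ b) (hc : 0 ≤ c)
    (h1 : ∀ k ∈ A, |F k| ≤ c)
    (h2 : ∀ k ∈ A, ∀ k' ∈ A, b < |F k| → b < |F k'| → k = k') :
    |∑ k ∈ A, F k| ≤ A.card * b + c := by
  classical
  refine (Finset.abs_sum_le_sum_abs _ _).trans ?_
  have : ∑ k ∈ A, |F k| ≤ ∑ k ∈ A, (b + if b < |F k| then c else 0) := by
    refine Finset.sum_le_sum fun k hk => ?_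
    split_ifs with h
    · have := h1 k hk; linarith
    · simpa using not_lt.1 h
  refine this.trans ?_
  rw [Finset.sum_add_distrib, Finset.sum_const, nsmul_eq_mul, ← Finset.sum_filter,
    Finset.sum_const, nsmul_eq_mul]
  have hcard : (A.filter fun k => b < |F k|).card ≤ 1 := by
    rw [Finset.card_le_one]
    intro k hk k' hk'
    rw [Finset.mem_filter] at hk hk'
    exact h2 k hk.1 k' hk'.1 hk.2 hk'.2
  have : ((A.filter fun k => b < |F k|).card : ℝ) ≤ 1 := by exact_mod_cast hcard
  nlinarith

lemma RIS.node {C : ℝ} {L : Finset ℕ} {J : ℕ → ℕ} {x : ℕ → Vc} (h : RIS C L J x)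
    (hC : 0 ≤ C) {w : ℕ} (hw : ∀ l ∈ L, w ≤ J l) {i : ℕ} (hi : w ≤ i) {f : Fn}
    (hf : Q (some i) f) {A : Finset ℕ} (hA : A ⊆ L) :
    |pr f (∑ k ∈ A, x k)| ≤ C * (A.card * (mm w : ℝ)⁻¹ + 1) := by
  rw [map_sum]
  have hb : 0 ≤ C * (mm w : ℝ)⁻¹ := by positivity
  have key : ∀ k ∈ A, ∀ k' ∈ A, k < k' → C * (mm w : ℝ)⁻¹ < |pr f (x k)| →
      C * (mm w : ℝ)⁻¹ < |pr f (x k')| → False := by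
    intro k hk k' hk' hlt h1 h2
    have hJ' : J k' ≤ i := by
      by_contra hh
      push Not at hh
      have := (h.good k' (hA hk')).2 i hh f hf
      rw [div_eq_mul_inv] at this
      have h3 := mul_le_mul_of_nonneg_left (mm_invR_mono hi) hC
      linarith
    have := h.dec k (hA hk) k' (hA hk') hlt i hJ' f hf
    rw [div_eq_mul_inv] at this
    have h3 := mul_le_mul_of_nonneg_left (mm_invR_mono (hw k (hA hk))) hC
    linarith
  refine (sum_exc hb hC (fun k hk => (h.good k (hA hk)).1 f ⟨_, hf⟩) ?_).trans
    (by apply le_of_eq; ring)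
  intro k hk k' hk' h1 h2
  rcases lt_trichotomy k k' with h | h | h
  · exact (key k hk k' hk' h h1 h2).elim
  · exact h
  · exact (key k' hk' k hk h h2 h1).elim

lemma nn_ge (v : ℕ) : (mm (v + 1) : ℝ) ^ 4 * (2 * (nn v : ℝ)) ^ (2 ^ (v + 3)) = nn (v + 1) := by
  rw [nn]; push_cast; rfl

lemma half_pow (w : ℕ) : (1 / 2 : ℝ) ^ (2 ^ (w + 1)) = ((mm w : ℝ) ^ 2)⁻¹ := by
  rw [← Nat.cast_pow, ← mm_succ, mm]; push_cast; rw [one_div, inv_pow]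

lemma tree_num (v : ℕ) : (mm (v + 1) : ℝ) ^ 4 * (nn v * (2 * (nn v : ℝ)) ^ (2 ^ (v + 2))) ≤
    nn (v + 1) := by
  rw [← nn_ge]
  refine mul_le_mul_of_nonneg_left ?_ (by positivity)
  have h1 : (1 : ℝ) ≤ nn v := by exact_mod_cast nn_pos v
  calc (nn v : ℝ) * (2 * (nn v : ℝ)) ^ (2 ^ (v + 2))
      ≤ (2 * (nn v : ℝ)) ^ (2 ^ (v + 2)) * (2 * (nn v : ℝ)) ^ (2 ^ (v + 2)) := by
        refine mul_le_mul_of_nonneg_right ?_ (by positivity)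
        calc (nn v : ℝ) ≤ 2 * nn v := by linarith
          _ = (2 * (nn v : ℝ)) ^ 1 := (pow_one _).symm
          _ ≤ _ := pow_le_pow_right₀ (by linarith) Nat.one_le_two_pow
    _ = _ := by rw [← pow_add]; congr 1; ring

lemma nn_sub_mono {w : ℕ} : ∀ i < w + 1, nn i ≤ nn w := fun i hi => nn_mono (by omega)

theorem lemmaA {C : ℝ} {L : Finset ℕ} {J : ℕ → ℕ} {a : ℕ → ℕ} {x : ℕ → Vc} {w : ℕ}
    (h : RIS C L J x) (ha : Monotone a) (hx : InBlk a x) (hC : 0 ≤ C) (hw : 1 ≤ w)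
    (hL : L.card = nn w) (hJ : ∀ l ∈ L, w + 1 ≤ J l) :
    EV (3 * C) w (((mm w : ℝ) / nn w) • ∑ l ∈ L, x l) := by
  obtain ⟨v, rfl⟩ : ∃ v, w = v + 1 := ⟨w - 1, by omega⟩
  set M : ℝ := ((mm (v + 1) : ℕ) : ℝ) with hM
  set n : ℝ := ((nn (v + 1) : ℕ) : ℝ) with hn
  have hMpos : 0 < M := mm_posR _
  have hM2 : 2 ≤ M := by rw [hM]; exact_mod_cast mm_two_le _
  have hnpos : 0 < n := by rw [hn]; exact_mod_cast nn_pos _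
  have hLr : (L.card : ℝ) = n := by rw [hL]
  have hν1 : (1 : ℝ) ≤ nn v := by exact_mod_cast nn_pos v
  have hMi : M * M⁻¹ = 1 := mul_inv_cancel₀ hMpos.ne'
  have hMi0 : 0 < M⁻¹ := by positivity
  have hMi2 : M⁻¹ ≤ 1 / 2 := by rw [one_div]; exact inv_anti₀ (by norm_num) hM2
  have htn := tree_num v
  rw [← hM, ← hn] at htn
  have tr := tree (j := v + 1) (ν := nn v) (nn_pos v) (nn_sub_mono) ha hx
    (C := C) (τ := M⁻¹) (L := 1) hC hMi0.le le_rfl L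
    (fun f hf k hk => (h.good k hk).1 f hf)
    (fun i hi f hf A hA => h.node hC (fun l hl => by have := hJ l hl; omega) hi hf hA)
    (2 ^ (v + 2))
  rw [half_pow (v + 1), ← hM] at tr
  set p : ℝ := (2 * (nn v : ℝ)) ^ (2 ^ (v + 2)) with hp
  have hp0 : 1 ≤ p := one_le_pow₀ (by linarith)
  -- p and nn v * p are at most n * M⁻¹ ^ 4
  have hnp : nn v * p ≤ n * M⁻¹ ^ 4 := by
    rw [inv_pow, ← div_eq_mul_inv, le_div_iff₀ (by positivity)]; linarith
  have hp1 : p ≤ n * M⁻¹ ^ 4 := (le_mul_of_one_le_left (by linarith) hν1).trans hnp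
  have hv1 : (nn v : ℝ) ≤ n * M⁻¹ ^ 4 := (le_mul_of_one_le_right (by linarith) hp0).trans hnp
  have hMi4 : M⁻¹ ^ 4 ≤ 1 / 8 * M⁻¹ := by
    have : M⁻¹ ^ 3 ≤ (1 / 2) ^ 3 := pow_le_pow_left₀ hMi0.le hMi2 3
    calc M⁻¹ ^ 4 = M⁻¹ ^ 3 * M⁻¹ := by ring
      _ ≤ (1 / 2) ^ 3 * M⁻¹ := by gcongr
      _ = _ := by norm_num
  have hMi4' : M⁻¹ ^ 4 ≤ M⁻¹ * M⁻¹ := by nlinarith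
  have hM22 : (M ^ 2)⁻¹ ≤ 1 / 2 * M⁻¹ := by
    rw [← inv_pow]; nlinarith
  have habs : ∀ f, ∀ b : ℝ, |pr f (∑ l ∈ L, x l)| ≤ b * (n * M⁻¹) →
      |pr f ((M / n) • ∑ l ∈ L, x l)| ≤ b := by
    intro f b hb
    rw [map_smul, smul_eq_mul, abs_mul, abs_of_pos (by positivity)]
    calc M / n * |pr f (∑ l ∈ L, x l)| ≤ M / n * (b * (n * M⁻¹)) := by gcongr
      _ = b := by field_simp
  refine ⟨fun f hf => habs f _ ?_, fun i hi f hf => habs f _ ?_, fun i hi f hf => habs f _ ?_⟩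
  · refine (tr f hf L subset_rfl).trans ?_
    rw [hLr, one_mul]
    have : n * (M⁻¹ + (M ^ 2)⁻¹) + p ≤ 3 * (n * M⁻¹) := by nlinarith
    nlinarith
  · obtain ⟨d, hd, g, hg, Ar, hAr, hcard, Bd, hBd, hBdc, heq⟩ := split hf ha hx L
    rw [heq]
    have hmi : (mm i : ℝ)⁻¹ ≥ M⁻¹ := mm_invR_mono hi.le
    have hmi0 : (0 : ℝ) < (mm i : ℝ)⁻¹ := inv_pos.2 (mm_posR i)
    have hdν : (d : ℝ) ≤ nn v := by exact_mod_cast hd.trans (nn_sub_mono i hi)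
    have hBν : (Bd.card : ℝ) ≤ nn v := by exact_mod_cast hBdc.trans (nn_sub_mono i hi)
    have e1 : |∑ k ∈ Bd, pr f (x k)| ≤ C * nn v := by
      refine (Finset.abs_sum_le_sum_abs _ _).trans ?_
      refine (Finset.sum_le_sum fun k hk => (h.good k (hBd hk)).1 f ⟨_, hf⟩).trans ?_
      rw [Finset.sum_const, nsmul_eq_mul, mul_comm]
      gcongr
    have e2 : |∑ r ∈ Finset.range d, pr (g r) (∑ k ∈ Ar r, x k)| ≤
        C * (n * (M⁻¹ + (M ^ 2)⁻¹) + nn v * p) := by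
      refine (Finset.abs_sum_le_sum_abs _ _).trans ?_
      refine (Finset.sum_le_sum fun r hr =>
        tr (g r) (hg r (Finset.mem_range.1 hr)) (Ar r) (hAr r)).trans ?_
      rw [← Finset.mul_sum, Finset.sum_add_distrib, ← Finset.sum_mul]
      refine mul_le_mul_of_nonneg_left (add_le_add ?_ ?_) hC
      · refine mul_le_mul_of_nonneg_right ?_ (by positivity)
        rw [← hLr]
        exact_mod_cast hcard
      · simp only [Finset.sum_const, Finset.card_range, nsmul_eq_mul, one_mul]
        exact mul_le_mul_of_nonneg_right hdν (by positivity)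
    have e3 : |(mm i : ℝ)⁻¹ * ∑ r ∈ Finset.range d, pr (g r) (∑ k ∈ Ar r, x k)| ≤
        (mm i : ℝ)⁻¹ * (C * (n * (M⁻¹ + (M ^ 2)⁻¹) + nn v * p)) := by
      rw [abs_mul, abs_of_pos hmi0]
      exact mul_le_mul_of_nonneg_left e2 hmi0.le
    refine (abs_add_le _ _).trans ((add_le_add e1 e3).trans ?_)
    rw [div_eq_mul_inv]
    have q1 : (nn v : ℝ) ≤ (mm i : ℝ)⁻¹ * (n * M⁻¹) := by
      calc (nn v : ℝ) ≤ n * M⁻¹ ^ 4 := hv1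
        _ ≤ n * (M⁻¹ * M⁻¹) := by gcongr
        _ ≤ n * ((mm i : ℝ)⁻¹ * M⁻¹) := by gcongr
        _ = _ := by ring
    have q2 : n * (M⁻¹ + (M ^ 2)⁻¹) + nn v * p ≤ 2 * (n * M⁻¹) := by nlinarith
    calc C * nn v + (mm i : ℝ)⁻¹ * (C * (n * (M⁻¹ + (M ^ 2)⁻¹) + nn v * p))
        ≤ C * ((mm i : ℝ)⁻¹ * (n * M⁻¹)) + (mm i : ℝ)⁻¹ * (C * (2 * (n * M⁻¹))) := by gcongr
      _ = _ := by ring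
  · have := h.node hC hJ (i := i) (by omega) hf subset_rfl
    refine this.trans ?_
    rw [hLr, mm_succ]
    push_cast
    rw [← hM, div_eq_mul_inv]
    have : 1 ≤ n * (M⁻¹ * M⁻¹) := by
      have h1 : M ^ 2 ≤ n := by rw [hM, hn]; exact_mod_cast mm_sq_le_nn _
      calc (1 : ℝ) = M ^ 2 * (M⁻¹ * M⁻¹) := by field_simp
        _ ≤ _ := by gcongr
    have h2 : (M ^ 2)⁻¹ = M⁻¹ * M⁻¹ := by rw [sq, mul_inv]
    rw [h2]
    nlinarith

end HISp
end


noncomputable section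
namespace HISp

/-- sum of bounds with at most `m` exceptional indices -/
lemma sum_excm {A : Finset ℕ} {F : ℕ → ℝ} {b c : ℝ} (m : ℕ) (hb : 0 ≤ b) (hc : 0 ≤ c)
    (h1 : ∀ k ∈ A, |F k| ≤ c)
    (h2 : (A.filter fun k => b < |F k|).card ≤ m) :
    |∑ k ∈ A, F k| ≤ A.card * b + m * c := by
  classical
  refine (Finset.abs_sum_le_sum_abs _ _).trans ?_
  have : ∑ k ∈ A, |F k| ≤ ∑ k ∈ A, (b + if b < |F k| then c else 0) := by
    refine Finset.sum_le_sum fun k hk => ?_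
    split_ifs with h
    · have := h1 k hk; linarith
    · simpa using not_lt.1 h
  refine this.trans ?_
  rw [Finset.sum_add_distrib, Finset.sum_const, nsmul_eq_mul, ← Finset.sum_filter,
    Finset.sum_const, nsmul_eq_mul]
  have : ((A.filter fun k => b < |F k|).card : ℝ) ≤ m := by exact_mod_cast h2
  nlinarith

lemma nn_sq_le_mm (j : ℕ) (l : List (Fn × ℕ)) : (nn j : ℝ) ^ 2 ≤ mm (sg j l) := by
  have h1 := le_sg j l
  have h2 := le_mm (sg j l)
  have : nn j ^ 2 ≤ mm (sg j l) := by omega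
  exact_mod_cast this

lemma lt_sg (j : ℕ) (l : List (Fn × ℕ)) : j < sg j l := by
  have h1 := le_sg j l
  have h2 := mm_sq_le_nn j
  have h3 := le_mm j
  have h4 := two_le_nn j
  have h5 := mm_two_le j
  have h6 : mm j ≤ mm j ^ 2 := Nat.le_self_pow (by norm_num) _
  have h7 : 2 * nn j ≤ nn j ^ 2 := by rw [sq]; exact Nat.mul_le_mul_right _ h4
  omega

theorem odd_node {p : ℕ} {C θ : ℝ} {a : ℕ → ℕ} {z : ℕ → Vc} {φ : ℕ → Fn} {t : ℕ → ℕ}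
    (ha : Monotone a) (hz : InBlk a z) (hC : 0 ≤ C) (hθ : 0 ≤ θ)
    (hEV : ∀ k < nn (2 * p + 1), EV C (sg (2 * p + 1) (pre φ t k)) (z k))
    (hdiag : ∀ β, Bm β → ∀ k < nn (2 * p + 1),
      |pr (act (fun n => β (lab n)) (φ k)) (z k)| ≤ C * θ)
    {f : Fn} (hf : Q (some (2 * p + 1)) f) {A : Finset ℕ}
    (hA : A ⊆ Finset.range (nn (2 * p + 1))) :
    |pr f (∑ k ∈ A, z k)| ≤
      A.card * ((mm (2 * p + 1) : ℝ)⁻¹ * (C * (nn (2 * p + 1) : ℝ)⁻¹ + C * θ)) + (3 : ℕ) * C := by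
  classical
  have hWf : W f := ⟨_, hf⟩
  generalize hi : some (2 * p + 1) = w at hf
  cases hf with
  | leaf => cases hi
  | even j' => simp at hi; omega
  | odd j' d g t' μ hμ hd hg hs =>
    obtain rfl : j' = p := by simp at hi; omega
    set j := 2 * j' + 1 with hj
    have hnj : (0 : ℝ) < nn j := by exact_mod_cast nn_pos j
    obtain ⟨a0, b0, β, hβ, hμe⟩ := hμ
    have hμ : Mu μ := ⟨a0, b0, β, hβ, hμe⟩
    have hmj := mm_posR j
    have hAk : ∀ k ∈ A, k < nn j := fun k hk => Finset.mem_range.1 (hA hk)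
    rw [map_sum]
    -- off-diagonal
    have hoff : ∀ k < nn j, ∀ r < d, sg j (pre g t' r) ≠ sg j (pre φ t k) →
        |pr (act μ (g r)) (z k)| ≤ C * ((nn j : ℝ) ^ 2)⁻¹ := by
      intro k hk r hr hne
      have hq := (hg r hr).act hμ
      rcases lt_or_gt_of_ne hne with h | h
      · refine ((hEV k hk).lt _ h _ hq).trans ?_
        rw [div_eq_mul_inv]
        exact mul_le_mul_of_nonneg_left (inv_anti₀ (by positivity) (nn_sq_le_mm _ _)) hC
      · refine ((hEV k hk).gt _ h _ hq).trans ?_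
        rw [div_eq_mul_inv]
        exact mul_le_mul_of_nonneg_left (inv_anti₀ (by positivity) (nn_sq_le_mm _ _)) hC
    have hpr : ∀ k, pr ((mm j : ℚ)⁻¹ • act μ (∑ i ∈ Finset.range d, g i)) (z k) =
        (mm j : ℝ)⁻¹ * ∑ r ∈ Finset.range d, pr (act μ (g r)) (z k) := by
      intro k
      rw [pr_smul, act_sum, pr_sum]; simp
    have hcnt : ∀ B ⊆ Finset.range d, (B.card : ℝ) * (C * ((nn j : ℝ) ^ 2)⁻¹) ≤
        C * (nn j : ℝ)⁻¹ := by
      intro B hB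
      have h1 : (B.card : ℝ) ≤ nn j := by
        have := Finset.card_le_card hB
        rw [Finset.card_range] at this
        exact_mod_cast this.trans hd
      calc (B.card : ℝ) * (C * ((nn j : ℝ) ^ 2)⁻¹) ≤ nn j * (C * ((nn j : ℝ) ^ 2)⁻¹) := by gcongr
        _ = _ := by field_simp
    have hoffsum : ∀ k < nn j, ∀ B ⊆ Finset.range d,
        (∀ r ∈ B, sg j (pre g t' r) ≠ sg j (pre φ t k)) →
        |∑ r ∈ B, pr (act μ (g r)) (z k)| ≤ C * (nn j : ℝ)⁻¹ := by
      intro k hk B hB hne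
      refine (Finset.abs_sum_le_sum_abs _ _).trans ?_
      refine (Finset.sum_le_sum fun r hr =>
        hoff k hk r (Finset.mem_range.1 (hB hr)) (hne r hr)).trans ?_
      rw [Finset.sum_const, nsmul_eq_mul]
      exact hcnt B hB
    let cut : ℕ → ℕ → Prop := fun c k => a k < c ∧ c < a (k + 1)
    have hcut : ∀ c k k', cut c k → cut c k' → k = k' := by
      intro c k k' h1 h2
      rcases lt_trichotomy k k' with h | h | h
      · have := ha (show k + 1 ≤ k' from h)
        have := h1.2; have := h2.1; omega
      · exact h
      · have := ha (show k' + 1 ≤ k from h)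
        have := h1.1; have := h2.2; omega
    -- exceptional indices
    set b : ℝ := (mm j : ℝ)⁻¹ * (C * (nn j : ℝ)⁻¹ + C * θ) with hb
    have hb0 : 0 ≤ b := by positivity
    have hsmall : ∀ k, |∑ r ∈ Finset.range d, pr (act μ (g r)) (z k)| ≤
        C * (nn j : ℝ)⁻¹ + C * θ →
        ¬ b < |pr ((mm j : ℚ)⁻¹ • act μ (∑ i ∈ Finset.range d, g i)) (z k)| := by
      intro k h
      rw [not_lt, hpr, abs_mul, abs_of_pos (by positivity)]
      exact mul_le_mul_of_nonneg_left h (by positivity)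
    have hCθ : 0 ≤ C * θ := mul_nonneg hC hθ
    have hex1 : ∀ k ∈ A,
        b < |pr ((mm j : ℚ)⁻¹ • act μ (∑ i ∈ Finset.range d, g i)) (z k)| →
        k < d ∧ sg j (pre g t' k) = sg j (pre φ t k) := by
      intro k hk hlt
      by_contra hcon
      refine hsmall k ?_ hlt
      refine (hoffsum k (hAk k hk) _ subset_rfl fun r hr heq => ?_).trans (by linarith)
      obtain ⟨hrk, -⟩ := pre_eq (sg_inj heq)
      subst hrk
      exact hcon ⟨Finset.mem_range.1 hr, heq⟩
    have hex2 : ∀ k ∈ A, g k = φ k → ¬ cut a0 k → ¬ cut b0 k →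
        ¬ b < |pr ((mm j : ℚ)⁻¹ • act μ (∑ i ∈ Finset.range d, g i)) (z k)| := by
      intro k hk hgk hc1 hc2 hlt
      obtain ⟨hkd, -⟩ := hex1 k hk hlt
      refine hsmall k ?_ hlt
      rw [← Finset.add_sum_erase _ _ (Finset.mem_range.2 hkd)]
      refine (abs_add_le _ _).trans ?_
      rw [add_comm]
      refine add_le_add (hoffsum k (hAk k hk) _ (Finset.erase_subset _ _) fun r hr heq => ?_) ?_
      · obtain ⟨hrk, -⟩ := pre_eq (sg_inj heq)
        exact (Finset.mem_erase.1 hr).1 hrk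
      · rw [hgk]
        by_cases hin : a0 ≤ a k ∧ a (k + 1) ≤ b0
        · have : pr (act μ (φ k)) (z k) = pr (act (fun n => β (lab n)) (φ k)) (z k) := by
            refine pr_congr fun n hn => ?_
            have := hz k n hn
            rw [act_apply, act_apply, hμe, if_pos (by omega)]
          rw [this]
          exact hdiag β hβ k (hAk k hk)
        · have : pr (act μ (φ k)) (z k) = 0 := by
            refine pr_disj fun n hn hn' => hn ?_
            have := hz k n hn'
            have h1 : ¬ (a k < a0 ∧ a0 < a (k + 1)) := hc1
            have h2 : ¬ (a k < b0 ∧ b0 < a (k + 1)) := hc2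
            rw [act_apply, hμe, if_neg (by omega), zero_mul]
          rw [this]; simpa using hCθ
    refine sum_excm 3 hb0 hC (fun k hk => (hEV k (hAk k hk)).bd _ hWf) ?_
    set E := A.filter fun k =>
      b < |pr ((mm j : ℚ)⁻¹ • act μ (∑ i ∈ Finset.range d, g i)) (z k)| with hE
    have hsub : E ⊆ (E.filter (cut a0) ∪ E.filter (cut b0)) ∪
        E.filter (fun k => ¬ cut a0 k ∧ ¬ cut b0 k) := by
      intro k hk
      simp only [Finset.mem_union, Finset.mem_filter]
      tauto
    have c1 : (E.filter (cut a0)).card ≤ 1 := by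
      rw [Finset.card_le_one]
      intro k hk k' hk'
      exact hcut a0 k k' (Finset.mem_filter.1 hk).2 (Finset.mem_filter.1 hk').2
    have c2 : (E.filter (cut b0)).card ≤ 1 := by
      rw [Finset.card_le_one]
      intro k hk k' hk'
      exact hcut b0 k k' (Finset.mem_filter.1 hk).2 (Finset.mem_filter.1 hk').2
    have c3 : (E.filter (fun k => ¬ cut a0 k ∧ ¬ cut b0 k)).card ≤ 1 := by
      rw [Finset.card_le_one]
      have key : ∀ k ∈ E.filter (fun k => ¬ cut a0 k ∧ ¬ cut b0 k),
          ∀ k' ∈ E.filter (fun k => ¬ cut a0 k ∧ ¬ cut b0 k), k < k' → False := by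
        intro k hk k' hk' hlt
        rw [Finset.mem_filter, hE, Finset.mem_filter] at hk hk'
        obtain ⟨hkd, he⟩ := hex1 k' hk'.1.1 hk'.1.2
        obtain ⟨-, hpre⟩ := pre_eq (sg_inj he)
        exact hex2 k hk.1.1 (hpre k hlt) hk.2.1 hk.2.2 hk.1.2
      intro k hk k' hk'
      rcases lt_trichotomy k k' with h | h | h
      · exact (key k hk k' hk' h).elim
      · exact h
      · exact (key k' hk' k hk h).elim
    calc E.card ≤ _ := Finset.card_le_card hsub
      _ ≤ _ := Finset.card_union_le _ _
      _ ≤ (1 + 1) + 1 := add_le_add ((Finset.card_union_le _ _).trans (add_le_add c1 c2)) c3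

theorem odd_lemma {p : ℕ} {C θ : ℝ} {a : ℕ → ℕ} {z : ℕ → Vc} {φ : ℕ → Fn} {t : ℕ → ℕ}
    (ha : Monotone a) (hz : InBlk a z) (hC : 0 ≤ C) (hθ : 0 ≤ θ)
    (hEV : ∀ k < nn (2 * p + 1), EV C (sg (2 * p + 1) (pre φ t k)) (z k))
    (hdiag : ∀ β, Bm β → ∀ k < nn (2 * p + 1),
      |pr (act (fun n => β (lab n)) (φ k)) (z k)| ≤ C * θ)
    {f : Fn} (hf : W f) :
    |pr f (((mm (2 * p + 1) : ℝ) / nn (2 * p + 1)) •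
        ∑ k ∈ Finset.range (nn (2 * p + 1)), z k)| ≤
      C * (6 * (mm (2 * p + 1) : ℝ)⁻¹ + θ) := by
  set M : ℝ := ((mm (2 * p + 1) : ℕ) : ℝ) with hM
  set n : ℝ := ((nn (2 * p + 1) : ℕ) : ℝ) with hn
  have hMpos : 0 < M := mm_posR _
  have hM2 : 2 ≤ M := by rw [hM]; exact_mod_cast mm_two_le _
  have hnpos : 0 < n := by rw [hn]; exact_mod_cast nn_pos _
  have hMi0 : 0 < M⁻¹ := by positivity
  have hMi2 : M⁻¹ ≤ 1 / 2 := by rw [one_div]; exact inv_anti₀ (by norm_num) hM2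
  have hn2 : M ^ 2 ≤ n := by rw [hM, hn]; exact_mod_cast mm_sq_le_nn _
  have hni : n⁻¹ ≤ M⁻¹ := inv_anti₀ hMpos (by nlinarith)
  have htn := tree_num (2 * p)
  rw [← hM, ← hn] at htn
  have hmsucc : ((mm (2 * p + 1 + 1) : ℕ) : ℝ)⁻¹ = M⁻¹ * M⁻¹ := by
    rw [mm_succ]; push_cast; rw [← hM, sq, mul_inv]
  have hτ : 0 ≤ 2 * (M⁻¹ * M⁻¹) + M⁻¹ * θ := by positivity
  have tr := tree (j := 2 * p + 1) (ν := nn (2 * p)) (nn_pos _) (nn_sub_mono) ha hz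
    (C := C) (τ := 2 * (M⁻¹ * M⁻¹) + M⁻¹ * θ) (L := 3) hC hτ (by norm_num)
    (Finset.range (nn (2 * p + 1)))
    (fun f hf k hk => (hEV k (Finset.mem_range.1 hk)).bd f hf)
    (fun i hi f hf A hA => ?_) (2 ^ (2 * p + 2)) f hf _ subset_rfl
  · rw [half_pow (2 * p + 1), ← hM, Finset.card_range, ← hn] at tr
    have hν1 : (1 : ℝ) ≤ nn (2 * p) := by exact_mod_cast nn_pos (2 * p)
    set q : ℝ := (2 * (nn (2 * p) : ℝ)) ^ (2 ^ (2 * p + 2)) with hq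
    have hq0 : 1 ≤ q := one_le_pow₀ (by linarith)
    have hnq : nn (2 * p) * q ≤ n * M⁻¹ ^ 4 := by
      rw [inv_pow, ← div_eq_mul_inv, le_div_iff₀ (by positivity)]; linarith
    have hq1 : q ≤ n * M⁻¹ ^ 4 := (le_mul_of_one_le_left (by linarith) hν1).trans hnq
    have hMi4 : M⁻¹ ^ 4 ≤ M⁻¹ * M⁻¹ := by
      have : M⁻¹ * M⁻¹ ≤ 1 := by nlinarith
      have h0 : 0 ≤ M⁻¹ * M⁻¹ := by positivity
      calc M⁻¹ ^ 4 = (M⁻¹ * M⁻¹) * (M⁻¹ * M⁻¹) := by ring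
        _ ≤ _ := by nlinarith
    have hq2 : q ≤ n * (M⁻¹ * M⁻¹) := hq1.trans (by gcongr)
    rw [map_smul, smul_eq_mul, abs_mul, abs_of_pos (by positivity)]
    have h2 : (M ^ 2)⁻¹ = M⁻¹ * M⁻¹ := by rw [sq, mul_inv]
    rw [h2] at tr
    calc _ ≤ M / n * (C * (n * (2 * (M⁻¹ * M⁻¹) + M⁻¹ * θ + M⁻¹ * M⁻¹) + 3 * q)) := by gcongr
      _ ≤ M / n * (C * (n * (2 * (M⁻¹ * M⁻¹) + M⁻¹ * θ + M⁻¹ * M⁻¹) +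
          3 * (n * (M⁻¹ * M⁻¹)))) := by gcongr
      _ = _ := by field_simp; ring
  · rcases eq_or_lt_of_le hi with rfl | hlt
    · refine (odd_node ha hz hC hθ hEV hdiag hf hA).trans ?_
      rw [← hM, ← hn]
      push_cast
      have : M⁻¹ * (C * n⁻¹ + C * θ) ≤ C * (2 * (M⁻¹ * M⁻¹) + M⁻¹ * θ) := by
        calc M⁻¹ * (C * n⁻¹ + C * θ) ≤ M⁻¹ * (C * M⁻¹ + C * θ) := by gcongr
          _ = C * (M⁻¹ * M⁻¹ + M⁻¹ * θ) := by ring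
          _ ≤ _ := by
            refine mul_le_mul_of_nonneg_left ?_ hC
            nlinarith
      have hAc : (0 : ℝ) ≤ A.card := by positivity
      nlinarith
    · rw [map_sum]
      have hb : 0 ≤ C * (M⁻¹ * M⁻¹) := by positivity
      have hAk : ∀ k ∈ A, k < nn (2 * p + 1) := fun k hk => Finset.mem_range.1 (hA hk)
      have key : ∀ k ∈ A, C * (M⁻¹ * M⁻¹) < |pr f (z k)| →
          sg (2 * p + 1) (pre φ t k) = i := by
        intro k hk h
        by_contra hne
        rcases lt_or_gt_of_ne hne with h1 | h1
        · have := (hEV k (hAk k hk)).gt i h1 f hf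
          rw [div_eq_mul_inv] at this
          have h3 := nn_sq_le_mm (2 * p + 1) (pre φ t k)
          rw [← hn] at h3
          have h4 : ((mm (sg (2 * p + 1) (pre φ t k)) : ℕ) : ℝ)⁻¹ ≤ M⁻¹ * M⁻¹ := by
            refine (inv_anti₀ (by positivity) h3).trans ?_
            rw [sq, mul_inv]; gcongr
          have := mul_le_mul_of_nonneg_left h4 hC
          linarith
        · have := (hEV k (hAk k hk)).lt i h1 f hf
          rw [div_eq_mul_inv] at this
          have h4 := mm_invR_mono (show 2 * p + 1 + 1 ≤ i from hlt)
          rw [hmsucc] at h4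
          have := mul_le_mul_of_nonneg_left h4 hC
          linarith
      refine (sum_exc hb hC (fun k hk => (hEV k (hAk k hk)).bd f ⟨_, hf⟩) ?_).trans ?_
      · intro k hk k' hk' h1 h2
        exact (pre_eq (sg_inj ((key k hk h1).trans (key k' hk' h2).symm))).1
      · have hAc : (0 : ℝ) ≤ A.card := by positivity
        have : (A.card : ℝ) * (M⁻¹ * M⁻¹) ≤ A.card * (2 * (M⁻¹ * M⁻¹) + M⁻¹ * θ) := by
          gcongr
          have : 0 ≤ M⁻¹ * θ := by positivity
          nlinarith
        nlinarith

end HISp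
end


noncomputable section
namespace HISp

open Filter Topology

def Wt : Type := {f : Fn // W f}
instance : TopologicalSpace Wt := ⊥
instance : DiscreteTopology Wt := ⟨rfl⟩

abbrev Bd := BoundedContinuousFunction Wt ℝ

def emb0 : Vc →ₗ[ℝ] Bd where
  toFun v := BoundedContinuousFunction.ofNormedAddCommGroupDiscrete (fun f : Wt => pr f.1 v) (l1 v)
    (fun f => f.2.le_l1 v)
  map_add' u v := by ext f; simp
  map_smul' c v := by ext f; simp

lemma emb0_apply (v : Vc) (f : Wt) : emb0 v f = pr f.1 v := rfl

def XS : Submodule ℝ Bd := (LinearMap.range emb0).topologicalClosure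
def Xs : Type := XS

instance : NormedAddCommGroup Xs := inferInstanceAs (NormedAddCommGroup XS)
instance : NormedSpace ℝ Xs := inferInstanceAs (NormedSpace ℝ XS)
instance : CompleteSpace Xs :=
  (Submodule.isClosed_topologicalClosure (LinearMap.range emb0)).completeSpace_coe

lemma Xs.norm_coe_le (x : Xs) (f : Wt) : |x.1 f| ≤ ‖x‖ := x.1.norm_coe_le_norm f

def ev (f : Wt) : Xs →L[ℝ] ℝ :=
  LinearMap.mkContinuous
    { toFun := fun x => x.1 f
      map_add' := fun x y => rfl
      map_smul' := fun c x => rfl } 1 (fun x => by rw [one_mul]; exact x.norm_coe_le f)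

lemma ev_apply (f : Wt) (x : Xs) : ev f x = x.1 f := rfl

def emb : Vc →ₗ[ℝ] Xs where
  toFun v := ⟨emb0 v, Submodule.le_topologicalClosure _ ⟨v, rfl⟩⟩
  map_add' u v := Subtype.ext (map_add emb0 u v)
  map_smul' c v := Subtype.ext (map_smul emb0 c v)

lemma ev_emb (f : Wt) (v : Vc) : ev f (emb v) = pr f.1 v := rfl

lemma emb_dense : DenseRange emb := by
  intro x
  refine (closure_subtype (x := x)).2 ?_
  have := x.2
  unfold XS at this
  rw [← SetLike.mem_coe, Submodule.topologicalClosure_coe] at this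
  convert this using 2
  ext y
  constructor
  · rintro ⟨_, ⟨v, rfl⟩, rfl⟩; exact ⟨v, rfl⟩
  · rintro ⟨v, rfl⟩; exact ⟨_, ⟨v, rfl⟩, rfl⟩

lemma ev_le (f : Wt) (x : Xs) : |ev f x| ≤ ‖x‖ := x.norm_coe_le f

lemma norm_ev_le (f : Wt) : ‖ev f‖ ≤ 1 :=
  ContinuousLinearMap.opNorm_le_bound _ zero_le_one fun x => by
    rw [one_mul]; exact ev_le f x

lemma norm_le_of {c : ℝ} (hc : 0 ≤ c) {x : Xs} (h : ∀ f, |ev f x| ≤ c) : ‖x‖ ≤ c :=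
  (BoundedContinuousFunction.norm_le hc).2 h

lemma norm_emb_le {c : ℝ} {v : Vc} (h : ∀ f, W f → |pr f v| ≤ c) : ‖emb v‖ ≤ c :=
  norm_le_of ((abs_nonneg _).trans (h 0 W.zero)) fun f => h f.1 f.2

lemma pr_le_norm {f : Fn} (hf : W f) (v : Vc) : |pr f v| ≤ ‖emb v‖ := ev_le ⟨f, hf⟩ (emb v)

lemma ex_norming {x : Xs} {c : ℝ} (hc : 0 ≤ c) (h : c < ‖x‖) : ∃ f : Wt, c < |ev f x| := by
  by_contra hcon
  push Not at hcon
  exact absurd (norm_le_of hc hcon) (not_le.2 h)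

/-! ### Multipliers -/

def actV (μ : ℕ → ℚ) : Vc →ₗ[ℝ] Vc where
  toFun v := Finsupp.onFinset v.support (fun n => (μ n : ℝ) * v n) (by
    intro n hn
    rw [Finsupp.mem_support_iff]
    exact right_ne_zero_of_mul hn)
  map_add' u v := by ext n; simp [mul_add]
  map_smul' c v := by ext n; simp; ring

@[simp] lemma actV_apply (μ : ℕ → ℚ) (v : Vc) (n : ℕ) : actV μ v n = (μ n : ℝ) * v n := rfl

lemma pr_actV (μ : ℕ → ℚ) (f : Fn) (v : Vc) : pr f (actV μ v) = pr (act μ f) v := by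
  have : ∀ g : Fn, ∀ u : Vc, u.support ⊆ v.support →
      pr g u = ∑ n ∈ v.support, u n * (g n : ℝ) := by
    intro g u hu
    rw [pr_eq]
    refine Finset.sum_subset hu fun n _ hn => ?_
    rw [Finsupp.notMem_support_iff.1 hn, zero_mul]
  have hs : (actV μ v).support ⊆ v.support := fun n hn => by
    rw [Finsupp.mem_support_iff] at hn ⊢
    exact right_ne_zero_of_mul hn
  rw [this f (actV μ v) hs, this _ v subset_rfl]
  refine Finset.sum_congr rfl fun n _ => ?_
  rw [actV_apply, act_apply]; push_cast; ring

def MP (μ : ℕ → ℚ) : Prop := ∀ f, W f → W (act μ f)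

lemma Mu.mp {μ : ℕ → ℚ} (h : Mu μ) : MP μ := fun _ hf => hf.act h

lemma Bm.mp {β : ℕ → ℚ} (h : Bm β) : MP (fun n => β (lab n)) := by
  intro f hf
  have : act (fun n => β (lab n)) f =
      act (fun n => if 0 ≤ n ∧ n < f.support.sup id + 1 then β (lab n) else 0) f := by
    ext n
    rw [act_apply, act_apply]
    by_cases hn : f n = 0
    · simp [hn]
    · have : n ≤ f.support.sup id :=
        Finset.le_sup (f := id) (Finsupp.mem_support_iff.2 hn)
      rw [if_pos ⟨Nat.zero_le _, by omega⟩]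
  rw [this]
  exact hf.act ⟨_, _, β, h, fun n => rfl⟩

def Wm {μ : ℕ → ℚ} (h : MP μ) (f : Wt) : Wt := ⟨act μ f.1, h _ f.2⟩

def Pm0 {μ : ℕ → ℚ} (h : MP μ) : Bd →L[ℝ] Bd :=
  LinearMap.mkContinuous
    { toFun := fun x => x.compContinuous ⟨Wm h, continuous_of_discreteTopology⟩
      map_add' := fun x y => by ext f; rfl
      map_smul' := fun c x => by ext f; rfl } 1 (fun x => by
        rw [one_mul]
        exact (BoundedContinuousFunction.norm_le (norm_nonneg x)).2
          fun f => x.norm_coe_le_norm _)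

lemma Pm0_apply {μ : ℕ → ℚ} (h : MP μ) (x : Bd) (f : Wt) : Pm0 h x f = x (Wm h f) := rfl

lemma Pm0_mem {μ : ℕ → ℚ} (h : MP μ) (x : Bd) (hx : x ∈ XS) : Pm0 h x ∈ XS := by
  have h1 : XS ≤ XS.comap (Pm0 h).toLinearMap := by
    refine Submodule.topologicalClosure_minimal _ ?_ ?_
    · rintro _ ⟨v, rfl⟩
      refine Submodule.le_topologicalClosure _ ⟨actV μ v, ?_⟩
      ext f
      exact pr_actV μ f.1 v
    · exact (Submodule.isClosed_topologicalClosure _).preimage (Pm0 h).continuous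
  exact h1 hx

def Pm {μ : ℕ → ℚ} (h : MP μ) : Xs →L[ℝ] Xs :=
  LinearMap.mkContinuous
    { toFun := fun x => (⟨Pm0 h x.1, Pm0_mem h x.1 x.2⟩ : XS)
      map_add' := fun x y => Subtype.ext (map_add (Pm0 h) x.1 y.1)
      map_smul' := fun c x => Subtype.ext (map_smul (Pm0 h) c x.1) } 1 (fun x => by
        rw [one_mul]
        exact (BoundedContinuousFunction.norm_le (norm_nonneg _)).2
          fun f => x.1.norm_coe_le_norm _)

lemma ev_Pm {μ : ℕ → ℚ} (h : MP μ) (f : Wt) (x : Xs) : ev f (Pm h x) = ev (Wm h f) x := rfl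

lemma Pm_norm_le {μ : ℕ → ℚ} (h : MP μ) (x : Xs) : ‖Pm h x‖ ≤ ‖x‖ :=
  norm_le_of (norm_nonneg _) fun f => by rw [ev_Pm]; exact ev_le _ _

lemma Pm_emb {μ : ℕ → ℚ} (h : MP μ) (v : Vc) : Pm h (emb v) = emb (actV μ v) := by
  apply Subtype.ext
  ext f
  exact (pr_actV μ f.1 v).symm

lemma clm_ext {Y : Type*} [NormedAddCommGroup Y] [NormedSpace ℝ Y] {S T : Xs →L[ℝ] Y}
    (h : ∀ v, S (emb v) = T (emb v)) : S = T := by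
  have := emb_dense.equalizer S.continuous T.continuous (funext h)
  exact ContinuousLinearMap.ext fun x => congrFun this x

/-! ### The basis -/

def eb (n : ℕ) : Xs := emb (Finsupp.single n 1)

lemma W_single (n : ℕ) : W (Finsupp.single n 1) := ⟨_, Q.leaf n 1 (by simp)⟩
def est (n : ℕ) : Xs →L[ℝ] ℝ := ev ⟨Finsupp.single n 1, W_single n⟩

lemma est_emb (n : ℕ) (v : Vc) : est n (emb v) = v n := by
  have := ev_emb ⟨Finsupp.single n 1, W_single n⟩ v
  rw [est, this, pr_eq]
  by_cases h : v n = 0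
  · rw [h]
    refine Finset.sum_eq_zero fun k _ => ?_
    by_cases hk : n = k
    · subst hk; simp [h]
    · simp [hk]
  · rw [Finset.sum_eq_single n]
    · simp
    · intro k _ hk; simp [hk.symm]
    · intro hn; exact absurd (Finsupp.notMem_support_iff.1 hn) h

lemma est_eb (n k : ℕ) : est n (eb k) = if k = n then 1 else 0 := by
  rw [eb, est_emb, Finsupp.single_apply]

lemma norm_eb (n : ℕ) : ‖eb n‖ = 1 := by
  apply le_antisymm
  · exact norm_emb_le fun f hf => by simpa [l1_single] using hf.le_l1 (Finsupp.single n 1)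
  · have := ev_le ⟨Finsupp.single n 1, W_single n⟩ (eb n)
    change |est n (eb n)| ≤ _ at this
    rw [est_eb] at this
    simpa using this

def muI (a b : ℕ) : ℕ → ℚ := fun n => if a ≤ n ∧ n < b then 1 else 0
lemma muI_mp (a b : ℕ) : MP (muI a b) := (Mu_Ico a b).mp

def PN (N : ℕ) : Xs →L[ℝ] Xs := Pm (muI_mp 0 N)

lemma PN_emb (N : ℕ) (v : Vc) : PN N (emb v) = ∑ i ∈ Finset.range N, v i • eb i := by
  rw [PN, Pm_emb]
  simp only [eb, ← map_smul, ← map_sum]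
  congr 1
  ext n
  rw [actV_apply, Finsupp.finsetSum_apply]
  simp only [Finsupp.smul_apply, Finsupp.single_apply, smul_eq_mul, muI]
  by_cases hn : n < N
  · rw [if_pos ⟨Nat.zero_le _, hn⟩, Finset.sum_eq_single n]
    · simp
    · intro b _ hb; simp [hb]
    · intro h; exact absurd (Finset.mem_range.2 hn) h
  · rw [if_neg (by omega), Finset.sum_eq_zero]
    · simp
    · intro i hi
      have := Finset.mem_range.1 hi
      rw [if_neg (by omega), mul_zero]

lemma PN_eq (N : ℕ) (x : Xs) : PN N x = ∑ i ∈ Finset.range N, est i x • eb i := by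
  have : PN N = ∑ i ∈ Finset.range N, (est i).smulRight (eb i) := by
    apply clm_ext
    intro v
    rw [PN_emb, sum_apply]
    exact Finset.sum_congr rfl fun i _ => by
      rw [ContinuousLinearMap.smulRight_apply, est_emb]
  rw [this, sum_apply]
  rfl

lemma PN_fix {N : ℕ} {v : Vc} (h : ∀ n, v n ≠ 0 → n < N) : PN N (emb v) = emb v := by
  rw [PN, Pm_emb]
  congr 1
  ext n
  rw [actV_apply, muI]
  by_cases hn : v n = 0
  · rw [hn, mul_zero]
  · rw [if_pos ⟨Nat.zero_le _, h n hn⟩]; simp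

lemma exists_supp_lt (v : Vc) : ∃ N, ∀ n, v n ≠ 0 → n < N :=
  ⟨v.support.sup id + 1, fun n hn => by
    have : n ≤ v.support.sup id :=
        Finset.le_sup (f := id) (Finsupp.mem_support_iff.2 hn)
    omega⟩

lemma exists_suppF_lt (v : Fn) : ∃ N, ∀ n, v n ≠ 0 → n < N :=
  ⟨v.support.sup id + 1, fun n hn => by
    have : n ≤ v.support.sup id :=
        Finset.le_sup (f := id) (Finsupp.mem_support_iff.2 hn)
    omega⟩

lemma exists_emb_near (x : Xs) {ε : ℝ} (hε : 0 < ε) : ∃ v, ‖x - emb v‖ < ε := by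
  obtain ⟨v, hv⟩ := emb_dense.exists_dist_lt x hε
  exact ⟨v, by rwa [dist_eq_norm] at hv⟩

lemma PN_tendsto (x : Xs) : Tendsto (fun N => PN N x) atTop (𝓝 x) := by
  rw [Metric.tendsto_atTop]
  intro ε hε
  obtain ⟨v, hv⟩ := exists_emb_near x (ε := ε / 2) (by linarith)
  obtain ⟨N, hN⟩ := exists_supp_lt v
  refine ⟨N, fun M hM => ?_⟩
  have h1 : PN M (emb v) = emb v := PN_fix fun n hn => (hN n hn).trans_le hM
  have h2 : PN M x - x = PN M (x - emb v) - (x - emb v) := by rw [map_sub, h1]; abel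
  rw [dist_eq_norm, h2]
  calc _ ≤ ‖PN M (x - emb v)‖ + ‖x - emb v‖ := norm_sub_le _ _
    _ ≤ ‖x - emb v‖ + ‖x - emb v‖ := by gcongr; exact Pm_norm_le _ _
    _ < ε := by linarith

theorem schauder (x : Xs) : ∃! a : ℕ → ℝ,
    Tendsto (fun N => ∑ i ∈ Finset.range N, a i • eb i) atTop (𝓝 x) := by
  refine ⟨fun i => est i x, ?_, ?_⟩
  · have := PN_tendsto x
    simpa only [PN_eq] using this
  · intro a ha
    funext i
    have h1 := ((est i).continuous.tendsto x).comp ha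
    refine tendsto_nhds_unique_of_eventuallyEq (tendsto_const_nhds (x := a i)) h1 ?_
    filter_upwards [eventually_gt_atTop i] with N hN
    simp only [Function.comp, map_sum, map_smul, est_eb, smul_eq_mul]
    rw [Finset.sum_eq_single i]
    · simp
    · intro b _ hb; simp [hb]
    · intro h; exact absurd (Finset.mem_range.2 hN) h

end HISp
end


noncomputable section
namespace HISp

open Filter Topology

abbrev H := lp (fun _ : ℕ => ℝ) 2

def dl (s : ℕ) : ℕ → ℚ := fun t => if t = s then 1 else 0

lemma dl_Bm (s : ℕ) : Bm (dl s) := by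
  right
  intro F
  have : ∀ t, dl s t ^ 2 = if t = s then 1 else 0 := by
    intro t; unfold dl; split_ifs <;> simp
  simp_rw [this]
  rw [Finset.sum_ite_eq']
  split_ifs <;> simp

def Ip (s : ℕ) : Xs →L[ℝ] Xs := Pm (dl_Bm s).mp

def II (s : ℕ) : Xs →L[ℝ] Xs := if s = 0 then ContinuousLinearMap.id ℝ Xs else Ip s

lemma II_zero : II 0 = ContinuousLinearMap.id ℝ Xs := by simp [II]
lemma II_pos {s : ℕ} (h : 1 ≤ s) : II s = Ip s := by rw [II, if_neg (by omega)]

lemma ratdec {F : Finset ℕ} {β : ℕ → ℚ} (hβ : Bm β) (f : Wt)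
    (hF : ∀ n, f.1 n ≠ 0 → lab n ∉ F → β (lab n) = 0) (x : Xs) :
    ev (Wm hβ.mp f) x = ∑ s ∈ F, (β s : ℝ) * ev f (Ip s x) := by
  have : ev (Wm hβ.mp f) = ∑ s ∈ F, (β s : ℝ) • (ev f).comp (Ip s) := by
    apply clm_ext
    intro v
    rw [sum_apply, ev_emb]
    have : (Wm hβ.mp f).1 = ∑ s ∈ F, β s • act (fun n => dl s (lab n)) f.1 := by
      ext n
      rw [Finsupp.finsetSum_apply]
      simp only [Finsupp.smul_apply, act_apply, smul_eq_mul, dl]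
      change β (lab n) * f.1 n = _
      by_cases hn : lab n ∈ F
      · rw [Finset.sum_eq_single (lab n)]
        · simp
        · intro b _ hb; rw [if_neg hb.symm]; ring
        · intro h; exact absurd hn h
      · have h0 : β (lab n) * f.1 n = 0 := by
          by_cases hfn : f.1 n = 0
          · rw [hfn, mul_zero]
          · rw [hF n hfn hn, zero_mul]
        rw [h0, Finset.sum_eq_zero]
        intro s hs
        rw [if_neg, zero_mul, mul_zero]
        rintro rfl; exact hn hs
    rw [this, pr_sum]
    refine Finset.sum_congr rfl fun s _ => ?_
    rw [pr_smul]; rfl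
  rw [this, sum_apply]; rfl

lemma rat_below {r ε : ℝ} (hr : 0 ≤ r) (hε : 0 < ε) : ∃ q : ℚ, 0 ≤ q ∧ r - ε ≤ q ∧ (q : ℝ) ≤ r := by
  rcases hr.eq_or_lt with rfl | h
  · exact ⟨0, le_rfl, by simp; linarith, by simp⟩
  · obtain ⟨q, h1, h2⟩ := exists_rat_btwn (show max 0 (r - ε) < r from max_lt h (by linarith))
    have := (le_max_left 0 (r - ε)).trans h1.le
    exact ⟨q, by exact_mod_cast this, (le_max_right _ _).trans h1.le, h2.le⟩

lemma bessel (f : Wt) (x : Xs) (F : Finset ℕ) : ∑ s ∈ F, (ev f (Ip s x)) ^ 2 ≤ ‖x‖ ^ 2 := by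
  classical
  set t : ℕ → ℝ := fun s => ev f (Ip s x) with ht
  have hS0 : 0 ≤ ∑ s ∈ F, t s ^ 2 := Finset.sum_nonneg fun _ _ => sq_nonneg _
  set τ := Real.sqrt (∑ s ∈ F, t s ^ 2) with hτ
  have hτ2 : τ ^ 2 = ∑ s ∈ F, t s ^ 2 := Real.sq_sqrt hS0
  have hτ0 : 0 ≤ τ := Real.sqrt_nonneg _
  rw [← hτ2]
  suffices τ ≤ ‖x‖ from pow_le_pow_left₀ hτ0 this 2
  rcases hτ0.eq_or_lt with h0 | hpos
  · rw [← h0]; exact norm_nonneg _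
  set S := ∑ s ∈ F, |t s| with hS
  have hSn : 0 ≤ S := Finset.sum_nonneg fun _ _ => abs_nonneg _
  refine le_of_forall_pos_le_add fun δ hδ => ?_
  set ε := δ / (S + 1) with hε
  have hε0 : 0 < ε := by positivity
  have hq : ∀ s, ∃ q : ℚ, 0 ≤ q ∧ |t s| / τ - ε ≤ q ∧ (q : ℝ) ≤ |t s| / τ :=
    fun s => rat_below (by positivity) hε0
  choose q hq0 hq1 hq2 using hq
  let β : ℕ → ℚ := fun s => if s ∈ F then (if 0 ≤ t s then q s else - q s) else 0
  have hβsq : ∀ s ∈ F, ((β s : ℚ) : ℝ) ^ 2 ≤ t s ^ 2 / τ ^ 2 := by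
    intro s hs
    have : ((β s : ℚ) : ℝ) ^ 2 = (q s : ℝ) ^ 2 := by
      simp only [β, if_pos hs]; split_ifs <;> simp
    rw [this, ← sq_abs (t s), ← div_pow]
    exact pow_le_pow_left₀ (by exact_mod_cast hq0 s) (hq2 s) 2
  have hB : Bm β := by
    right
    intro F'
    have h1 : ∑ s ∈ F', β s ^ 2 ≤ ∑ s ∈ F, β s ^ 2 := by
      have : ∑ s ∈ F', β s ^ 2 = ∑ s ∈ F' ∩ F, β s ^ 2 := by
        symm
        refine Finset.sum_subset Finset.inter_subset_left fun s h1 h2 => ?_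
        have : s ∉ F := fun h => h2 (Finset.mem_inter.2 ⟨h1, h⟩)
        simp [β, this]
      rw [this]
      exact Finset.sum_le_sum_of_subset_of_nonneg Finset.inter_subset_right
        fun _ _ _ => sq_nonneg _
    refine h1.trans ?_
    have h2 : (∑ s ∈ F, ((β s : ℚ) : ℝ) ^ 2) ≤ 1 := by
      refine (Finset.sum_le_sum hβsq).trans ?_
      rw [← Finset.sum_div, ← hτ2, div_self (by positivity)]
    exact_mod_cast h2
  have h3 := ratdec hB (F := F) f (fun n _ hs => by simp [β, hs]) x
  have h4 := (le_abs_self _).trans (ev_le (Wm hB.mp f) x)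
  rw [h3] at h4
  have h5 : τ - ε * S ≤ ∑ s ∈ F, (β s : ℝ) * t s := by
    have : τ - ε * S = ∑ s ∈ F, (t s ^ 2 / τ - ε * |t s|) := by
      rw [Finset.sum_sub_distrib, ← Finset.sum_div, ← hτ2, ← Finset.mul_sum]
      congr 1; field_simp
    rw [this]
    refine Finset.sum_le_sum fun s hs => ?_
    have hβt : (β s : ℝ) * t s = q s * |t s| := by
      simp only [β, if_pos hs]
      split_ifs with h
      · rw [abs_of_nonneg h]
      · rw [abs_of_neg (not_le.1 h)]; push_cast; ring
    rw [hβt]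
    calc t s ^ 2 / τ - ε * |t s| = (|t s| / τ - ε) * |t s| := by
          rw [← sq_abs]; ring
      _ ≤ _ := mul_le_mul_of_nonneg_right (hq1 s) (abs_nonneg _)
  have h6 : ε * S ≤ δ := by
    rw [hε, div_mul_eq_mul_div, div_le_iff₀ (by positivity)]
    nlinarith
  linarith

lemma bessel' (f : Wt) (x : Xs) (F : Finset ℕ) :
    ∑ s ∈ F, (ev f (II s x)) ^ 2 ≤ (2 * ‖x‖) ^ 2 := by
  classical
  have h1 : ∑ s ∈ F, (ev f (II s x)) ^ 2 ≤
      ∑ s ∈ insert 0 F, (ev f (II s x)) ^ 2 :=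
    Finset.sum_le_sum_of_subset_of_nonneg (Finset.subset_insert _ _) fun _ _ _ => sq_nonneg _
  refine h1.trans ?_
  rw [← Finset.add_sum_erase _ _ (Finset.mem_insert_self 0 F)]
  have h2 : ∑ s ∈ (insert 0 F).erase 0, (ev f (II s x)) ^ 2 ≤ ‖x‖ ^ 2 := by
    refine le_trans (le_of_eq (Finset.sum_congr rfl fun s hs => ?_)) (bessel f x _)
    rw [II_pos (Nat.one_le_iff_ne_zero.2 (Finset.mem_erase.1 hs).1)]
  have h3 : (ev f (II 0 x)) ^ 2 ≤ ‖x‖ ^ 2 := by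
    rw [II_zero]
    exact sq_le_sq' (by have := (abs_le.1 (ev_le f x)).1; exact this)
      (abs_le.1 (ev_le f x)).2
  nlinarith [sq_nonneg ‖x‖]

lemma toReal_two : (2 : ENNReal).toReal = 2 := by norm_num

lemma Y_mem (f : Wt) (x : Xs) : Memℓp (fun s => ev f (II s x)) 2 := by
  refine memℓp_gen' (C := (2 * ‖x‖) ^ 2) fun F => ?_
  have := bessel' f x F
  simpa using this

def Y (f : Wt) : Xs →ₗ[ℝ] H where
  toFun x := ⟨fun s => ev f (II s x), Y_mem f x⟩
  map_add' x y := by ext s; simp; rfl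
  map_smul' c x := by ext s; simp

lemma Y_apply (f : Wt) (x : Xs) (s : ℕ) : (Y f x) s = ev f (II s x) := rfl

lemma norm_Y_le (f : Wt) (x : Xs) : ‖Y f x‖ ≤ 2 * ‖x‖ := by
  refine lp.norm_le_of_forall_sum_le (by norm_num) (by positivity) fun F => ?_
  have := bessel' f x F
  simpa [Y_apply] using this

lemma inner_H (a b : H) : HasSum (fun s => a s * b s) (inner ℝ a b) := by
  have := lp.hasSum_inner (𝕜 := ℝ) a b
  simpa [mul_comm] using this

lemma norm_H_sq (a : H) : HasSum (fun s => a s ^ 2) (‖a‖ ^ 2) := by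
  have := inner_H a a
  rw [real_inner_self_eq_norm_sq] at this
  simpa [sq] using this

lemma fin_bound (c : ℕ → ℝ) (F : Finset ℕ) :
    ‖∑ s ∈ F, c s • II s‖ ≤ 2 * Real.sqrt (∑ s ∈ F, c s ^ 2) := by
  refine ContinuousLinearMap.opNorm_le_bound _ (by positivity) fun x => ?_
  refine norm_le_of (by positivity) fun f => ?_
  rw [sum_apply, map_sum]
  have h1 : ∑ s ∈ F, ev f ((c s • II s) x) = ∑ s ∈ F, c s * ev f (II s x) :=
    Finset.sum_congr rfl fun s _ => by simp
  rw [h1]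
  have h2 := Finset.sum_mul_sq_le_sq_mul_sq F c (fun s => ev f (II s x))
  have h3 := bessel' f x F
  have h0 : 0 ≤ ∑ s ∈ F, c s ^ 2 := Finset.sum_nonneg fun _ _ => sq_nonneg _
  refine abs_le_of_sq_le_sq ?_ (by positivity)
  rw [mul_pow, mul_pow, Real.sq_sqrt h0]
  nlinarith

lemma summable_D (a : H) : Summable (fun s => a s • II s) := by
  rw [summable_iff_vanishing_norm]
  intro ε hε
  have hs := (norm_H_sq a).summable
  rw [summable_iff_vanishing_norm] at hs
  obtain ⟨F, hF⟩ := hs (ε ^ 2 / 16) (by positivity)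
  refine ⟨F, fun t ht => (fin_bound _ _).trans_lt ?_⟩
  have h1 := hF t ht
  have h2 : ∑ s ∈ t, a s ^ 2 ≤ (ε / 4) ^ 2 := by
    have := (le_abs_self _).trans_lt h1
    linarith
  have := Real.sqrt_le_sqrt h2
  rw [Real.sqrt_sq (by positivity)] at this
  linarith

def D0 : H →ₗ[ℝ] (Xs →L[ℝ] Xs) where
  toFun a := ∑' s, a s • II s
  map_add' a b := by
    rw [← (summable_D a).tsum_add (summable_D b)]
    exact tsum_congr fun s => by rw [lp.coeFn_add, Pi.add_apply, add_smul]
  map_smul' c a := by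
    rw [RingHom.id_apply, ← (summable_D a).tsum_const_smul c]
    exact tsum_congr fun s => by rw [lp.coeFn_smul, Pi.smul_apply, smul_smul, smul_eq_mul]

lemma hasSum_D0 (a : H) : HasSum (fun s => a s • II s) (D0 a) := (summable_D a).hasSum

lemma ev_D0 (f : Wt) (a : H) (x : Xs) : ev f (D0 a x) = inner ℝ a (Y f x) := by
  have h1 : HasSum (fun s => ev f ((a s • II s) x)) (ev f (D0 a x)) := by
    have := (hasSum_D0 a).mapL
      ((ev f).comp (ContinuousLinearMap.apply ℝ Xs x))
    simpa using this
  refine h1.unique ?_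
  convert inner_H a (Y f x) using 2 with s
  simp [Y_apply]

lemma norm_D0_le (a : H) : ‖D0 a‖ ≤ 2 * ‖a‖ := by
  refine ContinuousLinearMap.opNorm_le_bound _ (by positivity) fun x => ?_
  refine norm_le_of (by positivity) fun f => ?_
  rw [ev_D0]
  refine (abs_real_inner_le_norm _ _).trans ?_
  calc ‖a‖ * ‖Y f x‖ ≤ ‖a‖ * (2 * ‖x‖) := by gcongr; exact norm_Y_le f x
    _ = _ := by ring

def DD : H →L[ℝ] (Xs →L[ℝ] Xs) := D0.mkContinuous 2 norm_D0_le

lemma ev_DD (f : Wt) (a : H) (x : Xs) : ev f (DD a x) = inner ℝ a (Y f x) := ev_D0 f a x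
lemma hasSum_DD (a : H) : HasSum (fun s => a s • II s) (DD a) := hasSum_D0 a
lemma norm_DD_le (a : H) : ‖DD a‖ ≤ 2 * ‖a‖ := norm_D0_le a

end HISp
end


noncomputable section
namespace HISp

open Filter Topology

lemma Bvec {β : ℕ → ℚ} (hβ : Bm β) : ∃ b : H, ‖b‖ ≤ 1 ∧ ∀ (f : Wt) (x : Xs),
    ev (Wm hβ.mp f) x = inner ℝ b (Y f x) := by
  classical
  have hβ' := hβ
  rcases hβ' with ⟨c, hc, h⟩ | h
  · refine ⟨lp.single 2 0 (c : ℝ), ?_, fun f x => ?_⟩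
    · rw [lp.norm_single (by norm_num), Real.norm_eq_abs]
      exact_mod_cast hc
    · have e1 : ev (Wm hβ.mp f) = (c : ℝ) • ev f := by
        apply clm_ext
        intro v
        have : (Wm hβ.mp f).1 = c • f.1 := by
          ext n; change β (lab n) * f.1 n = _; rw [h]; rfl
        rw [ev_emb, this, pr_smul]; rfl
      rw [e1]
      refine HasSum.unique ?_ (inner_H _ _)
      convert hasSum_single (f := fun s => (lp.single (E := fun _ : ℕ => ℝ) 2 0 (c : ℝ)) s * (Y f x) s)
        0 ?_ using 1
      · rw [lp.single_apply_self, Y_apply, II_zero]; rfl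
      · intro s hs
        simp only []
        rw [lp.single_apply_ne _ _ _ hs, zero_mul]
  · have hbd : ∀ F : Finset ℕ, ∑ s ∈ F, ‖(if s = 0 then (0 : ℝ) else (β s : ℝ))‖ ^
        (2 : ENNReal).toReal ≤ (1 : ℝ) ^ (2 : ENNReal).toReal := by
      intro F
      have h1 : ∑ s ∈ F, ‖(if s = 0 then (0 : ℝ) else (β s : ℝ))‖ ^ (2 : ENNReal).toReal ≤
          ∑ s ∈ F, (β s : ℝ) ^ 2 := by
        refine Finset.sum_le_sum fun s _ => ?_
        split_ifs
        · simp; positivity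
        · rw [toReal_two, Real.norm_eq_abs]
          exact le_of_eq (by rw [← sq_abs (β s : ℝ)]; norm_cast)
      refine h1.trans ?_
      have := h F
      rw [Real.one_rpow]
      exact_mod_cast this
    have hmem : Memℓp (fun s => if s = 0 then (0 : ℝ) else (β s : ℝ)) 2 :=
      memℓp_gen' hbd
    refine ⟨⟨_, hmem⟩, lp.norm_le_of_forall_sum_le (by norm_num) zero_le_one hbd, fun f x => ?_⟩
    let F : Finset ℕ := f.1.support.image lab
    rw [ratdec hβ (F := F) f (fun n hn hn' => absurd (Finset.mem_image_of_mem lab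
      (Finsupp.mem_support_iff.2 hn)) hn') x]
    have hF1 : ∀ s ∈ F, s ≠ 0 := by
      intro s hs
      obtain ⟨n, -, rfl⟩ := Finset.mem_image.1 hs
      unfold lab; omega
    refine HasSum.unique ?_ (inner_H _ _)
    have e1 : ∑ s ∈ F, (β s : ℝ) * ev f (Ip s x) =
        ∑ s ∈ F, (⟨_, hmem⟩ : H) s * (Y f x) s := by
      refine Finset.sum_congr rfl fun s hs => ?_
      rw [Y_apply, II_pos (Nat.one_le_iff_ne_zero.2 (hF1 s hs))]
      change _ = (if s = 0 then (0 : ℝ) else (β s : ℝ)) * _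
      rw [if_neg (hF1 s hs)]
    rw [e1]
    refine hasSum_sum_of_ne_finset_zero fun s hs => ?_
    by_cases hs0 : s = 0
    · subst hs0
      change (if 0 = 0 then (0 : ℝ) else (β 0 : ℝ)) * _ = 0
      simp
    · have : ev f (II s x) = 0 := by
        rw [II_pos (Nat.one_le_iff_ne_zero.2 hs0)]
        have hz : (Wm (dl_Bm s).mp f).1 = 0 := by
          ext n
          change dl s (lab n) * f.1 n = 0
          by_cases hn : f.1 n = 0
          · rw [hn, mul_zero]
          · have : lab n ∈ F := Finset.mem_image_of_mem lab (Finsupp.mem_support_iff.2 hn)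
            unfold dl
            rw [if_neg (by rintro rfl; exact hs this), zero_mul]
        have : ev (Wm (dl_Bm s).mp f) = 0 := by
          apply clm_ext
          intro v
          rw [ev_emb, hz, pr_zero]; rfl
        change ev (Wm (dl_Bm s).mp f) x = 0
        rw [this]; rfl
      rw [Y_apply, this, mul_zero]

lemma ev_tail {f : Wt} {N : ℕ} (hf : ∀ n, f.1 n ≠ 0 → N ≤ n) (x : Xs) :
    |ev f x| ≤ ‖x - PN N x‖ := by
  have h0 : ev f (PN N x) = 0 := by
    have hz : (Wm (muI_mp 0 N) f).1 = 0 := by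
      ext n
      change muI 0 N n * f.1 n = 0
      by_cases hn : f.1 n = 0
      · rw [hn, mul_zero]
      · have := hf n hn
        rw [muI, if_neg (by omega), zero_mul]
    have : ev (Wm (muI_mp 0 N) f) = 0 := by
      apply clm_ext
      intro v
      rw [ev_emb, hz, pr_zero]; rfl
    change ev (Wm (muI_mp 0 N) f) x = 0
    rw [this]; rfl
  have : ev f x = ev f (x - PN N x) := by rw [map_sub, h0, sub_zero]
  rw [this]
  exact ev_le _ _

lemma tail_small (x : Xs) {ε : ℝ} (hε : 0 < ε) : ∃ N0, ∀ N ≥ N0, ‖x - PN N x‖ ≤ ε := by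
  obtain ⟨N0, h⟩ := Metric.tendsto_atTop.1 (PN_tendsto x) ε hε
  exact ⟨N0, fun N hN => by
    have := h N hN
    rw [dist_eq_norm, norm_sub_rev] at this
    exact this.le⟩

theorem select {α : Type*} (q : ℕ → α → Prop) (r1 : ℕ → α → α → Prop) (r : ℕ → ℕ → α → ℕ → α → Prop)
    (hS : ∀ (N : ℕ) (l : List α), ∃ a, q N a ∧ ∀ b ∈ l, r1 N b a)
    (hr : ∀ n b N', q N' b → ∃ N0, ∀ N ≥ N0, ∀ a, q N a → r n N' b N a) (M : ℕ → ℕ) :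
    ∃ (u : ℕ → α) (N : ℕ → ℕ), (∀ n, M n ≤ N n ∧ q (N n) (u n)) ∧
      ∀ m n, m < n → r1 (N n) (u m) (u n) ∧ r n (N m) (u m) (N n) (u n) := by
  classical
  -- one step
  have step : ∀ l : List (ℕ × α), ∃ c : ℕ × α, (∀ d ∈ l, q d.1 d.2) →
      M l.length ≤ c.1 ∧ q c.1 c.2 ∧
      ∀ d ∈ l, r1 c.1 d.2 c.2 ∧ r l.length d.1 d.2 c.1 c.2 := by
    intro l
    by_cases hl : ∀ d ∈ l, q d.1 d.2
    · have : ∀ d ∈ l, ∃ N0, ∀ N ≥ N0, ∀ a, q N a → r l.length d.1 d.2 N a :=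
        fun d hd => hr _ _ _ (hl d hd)
      choose! N0 hN0 using this
      obtain ⟨N, hN1, hN2⟩ : ∃ N, M l.length ≤ N ∧ ∀ d ∈ l, N0 d ≤ N :=
        ⟨max (M l.length) (l.toFinset.sup N0), le_max_left _ _, fun d hd =>
          (Finset.le_sup (List.mem_toFinset.2 hd)).trans (le_max_right _ _)⟩
      obtain ⟨a, ha, ha'⟩ := hS N (l.map Prod.snd)
      exact ⟨(N, a), fun _ => ⟨hN1, ha, fun d hd =>
        ⟨ha' _ (List.mem_map_of_mem hd), hN0 d hd N (hN2 d hd) a ha⟩⟩⟩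
    · obtain ⟨a, -, -⟩ := hS 0 []
      exact ⟨(0, a), fun h => absurd h hl⟩
  choose nx hnx using step
  let ls : ℕ → List (ℕ × α) := fun n => Nat.rec [] (fun _ l => nx l :: l) n
  have hls : ∀ n, ls (n + 1) = nx (ls n) :: ls n := fun n => rfl
  have hlen : ∀ n, (ls n).length = n := by
    intro n
    induction n with
    | zero => rfl
    | succ n ih => rw [hls, List.length_cons, ih]
  have hq : ∀ n, ∀ d ∈ ls n, q d.1 d.2 := by
    intro n
    induction n with
    | zero => intro d hd; cases hd
    | succ n ih =>
      intro d hd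
      rw [hls] at hd
      rcases List.mem_cons.1 hd with rfl | hd
      · exact (hnx (ls n) ih).2.1
      · exact ih d hd
  have hmem : ∀ m n, m < n → nx (ls m) ∈ ls n := by
    intro m n h
    induction n with
    | zero => omega
    | succ n ih =>
      rw [hls]
      rcases Nat.lt_succ_iff_lt_or_eq.1 h with h | rfl
      · exact List.mem_cons_of_mem _ (ih h)
      · exact List.mem_cons_self
  refine ⟨fun n => (nx (ls n)).2, fun n => (nx (ls n)).1, fun n => ?_, fun m n hmn => ?_⟩
  · have := hnx (ls n) (hq n)
    rw [hlen] at this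
    exact ⟨this.1, this.2.1⟩
  · have := (hnx (ls n) (hq n)).2.2 _ (hmem m n hmn)
    rw [hlen] at this
    exact this

/-- for a fixed vector, heavy nodes are eventually negligible -/
lemma heavy_small (x : Vc) {c : ℝ} (hc : 0 < c) :
    ∃ N0, ∀ i ≥ N0, ∀ f, Q (some i) f → |pr f x| ≤ c := by
  obtain ⟨N0, h⟩ := exists_nat_ge (l1 x / c)
  refine ⟨N0, fun i hi f hf => (hf.le_l1 x).trans ?_⟩
  have h1 : (N0 : ℝ) ≤ mm i := by exact_mod_cast hi.trans (le_mm i)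
  rw [div_le_iff₀ (mm_posR i)]
  rw [div_le_iff₀ hc] at h
  nlinarith

theorem weak_null (L : Xs →L[ℝ] ℝ) (C : ℝ) {ε : ℝ} (hε : 0 < ε) :
    ∃ N0, ∀ N ≥ N0, ∀ x : Vc, Good C N x → (∀ n, x n ≠ 0 → N ≤ n) → |L (emb x)| ≤ ε := by
  suffices h : ∀ C : ℝ, 1 ≤ C → ∃ N, ∀ x : Vc, Good C N x → (∀ n, x n ≠ 0 → N ≤ n) →
      L (emb x) ≤ ε by
    obtain ⟨N, hN⟩ := h (max C 1) (le_max_right _ _)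
    refine ⟨N, fun M hM x hx hs => abs_le.2 ⟨?_, ?_⟩⟩
    · have hx' : Good C M (-x) := by
        have := hx.smul (-1)
        simpa using this
      have := hN (-x) ((hx'.mono hM).mono_C (le_max_left _ _))
        (fun n hn => hM.le.trans (hs n (by simpa using hn)))
      rw [map_neg, map_neg] at this
      linarith
    · exact hN x ((hx.mono hM).mono_C (le_max_left _ _)) fun n hn => hM.le.trans (hs n hn)
  intro C hC
  by_contra hcon
  push Not at hcon
  have hC0 : 0 ≤ C := by linarith
  have hCp : 0 < C := by linarith
  -- choose w
  obtain ⟨w0, hw0⟩ := exists_nat_gt (3 * C * ‖L‖ / ε)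
  set w := w0 + 1 with hw
  have hmw : 3 * C * ‖L‖ < ε * mm w := by
    have : (w0 : ℝ) ≤ mm w := by
      have := le_mm w
      have : w0 ≤ mm w := by omega
      exact_mod_cast this
    rw [div_lt_iff₀ hε] at hw0
    nlinarith
  obtain ⟨u, J, h1, h2⟩ := select (α := Vc)
    (fun N x => Good C N x ∧ (∀ n, x n ≠ 0 → N ≤ n) ∧ ε < L (emb x))
    (fun N b a => True)
    (fun n N' b N a => N' ≤ N ∧ (∀ n, b n ≠ 0 → n < N) ∧
      ∀ i ≥ N, ∀ f, Q (some i) f → |pr f b| ≤ C / mm N')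
    (fun N l => by
      obtain ⟨x, hx⟩ := hcon N
      exact ⟨x, hx, fun _ _ => trivial⟩)
    (fun n b N' hb => by
      obtain ⟨N0, hN0⟩ := exists_supp_lt b
      obtain ⟨N1, hN1⟩ := heavy_small b (c := C / mm N') (div_pos hCp (mm_posR _))
      refine ⟨max N' (max N0 N1), fun N hN a ha => ⟨?_, fun n hn => ?_, fun i hi f hf => ?_⟩⟩
      · exact (le_max_left _ _).trans hN
      · exact (hN0 n hn).trans_le (((le_max_left _ _).trans (le_max_right _ _)).trans hN)
      · exact hN1 i ((((le_max_right _ _).trans (le_max_right _ _)).trans hN).trans hi) f hf)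
    (fun n => w + 1)
  have hris : RIS C (Finset.range (nn w)) J u :=
    ⟨fun l _ => (h1 l).2.1, fun l _ l' _ hlt i hi f hf => (h2 l l' hlt).2.2.2 i hi f hf⟩
  have hmono : Monotone J := monotone_nat_of_le_succ fun n => (h2 n (n + 1) (by omega)).2.1
  have hblk : InBlk J u := fun k n hn =>
    ⟨(h1 k).2.2.1 n hn, (h2 k (k + 1) (by omega)).2.2.1 n hn⟩
  have hA := lemmaA hris hmono hblk hC0 (w := w) (by omega) (by simp) (fun l _ => (h1 l).1)
  have hb := norm_emb_le hA.bd
  have hLb := (le_abs_self _).trans (L.le_opNorm_of_le hb)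
  have hnpos : (0 : ℝ) < nn w := by exact_mod_cast nn_pos w
  rw [map_smul, map_smul, map_sum, map_sum, smul_eq_mul] at hLb
  have hsum : (nn w : ℝ) * ε ≤ ∑ l ∈ Finset.range (nn w), L (emb (u l)) := by
    calc (nn w : ℝ) * ε = ∑ l ∈ Finset.range (nn w), ε := by simp
      _ ≤ _ := Finset.sum_le_sum fun l _ => (h1 l).2.2.2.le
  have hmp := mm_posR w
  have : (mm w : ℝ) * ε ≤ ‖L‖ * (3 * C) := by
    calc (mm w : ℝ) * ε = mm w / nn w * (nn w * ε) := by field_simp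
      _ ≤ _ := (mul_le_mul_of_nonneg_left hsum (by positivity)).trans hLb
  linarith

end HISp
end


noncomputable section
namespace HISp

open Filter Topology

lemma ev_comb {ι : Type*} {g : Wt} {q : ℚ} {F : Finset ι} {h : ι → Wt}
    (hg : g.1 = q • ∑ i ∈ F, (h i).1) : ev g = (q : ℝ) • ∑ i ∈ F, ev (h i) := by
  apply clm_ext
  intro v
  rw [ev_emb, hg, pr_smul, pr_sum, smul_apply, sum_apply]
  rfl

/-- state of the recursive construction: list of functionals so far and the next free index -/
def nxt (j : ℕ) (f : ℕ → Wt) (st : List (Fn × ℕ) × ℕ) : List (Fn × ℕ) × ℕ :=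
  let w := sg j st.1
  let s := max st.2 (w + 1)
  (st.1 ++ [((mm w : ℚ)⁻¹ • ∑ i ∈ Finset.range (nn w), (f (s + i)).1, 0)], s + nn w)

def stt (j : ℕ) (f : ℕ → Wt) : ℕ → List (Fn × ℕ) × ℕ
  | 0 => ([], 0)
  | (k + 1) => nxt j f (stt j f k)

theorem build (p : ℕ) {C : ℝ} (hC : 1 ≤ C) {J : ℕ → ℕ} {x : ℕ → Vc} {f : ℕ → Wt}
    (hJm : Monotone J) (hJge : ∀ n, n ≤ J n) (hxb : InBlk J x)
    (hfb : ∀ k n, (f k).1 n ≠ 0 → J k ≤ n ∧ n < J (k + 1))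
    (hgood : ∀ l, Good C (J l) (x l))
    (hdec : ∀ l l', l < l' → ∀ i ≥ J l', ∀ g, Q (some i) g → |pr g (x l)| ≤ C / mm (J l))
    {η : ℝ} (hη : 0 ≤ η)
    (hdiag : ∀ β (hβ : Bm β) (w s : ℕ), 2 * p + 1 < w →
      |(nn w : ℝ)⁻¹ * ∑ l ∈ Finset.Ico s (s + nn w), ev (Wm hβ.mp (f l)) (emb (x l))| ≤ η) :
    ∃ (L : ℕ → Finset ℕ) (w : ℕ → ℕ), (∀ k k', k ≠ k' → Disjoint (L k) (L k')) ∧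
      (∀ k, (L k).card = nn (w k)) ∧ ∃ (g : Wt) (X : Vc),
      ‖emb X‖ ≤ 18 * C * (mm (2 * p + 1) : ℝ)⁻¹ + η ∧
      ev g = (mm (2 * p + 1) : ℝ)⁻¹ • ∑ k ∈ Finset.range (nn (2 * p + 1)),
        (mm (w k) : ℝ)⁻¹ • ∑ l ∈ L k, ev (f l) ∧
      X = ((mm (2 * p + 1) : ℝ) / nn (2 * p + 1)) • ∑ k ∈ Finset.range (nn (2 * p + 1)),
        ((mm (w k) : ℝ) / nn (w k)) • ∑ l ∈ L k, x l := by
  classical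
  set j := 2 * p + 1 with hj
  let w : ℕ → ℕ := fun k => sg j (stt j f k).1
  let s : ℕ → ℕ := fun k => max (stt j f k).2 (w k + 1)
  let φ : ℕ → Fn := fun k => (mm (w k) : ℚ)⁻¹ • ∑ i ∈ Finset.range (nn (w k)), (f (s k + i)).1
  let L : ℕ → Finset ℕ := fun k => Finset.Ico (s k) (s k + nn (w k))
  let z : ℕ → Vc := fun k => ((mm (w k) : ℝ) / nn (w k)) • ∑ l ∈ L k, x l
  have hst1 : ∀ k, (stt j f k).1 = pre φ (fun _ => 0) k := by
    intro k
    induction k with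
    | zero => rfl
    | succ k ih =>
      have : pre φ (fun _ => 0) (k + 1) = pre φ (fun _ => 0) k ++ [(φ k, 0)] := by
        simp [pre, List.range_succ]
      rw [this, ← ih]; rfl
  have hst2 : ∀ k, (stt j f (k + 1)).2 = s k + nn (w k) := fun k => rfl
  have hs1 : ∀ k, s k + nn (w k) ≤ s (k + 1) := fun k => by
    rw [← hst2]; exact le_max_left _ _
  have hsm : Monotone s := monotone_nat_of_le_succ fun k => (Nat.le_add_right _ _).trans (hs1 k)
  have hsw : ∀ k, w k + 1 ≤ s k := fun k => le_max_right _ _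
  have hjw : ∀ k, j < w k := fun k => lt_sg _ _
  have hLmem : ∀ k l, l ∈ L k → s k ≤ l ∧ l + 1 ≤ s (k + 1) := by
    intro k l hl
    have := Finset.mem_Ico.1 hl
    have := hs1 k
    omega
  have hdisj : ∀ k k', k ≠ k' → Disjoint (L k) (L k') := by
    have key : ∀ k k', k < k' → Disjoint (L k) (L k') := by
      intro k k' h
      rw [Finset.disjoint_left]
      intro l h1 h2
      have a1 := hLmem k l h1
      have a2 := hLmem k' l h2
      have := hsm (show k + 1 ≤ k' from h)
      omega
    intro k k' h
    rcases lt_or_gt_of_ne h with h | h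
    · exact key k k' h
    · exact (key k' k h).symm
  have hcard : ∀ k, (L k).card = nn (w k) := fun k => by simp [L]
  have hφL : ∀ k, φ k = (mm (w k) : ℚ)⁻¹ • ∑ l ∈ L k, (f l).1 := by
    intro k
    simp only [φ, L]
    rw [Finset.sum_Ico_eq_sum_range]
    simp
  have hA : Monotone (fun k => J (s k)) := fun a b h => hJm (hsm h)
  have hzb : InBlk (fun k => J (s k)) z := by
    intro k n hn
    have : ∃ l ∈ L k, x l n ≠ 0 := by
      by_contra hcon
      push Not at hcon
      apply hn
      simp only [z, Finsupp.smul_apply, Finsupp.finsetSum_apply]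
      rw [Finset.sum_eq_zero hcon, smul_zero]
    obtain ⟨l, hl, hln⟩ := this
    have h1 := hxb l n hln
    have h2 := hLmem k l hl
    exact ⟨(hJm h2.1).trans h1.1, h1.2.trans_le (hJm h2.2)⟩
  have hφb : ∀ k n, φ k n ≠ 0 → J (s k) ≤ n ∧ n < J (s (k + 1)) := by
    intro k n hn
    have : ∃ l ∈ L k, (f l).1 n ≠ 0 := by
      by_contra hcon
      push Not at hcon
      apply hn
      rw [hφL]
      simp only [Finsupp.smul_apply, Finsupp.finsetSum_apply]
      rw [Finset.sum_eq_zero hcon, smul_zero]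
    obtain ⟨l, hl, hln⟩ := this
    have h1 := hfb l n hln
    have h2 := hLmem k l hl
    exact ⟨(hJm h2.1).trans h1.1, h1.2.trans_le (hJm h2.2)⟩
  have hfs : ∀ l l', l < l' → ∀ a b, (f l).1 a ≠ 0 → (f l').1 b ≠ 0 → a < b := by
    intro l l' h a b ha hb
    exact lt_of_lt_of_le (hfb l a ha).2 ((hJm h).trans (hfb l' b hb).1)
  have hQφ : ∀ k, Q (some (w k)) (φ k) := by
    intro k
    have hwe : ∃ m, w k = 2 * m := ⟨_, rfl⟩
    obtain ⟨m, hm⟩ := hwe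
    have : ∀ i, ∃ o, Q o (f (s k + i)).1 := fun i => (f (s k + i)).2
    choose o ho using this
    simp only [φ]
    rw [hm]
    refine Q.even m _ (fun i => (f (s k + i)).1) o le_rfl (fun i _ => ho i) ?_
    intro r r' h1 _ a b ha hb
    exact hfs _ _ (by omega) a b ha hb
  have hC0 : 0 ≤ C := by linarith
  have hEV : ∀ k, EV (3 * C) (w k) (z k) := by
    intro k
    refine lemmaA (J := J) (a := J) ⟨fun l _ => hgood l, fun l _ l' _ h => hdec l l' h⟩ hJm hxb hC0
      (by have := hjw k; omega) (hcard k) fun l hl => ?_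
    have := hLmem k l hl
    have := hsw k
    have := hJge l
    omega
  -- diagonal
  have hdg : ∀ β, Bm β → ∀ k < nn j, |pr (act (fun n => β (lab n)) (φ k)) (z k)| ≤
      3 * C * (η / (3 * C)) := by
    intro β hβ k _
    have e0 : 3 * C * (η / (3 * C)) = η := by field_simp
    rw [e0]
    refine le_trans (le_of_eq ?_) (hdiag β hβ (w k) (s k) (hjw k))
    congr 1
    have e1 : act (fun n => β (lab n)) (φ k) =
        (mm (w k) : ℚ)⁻¹ • ∑ l ∈ L k, act (fun n => β (lab n)) (f l).1 := by
      rw [hφL, act_smul]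
      congr 1
      ext n
      simp [Finsupp.finsetSum_apply, Finset.mul_sum]
    rw [e1, pr_smul, pr_sum]
    simp only [z]
    simp_rw [map_smul, map_sum]
    have e2 : ∀ l ∈ L k, ∑ l' ∈ L k, pr (act (fun n => β (lab n)) (f l).1) (x l') =
        ev (Wm hβ.mp (f l)) (emb (x l)) := by
      intro l hl
      rw [Finset.sum_eq_single l]
      · rfl
      · intro l' _ hne
        refine pr_disj fun n h1 h2 => ?_
        have h3 := hfb l n (right_ne_zero_of_mul h1)
        have h4 := hxb l' n h2
        rcases lt_or_gt_of_ne hne with h | h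
        · exact lt_irrefl _ (blk_lt hJm h h4.2 h3.1)
        · exact lt_irrefl _ (blk_lt hJm h h3.2 h4.1)
      · intro h; exact absurd hl h
    simp only [smul_eq_mul, ← Finset.mul_sum]
    rw [Finset.sum_congr rfl e2]
    have := mm_posR (w k)
    have : (0 : ℝ) < nn (w k) := by exact_mod_cast nn_pos _
    push_cast
    field_simp
    rfl
  -- the functional
  have hsupp : ∀ k < nn j, ∀ n, φ k n ≠ 0 → n < J (s (nn j)) := by
    intro k hk n hn
    exact (hφb k n hn).2.trans_le (hA (show k + 1 ≤ nn j from hk))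
  have hgW : W ((mm j : ℚ)⁻¹ • ∑ k ∈ Finset.range (nn j), φ k) := by
    have := Q.odd p (nn (2 * p + 1)) φ (fun _ => 0) (muI 0 (J (s (nn j)))) (Mu_Ico _ _) le_rfl
      (fun i _ => by
        have h1 := hQφ i
        simp only [w] at h1
        rw [hst1] at h1
        exact h1)
      (fun r r' h1 _ a b ha hb =>
        lt_of_lt_of_le (hφb r a ha).2 ((hA (show r + 1 ≤ r' from h1)).trans (hφb r' b hb).1))
    have e : act (muI 0 (J (s (nn j)))) (∑ i ∈ Finset.range (nn (2 * p + 1)), φ i) =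
        ∑ k ∈ Finset.range (nn j), φ k := by
      rw [act_sum]
      refine Finset.sum_congr rfl fun k hk => ?_
      ext n
      rw [act_apply]
      by_cases hn : φ k n = 0
      · rw [hn, mul_zero]
      · rw [muI, if_pos ⟨Nat.zero_le _, hsupp k (Finset.mem_range.1 hk) n hn⟩, one_mul]
    rw [e] at this
    exact ⟨_, this⟩
  refine ⟨L, w, hdisj, hcard, ⟨_, hgW⟩, _, ?_, ?_, rfl⟩
  · refine norm_emb_le fun h hh => ?_
    have h3 := odd_lemma (p := p) (C := 3 * C) (θ := η / (3 * C)) (φ := φ) (t := fun _ => 0)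
      hA hzb (by linarith) (by positivity) (fun k _ => by
        have h1 := hEV k
        simp only [w] at h1
        rw [hst1] at h1
        simp only [← hst1]
        rw [← hst1] at h1
        exact h1) hdg hh
    refine h3.trans (le_of_eq ?_)
    rw [← hj]
    field_simp
    ring
  · have e1 : ∀ k, ev ⟨φ k, ⟨_, hQφ k⟩⟩ = (mm (w k) : ℝ)⁻¹ • ∑ l ∈ L k, ev (f l) := by
      intro k
      have := ev_comb (g := ⟨φ k, ⟨_, hQφ k⟩⟩) (hφL k)
      rw [this]; push_cast; rfl
    have := ev_comb (g := ⟨_, hgW⟩) (q := (mm j : ℚ)⁻¹) (F := Finset.range (nn j))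
      (h := fun k => ⟨φ k, ⟨_, hQφ k⟩⟩) rfl
    rw [this]
    simp_rw [e1]
    push_cast
    rfl

end HISp
end


noncomputable section
namespace HISp

open Filter Topology

lemma almost_orth {v : ℕ → H} {B : ℝ} (hB : ∀ n, ‖v n‖ ≤ B)
    (ho : ∀ m n, m < n → |inner ℝ (v n) (v m)| ≤ 1 / ((n : ℝ) + 1)) (F : Finset ℕ) :
    ‖∑ l ∈ F, v l‖ ^ 2 ≤ F.card * (B ^ 2 + 2) := by
  classical
  induction F using Finset.induction_on_max with
  | empty => simp
  | insert m F hm ih =>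
    have hnot : m ∉ F := fun h => lt_irrefl _ (hm m h)
    rw [Finset.sum_insert hnot, Finset.card_insert_of_notMem hnot]
    have hc : F.card ≤ m := by
      have : F ⊆ Finset.range m := fun x hx => Finset.mem_range.2 (hm x hx)
      simpa using Finset.card_le_card this
    have h1 : inner ℝ (v m) (∑ l ∈ F, v l) ≤ 1 := by
      rw [inner_sum]
      have : ∑ l ∈ F, inner ℝ (v m) (v l) ≤ ∑ l ∈ F, 1 / ((m : ℝ) + 1) :=
        Finset.sum_le_sum fun l hl => (le_abs_self _).trans (ho l m (hm l hl))
      refine this.trans ?_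
      rw [Finset.sum_const, nsmul_eq_mul, mul_one_div, div_le_one (by positivity)]
      have : (F.card : ℝ) ≤ m := by exact_mod_cast hc
      linarith
    have h2 : ‖v m‖ ^ 2 ≤ B ^ 2 := pow_le_pow_left₀ (norm_nonneg _) (hB m) 2
    rw [norm_add_sq_real]
    push_cast
    nlinarith

lemma avg_bound {v : ℕ → H} {B : ℝ} (hB0 : 0 ≤ B) (hB : ∀ n, ‖v n‖ ≤ B)
    (ho : ∀ m n, m < n → |inner ℝ (v n) (v m)| ≤ 1 / ((n : ℝ) + 1)) {w j : ℕ} (hw : j ≤ w)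
    {F : Finset ℕ} (hF : F.card = nn w) :
    (nn w : ℝ)⁻¹ * ‖∑ l ∈ F, v l‖ ≤ (B + 2) * (mm j : ℝ)⁻¹ := by
  have h1 := almost_orth hB ho F
  rw [hF] at h1
  have hn : (0 : ℝ) < nn w := by exact_mod_cast nn_pos w
  have h2 : (mm w : ℝ) ^ 2 ≤ nn w := by exact_mod_cast mm_sq_le_nn w
  have hM := mm_posR w
  have h3 : (nn w : ℝ)⁻¹ * ‖∑ l ∈ F, v l‖ ≤ (B + 2) * (mm w : ℝ)⁻¹ := by
    refine abs_le_of_sq_le_sq' ?_ (by positivity) |>.2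
    rw [mul_pow, mul_pow, inv_pow, inv_pow]
    rw [← div_eq_mul_inv, le_div_iff₀ (by positivity), inv_mul_eq_div, div_mul_eq_mul_div,
      div_le_iff₀ (by positivity)]
    have h4 : ‖∑ l ∈ F, v l‖ ^ 2 * (mm w : ℝ) ^ 2 ≤ (nn w * (B ^ 2 + 2)) * nn w :=
      mul_le_mul h1 h2 (by positivity) (by positivity)
    have h5 : B ^ 2 + 2 ≤ (B + 2) ^ 2 := by nlinarith
    have := mul_le_mul_of_nonneg_right h5 (by positivity : (0 : ℝ) ≤ (nn w : ℝ) ^ 2)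
    nlinarith
  exact h3.trans (mul_le_mul_of_nonneg_left (mm_invR_mono hw) (by linarith))

lemma half_sum_le (F : Finset ℕ) : ∑ l ∈ F, ((1 : ℝ) / 2) ^ l ≤ 2 := by
  have := Summable.sum_le_tsum F (fun i _ => by positivity) summable_geometric_two
  rwa [tsum_geometric_two] at this

lemma numeric {L : ℕ → Finset ℕ} (hd : ∀ k k', k ≠ k' → Disjoint (L k) (L k'))
    {δ γ : ℕ → ℝ} (hδ : ∀ k, 0 ≤ δ k ∧ δ k ≤ 1) (hγ : ∀ k, 0 ≤ γ k ∧ γ k ≤ 1)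
    (h1 : ∀ k, δ k * (L k).card * γ k = 1) {n : ℕ} {ν ε : ℝ} (hε : 0 ≤ ε) {c : ℕ → ℕ → ℝ}
    (hcd : ∀ l, |c l l - ν| ≤ ε)
    (hco : ∀ l l', l ≠ l' → |c l l'| ≤ ε * ((1 / 2) ^ l * (1 / 2) ^ l')) {k : ℕ} (hk : k < n) :
    |δ k * ∑ l ∈ L k, ∑ k' ∈ Finset.range n, γ k' * ∑ l' ∈ L k', c l l' - ν| ≤ 5 * ε := by
  classical
  -- diagonal identity
  have hdiag : ∀ a : ℝ, δ k * ∑ l ∈ L k, ∑ k' ∈ Finset.range n, γ k' *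
      ∑ l' ∈ L k', (if l = l' then a else 0) = a := by
    intro a
    have : ∀ l ∈ L k, ∑ k' ∈ Finset.range n, γ k' * ∑ l' ∈ L k', (if l = l' then a else 0) =
        γ k * a := by
      intro l hl
      rw [Finset.sum_eq_single k]
      · rw [Finset.sum_ite_eq, if_pos hl]
      · intro k' _ hne
        rw [Finset.sum_ite_eq, if_neg (Finset.disjoint_left.1 (hd k k' hne.symm) hl), mul_zero]
      · intro h; exact absurd (Finset.mem_range.2 hk) h
    rw [Finset.sum_congr rfl this, Finset.sum_const, nsmul_eq_mul]
    have := h1 k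
    calc _ = (δ k * (L k).card * γ k) * a := by ring
      _ = a := by rw [this, one_mul]
  have e1 : δ k * ∑ l ∈ L k, ∑ k' ∈ Finset.range n, γ k' * ∑ l' ∈ L k', c l l' - ν =
      δ k * ∑ l ∈ L k, ∑ k' ∈ Finset.range n, γ k' * ∑ l' ∈ L k', (c l l' - if l = l' then ν else 0) := by
    conv_lhs => rw [← hdiag ν]
    simp only [Finset.sum_sub_distrib, mul_sub]
  have hb : ∀ l l', |c l l' - if l = l' then ν else 0| ≤
      (if l = l' then ε else 0) + ε * ((1 / 2) ^ l * (1 / 2) ^ l') := by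
    intro l l'
    split_ifs with h
    · subst h
      have := hcd l
      have : 0 ≤ ε * (((1 : ℝ) / 2) ^ l * (1 / 2) ^ l) := by positivity
      linarith [hcd l]
    · rw [sub_zero, zero_add]; exact hco l l' h
  rw [e1, abs_mul, abs_of_nonneg (hδ k).1]
  have e2 : |∑ l ∈ L k, ∑ k' ∈ Finset.range n, γ k' * ∑ l' ∈ L k', (c l l' - if l = l' then ν else 0)| ≤
      ∑ l ∈ L k, ∑ k' ∈ Finset.range n, γ k' * ∑ l' ∈ L k',
        ((if l = l' then ε else 0) + ε * ((1 / 2) ^ l * (1 / 2) ^ l')) := by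
    refine (Finset.abs_sum_le_sum_abs _ _).trans (Finset.sum_le_sum fun l _ => ?_)
    refine (Finset.abs_sum_le_sum_abs _ _).trans (Finset.sum_le_sum fun k' _ => ?_)
    rw [abs_mul, abs_of_nonneg (hγ k').1]
    refine mul_le_mul_of_nonneg_left ?_ (hγ k').1
    exact (Finset.abs_sum_le_sum_abs _ _).trans (Finset.sum_le_sum fun l' _ => hb l l')
  refine (mul_le_mul_of_nonneg_left e2 (hδ k).1).trans ?_
  have e3 : δ k * ∑ l ∈ L k, ∑ k' ∈ Finset.range n, γ k' * ∑ l' ∈ L k',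
        ((if l = l' then ε else 0) + ε * ((1 / 2) ^ l * (1 / 2) ^ l')) = ε +
      δ k * ∑ l ∈ L k, ∑ k' ∈ Finset.range n, γ k' * ∑ l' ∈ L k', ε * ((1 / 2) ^ l * (1 / 2) ^ l') := by
    conv_rhs => enter [1]; rw [← hdiag ε]
    simp only [Finset.sum_add_distrib, mul_add]
  rw [e3]
  have e4 : ∑ k' ∈ Finset.range n, ∑ l' ∈ L k', ((1 : ℝ) / 2) ^ l' ≤ 2 := by
    rw [← Finset.sum_biUnion (fun k _ k' _ h => hd k k' h)]
    exact half_sum_le _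
  have e5 : ∑ l ∈ L k, ∑ k' ∈ Finset.range n, γ k' * ∑ l' ∈ L k', ε * (((1 : ℝ) / 2) ^ l * (1 / 2) ^ l') ≤
      ∑ l ∈ L k, ε * ((1 / 2) ^ l * 2) := by
    refine Finset.sum_le_sum fun l _ => ?_
    have : ∑ k' ∈ Finset.range n, γ k' * ∑ l' ∈ L k', ε * (((1 : ℝ) / 2) ^ l * (1 / 2) ^ l') ≤
        ∑ k' ∈ Finset.range n, ε * ((1 / 2) ^ l * ∑ l' ∈ L k', ((1 : ℝ) / 2) ^ l') := by
      refine Finset.sum_le_sum fun k' _ => ?_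
      rw [← Finset.mul_sum, ← Finset.mul_sum]
      exact mul_le_of_le_one_left (by positivity) (hγ k').2
    refine this.trans ?_
    rw [← Finset.mul_sum, ← Finset.mul_sum]
    gcongr
  have e6 : ∑ l ∈ L k, ε * (((1 : ℝ) / 2) ^ l * 2) ≤ 4 * ε := by
    rw [← Finset.mul_sum, ← Finset.sum_mul]
    nlinarith [half_sum_le (L k)]
  have e7 : 0 ≤ ∑ l ∈ L k, ∑ k' ∈ Finset.range n, γ k' * ∑ l' ∈ L k', ε * (((1 : ℝ) / 2) ^ l * (1 / 2) ^ l') :=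
    Finset.sum_nonneg fun l _ => Finset.sum_nonneg fun k' _ => mul_nonneg (hγ k').1
      (Finset.sum_nonneg fun l' _ => by positivity)
  nlinarith [(hδ k).1, (hδ k).2]

def GC (C : ℝ) (T : Xs →L[ℝ] Xs) (y : H) (ν : ℝ) : Prop :=
  ∀ (N : ℕ) (S : List H) (ε : ℝ), 0 < ε → ∃ (x : Vc) (f : Wt), Good C N x ∧
    (∀ n, x n ≠ 0 → N ≤ n) ∧ (∀ n, f.1 n ≠ 0 → N ≤ n) ∧
    (∀ u ∈ S, |inner ℝ (Y f (emb x) - y) u| ≤ ε) ∧ |ev f (T (emb x)) - ν| ≤ ε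

lemma GC.mono {C D : ℝ} {T : Xs →L[ℝ] Xs} {y : H} {ν : ℝ} (h : GC C T y ν) (hCD : C ≤ D) :
    GC D T y ν := fun N S ε hε => by
  obtain ⟨x, f, h1, h2⟩ := h N S ε hε
  exact ⟨x, f, h1.mono_C hCD, h2⟩

theorem propP_aux {C : ℝ} (hC : 1 ≤ C) {T : Xs →L[ℝ] Xs} {y : H} {ν : ℝ} (hG : GC C T y ν)
    (p : ℕ) {ε : ℝ} (hε : 0 < ε) :
    |ν| ≤ ‖T‖ * (18 * C * (mm (2 * p + 1) : ℝ)⁻¹ +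
      (‖y‖ + (2 * C + ‖y‖ + 2) * (mm (2 * p + 1) : ℝ)⁻¹)) + 5 * ε := by
  set j := 2 * p + 1 with hj
  obtain ⟨u, N, hu, hr⟩ := select (α := Vc × Wt)
    (fun N a => Good C N a.1 ∧ (∀ n, a.1 n ≠ 0 → N ≤ n) ∧ (∀ n, a.2.1 n ≠ 0 → N ≤ n) ∧
      |ev a.2 (T (emb a.1)) - ν| ≤ ε)
    (fun N b a => |inner ℝ (Y a.2 (emb a.1) - y) (Y b.2 (emb b.1) - y)| ≤ 1 / ((N : ℝ) + 1))
    (fun n N' b N a => N' ≤ N ∧ (∀ n, b.1 n ≠ 0 → n < N) ∧ (∀ n, b.2.1 n ≠ 0 → n < N) ∧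
      (∀ i ≥ N, ∀ g, Q (some i) g → |pr g b.1| ≤ C / mm N') ∧
      |ev b.2 (T (emb a.1))| ≤ ε * (1 / 4) ^ n ∧ |ev a.2 (T (emb b.1))| ≤ ε * (1 / 4) ^ n)
    (by
      intro N l
      obtain ⟨x, f, h1, h2, h3, h4, h5⟩ := hG N (l.map fun b => Y b.2 (emb b.1) - y)
        (min ε (1 / ((N : ℝ) + 1))) (lt_min hε (by positivity))
      exact ⟨(x, f), ⟨h1, h2, h3, h5.trans (min_le_left _ _)⟩, fun b hb =>
        (h4 _ (List.mem_map_of_mem hb)).trans (min_le_right _ _)⟩)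
    (by
      rintro n ⟨x, f⟩ N' ⟨h1, h2, h3, h4⟩
      have hc : 0 < C / mm N' := div_pos (by linarith) (mm_posR _)
      have hε' : 0 < ε * (1 / 4) ^ n := by positivity
      obtain ⟨N1, k1⟩ := exists_supp_lt x
      obtain ⟨N2, k2⟩ := exists_suppF_lt f.1
      obtain ⟨N3, k3⟩ := heavy_small x hc
      obtain ⟨N4, k4⟩ := weak_null ((ev f).comp T) C hε'
      obtain ⟨N5, k5⟩ := tail_small (T (emb x)) hε'
      refine ⟨N' + N1 + N2 + N3 + N4 + N5, fun N hN a ha => ?_⟩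
      exact ⟨by omega, fun n hn => (k1 n hn).trans_le (by omega),
        fun n hn => (k2 n hn).trans_le (by omega), fun i hi => k3 i (by omega),
        k4 N (by omega) a.1 ha.1 ha.2.1, (ev_tail ha.2.2.1 _).trans (k5 N (by omega))⟩)
    id
  set x : ℕ → Vc := fun n => (u n).1
  set f : ℕ → Wt := fun n => (u n).2
  have hJm : Monotone N := monotone_nat_of_le_succ fun n => (hr n (n + 1) (Nat.lt_succ_self n)).2.1
  have hJge : ∀ n, n ≤ N n := fun n => (hu n).1
  set v : ℕ → H := fun n => Y (f n) (emb (x n)) - y with hv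
  have hB : ∀ n, ‖v n‖ ≤ 2 * C + ‖y‖ := by
    intro n
    refine (norm_sub_le _ _).trans (add_le_add_left ((norm_Y_le _ _).trans ?_) _)
    have := norm_emb_le (hu n).2.1.1
    linarith
  have ho : ∀ m n, m < n → |inner ℝ (v n) (v m)| ≤ 1 / ((n : ℝ) + 1) := by
    intro m n h
    refine (hr m n h).1.trans ?_
    have : (n : ℝ) ≤ N n := by exact_mod_cast hJge n
    exact one_div_le_one_div_of_le (by positivity) (by linarith)
  have hB0 : 0 ≤ 2 * C + ‖y‖ := by positivity
  obtain ⟨L, w, hd, hcard, g, X, hX, hg, hXe⟩ := build p hC (J := N) (x := x) (f := f)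
    (η := ‖y‖ + (2 * C + ‖y‖ + 2) * (mm j : ℝ)⁻¹) hJm hJge
    (fun k n hn => ⟨(hu k).2.2.1 n hn, (hr k (k + 1) (Nat.lt_succ_self k)).2.2.1 n hn⟩)
    (fun k n hn => ⟨(hu k).2.2.2.1 n hn, (hr k (k + 1) (Nat.lt_succ_self k)).2.2.2.1 n hn⟩)
    (fun l => (hu l).2.1)
    (fun l l' h => (hr l l' h).2.2.2.2.1)
    (by positivity)
    (by
      intro β hβ w s hw
      obtain ⟨b, hb1, hb⟩ := Bvec hβ
      have e1 : (nn w : ℝ)⁻¹ * ∑ l ∈ Finset.Ico s (s + nn w), ev (Wm hβ.mp (f l)) (emb (x l)) =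
          inner ℝ b (y + (nn w : ℝ)⁻¹ • ∑ l ∈ Finset.Ico s (s + nn w), v l) := by
        have hn : (nn w : ℝ) ≠ 0 := by exact_mod_cast (nn_pos w).ne'
        have e2 : y + (nn w : ℝ)⁻¹ • ∑ l ∈ Finset.Ico s (s + nn w), v l =
            (nn w : ℝ)⁻¹ • ∑ l ∈ Finset.Ico s (s + nn w), Y (f l) (emb (x l)) := by
          simp only [hv]
          rw [Finset.sum_sub_distrib, Finset.sum_const, Nat.card_Ico, Nat.add_sub_cancel_left,
            ← Nat.cast_smul_eq_nsmul ℝ, smul_sub, smul_smul, inv_mul_cancel₀ hn, one_smul]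
          abel
        rw [e2, inner_smul_right, inner_sum]
        simp_rw [hb]
      rw [e1]
      refine (abs_real_inner_le_norm _ _).trans ((mul_le_of_le_one_left (norm_nonneg _) hb1).trans ?_)
      refine (norm_add_le _ _).trans (add_le_add_right ?_ _)
      rw [norm_smul, Real.norm_of_nonneg (by positivity)]
      exact avg_bound hB0 hB ho hw.le (by simp))
  set c : ℕ → ℕ → ℝ := fun l l' => ev (f l) (T (emb (x l'))) with hc
  have hco : ∀ l l', l ≠ l' → |c l l'| ≤ ε * ((1 / 2) ^ l * (1 / 2) ^ l') := by
    have key : ∀ m n, m < n → ε * ((1 : ℝ) / 4) ^ n ≤ ε * ((1 / 2) ^ m * (1 / 2) ^ n) := by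
      intro m n h
      refine mul_le_mul_of_nonneg_left ?_ hε.le
      have e : ((1 : ℝ) / 4) ^ n = (1 / 2) ^ n * (1 / 2) ^ n := by rw [← mul_pow]; norm_num
      rw [e]
      exact mul_le_mul_of_nonneg_right (pow_le_pow_of_le_one (by norm_num) (by norm_num) h.le)
        (by positivity)
    intro l l' hne
    rcases lt_or_gt_of_ne hne with h | h
    · exact (hr l l' h).2.2.2.2.2.1.trans (key l l' h)
    · refine (hr l' l h).2.2.2.2.2.2.trans ((key l' l h).trans (le_of_eq ?_))
      ring
  have hnum := fun k (hk : k < nn j) => numeric (n := nn j) hd (δ := fun k => (mm (w k) : ℝ)⁻¹)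
    (γ := fun k => (mm (w k) : ℝ) / nn (w k))
    (fun k => ⟨by positivity, inv_le_one_of_one_le₀ (by
      have := mm_two_le (w k)
      exact_mod_cast (by omega : 1 ≤ mm (w k)))⟩)
    (fun k => ⟨by positivity, div_le_one_of_le₀ (by
      have h1 := mm_sq_le_nn (w k)
      have h2 := mm_two_le (w k)
      exact_mod_cast (by nlinarith : mm (w k) ≤ nn (w k))) (by positivity)⟩)
    (fun k => by
      have h1 := mm_posR (w k)
      have h2 : (0 : ℝ) < nn (w k) := by exact_mod_cast nn_pos _
      rw [hcard]
      field_simp) hε.le (c := c) (ν := ν) (fun l => (hu l).2.2.2.2) hco hk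
  have hval : ev g (T (emb X)) = (nn j : ℝ)⁻¹ * ∑ k ∈ Finset.range (nn j), ((mm (w k) : ℝ)⁻¹ *
      ∑ l ∈ L k, ∑ k' ∈ Finset.range (nn j), ((mm (w k') : ℝ) / nn (w k')) * ∑ l' ∈ L k', c l l') := by
    have hfX : ∀ l, ev (f l) (T (emb X)) = ((mm j : ℝ) / nn j) * ∑ k' ∈ Finset.range (nn j),
        ((mm (w k') : ℝ) / nn (w k')) * ∑ l' ∈ L k', c l l' := by
      intro l
      rw [hXe]
      simp only [map_smul, map_sum, smul_eq_mul, hc, hj]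
    rw [hg]
    simp only [smul_apply, sum_apply, smul_eq_mul, hfX]
    have h1 := mm_posR j
    have e : ∀ k, ∑ l ∈ L k, ((mm j : ℝ) / nn j) * ∑ k' ∈ Finset.range (nn j),
        ((mm (w k') : ℝ) / nn (w k')) * ∑ l' ∈ L k', c l l' = ((mm j : ℝ) / nn j) *
        ∑ l ∈ L k, ∑ k' ∈ Finset.range (nn j), ((mm (w k') : ℝ) / nn (w k')) * ∑ l' ∈ L k', c l l' := by
      intro k; rw [Finset.mul_sum]
    change (mm j : ℝ)⁻¹ * ∑ k ∈ Finset.range (nn j), (mm (w k) : ℝ)⁻¹ *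
      (∑ l ∈ L k, ((mm j : ℝ) / nn j) * ∑ k' ∈ Finset.range (nn j),
        ((mm (w k') : ℝ) / nn (w k')) * ∑ l' ∈ L k', c l l') = _
    simp_rw [e, ← mul_assoc, mul_comm _ ((mm j : ℝ) / nn j), mul_assoc]
    rw [← Finset.mul_sum, ← mul_assoc]
    congr 1
    field_simp
  have hn : (0 : ℝ) < nn j := by exact_mod_cast nn_pos _
  have hfin : |ev g (T (emb X)) - ν| ≤ 5 * ε := by
    have e : ev g (T (emb X)) - ν = (nn j : ℝ)⁻¹ * ∑ k ∈ Finset.range (nn j), ((mm (w k) : ℝ)⁻¹ *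
      ∑ l ∈ L k, ∑ k' ∈ Finset.range (nn j), ((mm (w k') : ℝ) / nn (w k')) * ∑ l' ∈ L k', c l l' - ν) := by
      rw [hval, Finset.sum_sub_distrib, Finset.sum_const, Finset.card_range, nsmul_eq_mul, mul_sub,
        inv_mul_cancel_left₀ hn.ne']
    rw [e, abs_mul, abs_of_pos (inv_pos.2 hn), inv_mul_le_iff₀ hn]
    refine (Finset.abs_sum_le_sum_abs _ _).trans ?_
    have := Finset.sum_le_card_nsmul (Finset.range (nn j)) _ _ fun k hk =>
      hnum k (Finset.mem_range.1 hk)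
    simpa [nsmul_eq_mul] using this
  have h1 : |ev g (T (emb X))| ≤ ‖T‖ * (18 * C * (mm j : ℝ)⁻¹ +
      (‖y‖ + (2 * C + ‖y‖ + 2) * (mm j : ℝ)⁻¹)) :=
    (ev_le _ _).trans ((T.le_opNorm _).trans (mul_le_mul_of_nonneg_left hX (norm_nonneg _)))
  have : |ν| ≤ |ev g (T (emb X))| + |ev g (T (emb X)) - ν| := by
    have := abs_sub (ev g (T (emb X))) (ev g (T (emb X)) - ν)
    rwa [sub_sub_cancel] at this
  linarith

theorem propP {C : ℝ} {T : Xs →L[ℝ] Xs} {y : H} {ν : ℝ} (hG : GC C T y ν) : |ν| ≤ ‖T‖ * ‖y‖ := by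
  set D := max C 1
  have hG' : GC D T y ν := hG.mono (le_max_left _ _)
  have hD : 1 ≤ D := le_max_right _ _
  refine le_of_forall_pos_le_add fun ε hε => ?_
  have ht : Tendsto (fun p : ℕ => ‖T‖ * (18 * D * (mm (2 * p + 1) : ℝ)⁻¹ +
      (‖y‖ + (2 * D + ‖y‖ + 2) * (mm (2 * p + 1) : ℝ)⁻¹)) + 5 * (ε / 5)) atTop
      (𝓝 (‖T‖ * (18 * D * 0 + (‖y‖ + (2 * D + ‖y‖ + 2) * 0)) + 5 * (ε / 5))) := by
    have h0 : Tendsto (fun p : ℕ => (mm (2 * p + 1) : ℝ)⁻¹) atTop (𝓝 0) := by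
      refine tendsto_inv_atTop_zero.comp (tendsto_natCast_atTop_atTop.comp ?_)
      refine tendsto_atTop_mono (fun p => ?_) tendsto_id
      have := le_mm (2 * p + 1)
      simp only [id]; omega
    exact ((h0.const_mul _).add ((h0.const_mul _).const_add _)).const_mul _ |>.add_const _
  have := ge_of_tendsto' ht fun p => propP_aux hD hG' p (ε := ε / 5) (by positivity)
  convert this using 1
  ring

end HISp
end


noncomputable section
namespace HISp

open Filter Topology

lemma Y_disj {f : Wt} {x : Vc} (h : ∀ n, f.1 n ≠ 0 → x n ≠ 0 → False) : Y f (emb x) = 0 := by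
  ext s
  rw [Y_apply]
  change ev f (II s (emb x)) = 0
  by_cases hs : s = 0
  · subst hs
    rw [II_zero]
    exact pr_disj h
  · rw [II_pos (Nat.one_le_iff_ne_zero.2 hs)]
    change pr (act (fun n => dl s (lab n)) f.1) x = 0
    exact pr_disj fun n h1 h2 => h n (right_ne_zero_of_mul h1) h2

lemma GC.zero (T : Xs →L[ℝ] Xs) : GC 0 T 0 0 := fun N S ε hε =>
  ⟨0, ⟨0, W.zero⟩, ⟨fun f _ => by simp, fun i _ f _ => by simp⟩, by simp, by simp,
    fun u _ => by simp [hε.le], by simp [hε.le]⟩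

lemma GC.smul {C : ℝ} {T : Xs →L[ℝ] Xs} {y : H} {ν : ℝ} (h : GC C T y ν) (c : ℝ) :
    GC (|c| * C) T (c • y) (c * ν) := by
  intro N S ε hε
  obtain ⟨x, f, h1, h2, h3, h4, h5⟩ := h N S (ε / (|c| + 1)) (by positivity)
  have hk : |c| * (ε / (|c| + 1)) ≤ ε := by
    rw [mul_div_assoc', div_le_iff₀ (by positivity)]
    nlinarith [abs_nonneg c]
  refine ⟨c • x, f, h1.smul c, fun n hn => h2 n (right_ne_zero_of_mul hn), h3, fun u hu => ?_, ?_⟩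
  · rw [map_smul, map_smul, ← smul_sub, real_inner_smul_left, abs_mul]
    exact (mul_le_mul_of_nonneg_left (h4 u hu) (abs_nonneg _)).trans hk
  · rw [map_smul, map_smul, map_smul, smul_eq_mul, ← mul_sub, abs_mul]
    exact (mul_le_mul_of_nonneg_left h5 (abs_nonneg _)).trans hk

lemma GC.add {C D : ℝ} {T : Xs →L[ℝ] Xs} {y z : H} {ν ω : ℝ} (h : GC C T y ν) (h' : GC D T z ω) :
    GC (|(mm 0 : ℝ)| * (C + D)) T (y + z) (ν + ω) := by
  intro N S ε hε
  obtain ⟨x, f, h1, h2, h3, h4, h5⟩ := h N S (ε / 4) (by positivity)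
  obtain ⟨N1, k1⟩ := exists_supp_lt x
  obtain ⟨N2, k2⟩ := exists_suppF_lt f.1
  obtain ⟨N4, k4⟩ := weak_null ((ev f).comp T) D (by positivity : 0 < ε / 4)
  obtain ⟨N5, k5⟩ := tail_small (T (emb x)) (by positivity : 0 < ε / 4)
  set M := N + N1 + N2 + N4 + N5 with hM
  obtain ⟨x', f', h1', h2', h3', h4', h5'⟩ := h' M S (ε / 4) (by positivity)
  let F : ℕ → Wt := fun i => if i = 0 then f else f'
  have hW : W ((mm 0 : ℚ)⁻¹ • ∑ i ∈ Finset.range 2, (F i).1) := by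
    have : ∀ i, ∃ o, Q o (F i).1 := fun i => (F i).2
    choose o ho using this
    refine ⟨_, Q.even 0 2 (fun i => (F i).1) o (two_le_nn _) (fun i _ => ho i) ?_⟩
    intro r r' hr hr' a b ha hb
    obtain rfl : r = 0 := by omega
    obtain rfl : r' = 1 := by omega
    have e1 : f.1 a ≠ 0 := ha
    have e2 : f'.1 b ≠ 0 := hb
    have := k2 a e1
    have := h3' b e2
    omega
  let g : Wt := ⟨_, hW⟩
  have hM0 := mm_posR 0
  have hg : ev g = (mm 0 : ℝ)⁻¹ • (ev f + ev f') := by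
    have := ev_comb (g := g) (h := F) rfl
    rw [this, Finset.sum_range_succ, Finset.sum_range_one]
    push_cast
    rfl
  have hgY : ∀ v, Y g v = (mm 0 : ℝ)⁻¹ • (Y f v + Y f' v) := by
    intro v
    ext s
    have : ev g (II s v) = (mm 0 : ℝ)⁻¹ * (ev f (II s v) + ev f' (II s v)) := by rw [hg]; rfl
    exact this
  have d1 : Y f (emb x') = 0 := Y_disj fun n a b => by
    have := k2 n a
    have := h2' n b
    omega
  have d2 : Y f' (emb x) = 0 := Y_disj fun n a b => by
    have := h3' n a
    have := k1 n b
    omega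
  refine ⟨(mm 0 : ℝ) • (x + x'), g, (h1.add (h1'.mono (by omega))).smul _, ?_, ?_, fun u hu => ?_, ?_⟩
  · intro n hn
    have : (x + x') n ≠ 0 := right_ne_zero_of_mul hn
    by_cases hx : x n = 0
    · have : x' n ≠ 0 := fun h => this (by simp [hx, h])
      have := h2' n this
      omega
    · exact h2 n hx
  · intro n hn
    have : (∑ i ∈ Finset.range 2, (F i).1) n ≠ 0 := right_ne_zero_of_mul hn
    rw [Finset.sum_range_succ, Finset.sum_range_one] at this
    have this : (f.1 + f'.1) n ≠ 0 := this
    by_cases hx : f.1 n = 0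
    · have : f'.1 n ≠ 0 := fun h => this (by simp [hx, h])
      have := h3' n this
      omega
    · exact h3 n hx
  · have e : Y g (emb ((mm 0 : ℝ) • (x + x'))) - (y + z) = (Y f (emb x) - y) + (Y f' (emb x') - z) := by
      rw [hgY, map_smul, map_add]
      simp only [map_smul, map_add]
      rw [d1, d2, ← smul_add, smul_smul, inv_mul_cancel₀ hM0.ne', one_smul]
      abel
    rw [e, inner_add_left]
    refine (abs_add_le _ _).trans ?_
    linarith [h4 u hu, h4' u hu]
  · have e : ev g (T (emb ((mm 0 : ℝ) • (x + x')))) - (ν + ω) = (ev f (T (emb x)) - ν) +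
        (ev f' (T (emb x')) - ω) + (ev f (T (emb x')) + ev f' (T (emb x))) := by
      rw [hg]
      simp only [map_smul, map_add, smul_apply, add_apply, smul_eq_mul]
      field_simp
      ring
    rw [e]
    have a1 := k4 M (by omega) x' h1' h2'
    have a2 := (ev_tail h3' (T (emb x))).trans (k5 M (by omega))
    have a1 : |ev f (T (emb x'))| ≤ ε / 4 := a1
    rw [abs_le] at *
    constructor <;> linarith [a1.1, a1.2, a2.1, a2.2, h5.1, h5.2, h5'.1, h5'.2]

def GG (T : Xs →L[ℝ] Xs) : Submodule ℝ (H × ℝ) where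
  carrier := {p | ∃ C, GC C T p.1 p.2}
  add_mem' := by rintro _ _ ⟨C, h⟩ ⟨D, h'⟩; exact ⟨_, h.add h'⟩
  zero_mem' := ⟨0, GC.zero T⟩
  smul_mem' := by rintro c _ ⟨C, h⟩; exact ⟨_, h.smul c⟩

theorem exists_a (T : Xs →L[ℝ] Xs) : ∃ a : H, ‖a‖ ≤ ‖T‖ ∧ ∀ C y ν, GC C T y ν → ν = inner ℝ a y := by
  have hb : ∀ p ∈ GG T, |p.2| ≤ ‖T‖ * ‖p.1‖ := by rintro p ⟨C, h⟩; exact propP h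
  have hg : ∀ (x : H × ℝ) (_hx : x ∈ GG T) (_hx' : x.fst = 0), x.snd = 0 := by
    intro x hx h0
    have := hb x hx
    rw [h0, norm_zero, mul_zero] at this
    exact abs_eq_zero.1 (le_antisymm this (abs_nonneg _))
  let q := (GG T).toLinearPMap
  have hq : ∀ x : q.domain, ((x : H), q x) ∈ GG T := fun x => Submodule.mem_graph_toLinearPMap hg x
  let F : q.domain →L[ℝ] ℝ := q.toFun.mkContinuous ‖T‖ fun x => hb _ (hq x)
  have hF : ‖F‖ ≤ ‖T‖ := LinearMap.mkContinuous_norm_le _ (norm_nonneg _) _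
  obtain ⟨g, hg1, hg2⟩ := exists_extension_norm_eq q.domain F
  refine ⟨(InnerProductSpace.toDual ℝ H).symm g, by
    rw [LinearIsometryEquiv.norm_map, hg2]; exact hF, fun C y ν h => ?_⟩
  rw [InnerProductSpace.toDual_symm_apply]
  have hmem : (y, ν) ∈ q.graph := by
    rw [Submodule.toLinearPMap_graph_eq _ hg]
    exact ⟨C, h⟩
  obtain ⟨x, hx1, hx2⟩ := q.mem_graph_iff.1 hmem
  have hx1 : (x : H) = y := hx1
  have hx2 : q x = ν := hx2
  rw [← hx1, hg1, ← hx2]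
  rfl

theorem GC.sub_DD {C : ℝ} {T : Xs →L[ℝ] Xs} {y a : H} {ν : ℝ} (h : GC C (T - DD a) y ν) :
    GC C T y (ν + inner ℝ a y) := by
  intro N S ε hε
  obtain ⟨x, f, h1, h2, h3, h4, h5⟩ := h N (a :: S) (ε / 2) (by positivity)
  refine ⟨x, f, h1, h2, h3, fun u hu => (h4 u (List.mem_cons_of_mem _ hu)).trans (by linarith), ?_⟩
  have e : ev f (T (emb x)) - (ν + inner ℝ a y) = (ev f ((T - DD a) (emb x)) - ν) +
      inner ℝ (Y f (emb x) - y) a := by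
    rw [inner_sub_left, real_inner_comm a, real_inner_comm a, ← ev_DD, sub_apply, map_sub]
    ring
  rw [e]
  refine (abs_add_le _ _).trans ?_
  linarith [h4 a List.mem_cons_self]

def Zs (T : Xs →L[ℝ] Xs) : Prop := ∀ (C δ : ℝ), 0 < δ → ∃ N0, ∀ N ≥ N0, ∀ x : Vc, Good C N x →
  (∀ n, x n ≠ 0 → N ≤ n) → ‖T (emb x)‖ ≤ δ

lemma PN_head (T : Xs →L[ℝ] Xs) (C : ℝ) {δ : ℝ} (hδ : 0 < δ) (M : ℕ) : ∃ N0, ∀ N ≥ N0, ∀ x : Vc,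
    Good C N x → (∀ n, x n ≠ 0 → N ≤ n) → ‖PN M (T (emb x))‖ ≤ δ := by
  have : ∀ i, ∃ N0, ∀ N ≥ N0, ∀ x : Vc, Good C N x → (∀ n, x n ≠ 0 → N ≤ n) →
      |((est i).comp T) (emb x)| ≤ δ / (M + 1) := fun i => weak_null _ C (by positivity)
  choose N0 h using this
  refine ⟨(Finset.range M).sup N0, fun N hN x hx hs => ?_⟩
  rw [PN_eq]
  refine (norm_sum_le _ _).trans ?_
  have : ∀ i ∈ Finset.range M, ‖est i (T (emb x)) • eb i‖ ≤ δ / (M + 1) := by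
    intro i hi
    rw [norm_smul, norm_eb, mul_one]
    exact h i N ((Finset.le_sup hi).trans hN) x hx hs
  refine (Finset.sum_le_card_nsmul _ _ _ this).trans ?_
  rw [Finset.card_range, nsmul_eq_mul, mul_div_assoc', div_le_iff₀ (by positivity)]
  nlinarith

lemma ev_far {z : Xs} {f : Wt} {M : ℕ} {c : ℝ} (h : c ≤ |ev f (z - PN M z)|) :
    ∃ g : Wt, (∀ n, g.1 n ≠ 0 → M ≤ n) ∧ c ≤ |ev g z| := by
  obtain ⟨b, hb⟩ := exists_suppF_lt f.1
  refine ⟨Wm (muI_mp M b) f, fun n hn => ?_, ?_⟩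
  · have h1 : muI M b n ≠ 0 := left_ne_zero_of_mul hn
    unfold muI at h1
    by_contra hcon
    exact h1 (if_neg (by omega))
  · have e : ev (Wm (muI_mp M b) f) = ev f - ev (Wm (muI_mp 0 M) f) := by
      apply clm_ext
      intro v
      have hf : f.1 = (Wm (muI_mp M b) f).1 + (Wm (muI_mp 0 M) f).1 := by
        ext n
        change f.1 n = muI M b n * f.1 n + muI 0 M n * f.1 n
        by_cases hn : f.1 n = 0
        · simp [hn]
        · have := hb n hn
          unfold muI
          by_cases hM : M ≤ n
          · rw [if_pos ⟨hM, this⟩, if_neg (by omega)]; ring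
          · rw [if_neg (by omega), if_pos (by omega)]; ring
      change pr (Wm (muI_mp M b) f).1 v = pr f.1 v - pr (Wm (muI_mp 0 M) f).1 v
      conv_rhs => rw [hf]
      rw [pr_add]
      ring
    rw [e]
    have : (ev f - ev (Wm (muI_mp 0 M) f)) z = ev f (z - PN M z) := by
      rw [map_sub]; rfl
    rwa [this]

theorem lemmaZ {T : Xs →L[ℝ] Xs} (hT : ∀ C y ν, GC C T y ν → ν = 0) : Zs T := by
  intro C δ hδ
  by_contra hcon
  push Not at hcon
  have key : ∀ M : ℕ, ∃ (x : Vc) (f : Wt), Good C M x ∧ (∀ n, x n ≠ 0 → M ≤ n) ∧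
      (∀ n, f.1 n ≠ 0 → M ≤ n) ∧ δ / 4 ≤ ev f (T (emb x)) := by
    intro M
    obtain ⟨N1, k1⟩ := PN_head T C (by positivity : 0 < δ / 2) M
    obtain ⟨N, hN, x, hx, hs, hlt⟩ := hcon (N1 + M)
    have h1 := k1 N (by omega) x hx hs
    have h2 : δ / 4 < ‖T (emb x) - PN M (T (emb x))‖ := by
      have := norm_sub_norm_le (T (emb x)) (PN M (T (emb x)))
      linarith
    obtain ⟨f, hf⟩ := ex_norming (by positivity) h2
    obtain ⟨g, hg, hg'⟩ := ev_far hf.le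
    have hx' : Good C M x := hx.mono (by omega)
    have hs' : ∀ n, x n ≠ 0 → M ≤ n := fun n hn => by have := hs n hn; omega
    rcases le_abs.1 hg' with h | h
    · exact ⟨x, g, hx', hs', hg, h⟩
    · refine ⟨-x, g, by simpa using hx'.smul (-1), fun n hn => hs' n (by simpa using hn), hg, ?_⟩
      rw [map_neg, map_neg, map_neg]; exact h
  choose x f hx hs hf hge using key
  have hxn : ∀ M, ‖emb (x M)‖ ≤ C := fun M => norm_emb_le (hx M).1
  set U : Ultrafilter ℕ := hyperfilter ℕ
  let g : ℕ → WeakDual ℝ H := fun M =>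
    StrongDual.toWeakDual (InnerProductSpace.toDual ℝ H (Y (f M) (emb (x M))))
  obtain ⟨φ, -, hφ⟩ := (WeakDual.isCompact_closedBall (𝕜 := ℝ) (E := H) 0 (2 * C)).ultrafilter_le_nhds'
    (U.map g) (by
      refine Ultrafilter.mem_map.2 (Ultrafilter.mem_coe.1 (Filter.univ_mem' fun M => ?_))
      change InnerProductSpace.toDual ℝ H (Y (f M) (emb (x M))) ∈ Metric.closedBall 0 (2 * C)
      rw [mem_closedBall_zero_iff, LinearIsometryEquiv.norm_map]
      exact (norm_Y_le _ _).trans (by linarith [hxn M]))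
  have hφ' : Tendsto g U (𝓝 φ) := hφ
  obtain ⟨ν, -, hν⟩ := (isCompact_Icc (a := -(‖T‖ * C)) (b := ‖T‖ * C)).ultrafilter_le_nhds'
    (U.map fun M => ev (f M) (T (emb (x M)))) (by
      refine Ultrafilter.mem_map.2 (Ultrafilter.mem_coe.1 (Filter.univ_mem' fun M => ?_))
      change ev (f M) (T (emb (x M))) ∈ Set.Icc _ _
      rw [Set.mem_Icc, ← abs_le]
      exact (ev_le _ _).trans ((T.le_opNorm _).trans
        (mul_le_mul_of_nonneg_left (hxn M) (norm_nonneg _))))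
  have hν' : Tendsto (fun M => ev (f M) (T (emb (x M)))) U (𝓝 ν) := hν
  let y : H := (InnerProductSpace.toDual ℝ H).symm (WeakDual.toStrongDual φ)
  have hy : ∀ u, Tendsto (fun M => inner ℝ (Y (f M) (emb (x M))) u) U (𝓝 (inner ℝ y u)) := by
    intro u
    have h1 := ((WeakDual.eval_continuous u).tendsto φ).comp hφ'
    have e : inner ℝ y u = φ u := InnerProductSpace.toDual_symm_apply
    rw [e]
    exact h1
  have hGC : GC C T y ν := by
    intro N S ε hε
    have ev1 : ∀ᶠ M in (U : Filter ℕ), N ≤ M :=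
      (eventually_ge_atTop N).filter_mono Nat.hyperfilter_le_atTop
    have ev2 : ∀ᶠ M in (U : Filter ℕ), |ev (f M) (T (emb (x M))) - ν| ≤ ε :=
      (Metric.tendsto_nhds.1 hν' ε hε).mono fun M h => h.le
    have ev3 : ∀ᶠ M in (U : Filter ℕ), ∀ u ∈ S, |inner ℝ (Y (f M) (emb (x M)) - y) u| ≤ ε := by
      have : ∀ u ∈ S, ∀ᶠ M in (U : Filter ℕ), |inner ℝ (Y (f M) (emb (x M)) - y) u| ≤ ε := by
        intro u _
        refine (Metric.tendsto_nhds.1 (hy u) ε hε).mono fun M h => ?_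
        rw [inner_sub_left]; exact h.le
      exact (Set.Finite.eventually_all (List.finite_toSet S)).2 this
    obtain ⟨M, h1, h2, h3⟩ := (ev1.and (ev2.and ev3)).exists
    exact ⟨x M, f M, (hx M).mono h1, fun n hn => h1.trans (hs M n hn),
      fun n hn => h1.trans (hf M n hn), h3, h2⟩
  have := ge_of_tendsto' hν' hge
  rw [hT C y ν hGC] at this
  linarith

theorem decompose (T : Xs →L[ℝ] Xs) : ∃ a : H, ‖a‖ ≤ ‖T‖ ∧ Zs (T - DD a) := by
  obtain ⟨a, ha, h⟩ := exists_a T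
  refine ⟨a, ha, lemmaZ fun C y ν hG => ?_⟩
  have := h _ _ _ hG.sub_DD
  linarith

end HISp
end


noncomputable section
namespace HISp

open Filter Topology

lemma actV_fix {μ : ℕ → ℚ} {v : Vc} (h : ∀ n, v n ≠ 0 → μ n = 1) : actV μ v = v := by
  ext n
  change (μ n : ℝ) * v n = v n
  by_cases hn : v n = 0
  · rw [hn, mul_zero]
  · rw [h n hn]; simp

lemma block {U : Submodule ℝ Xs} (hU : ¬ FiniteDimensional ℝ U) (N : ℕ) {ε : ℝ} (hε : 0 < ε) :
    ∃ (v : Vc) (f : Wt) (b : ℕ), N ≤ b ∧ (∀ n, v n ≠ 0 → N ≤ n ∧ n < b) ∧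
      (∀ n, f.1 n ≠ 0 → N ≤ n ∧ n < b) ∧ ‖emb v‖ ≤ 1 ∧ 1 / 4 ≤ pr f.1 v ∧
      ∃ u ∈ U, ‖emb v - u‖ ≤ ε := by
  -- a vector of U vanishing on the first N coordinates
  obtain ⟨u, huU, hu0, huN⟩ : ∃ u ∈ U, u ≠ 0 ∧ ∀ i < N, est i u = 0 := by
    by_contra hcon
    push Not at hcon
    apply hU
    let φ : U →ₗ[ℝ] (Fin N → ℝ) :=
      LinearMap.pi fun i : Fin N => (est i).toLinearMap.comp U.subtype
    refine FiniteDimensional.of_injective φ ?_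
    rw [← LinearMap.ker_eq_bot, LinearMap.ker_eq_bot']
    intro m hm
    by_contra hne
    obtain ⟨i, hi, h⟩ := hcon m.1 m.2 (fun h => hne (Subtype.ext h))
    exact h (congrFun hm ⟨i, hi⟩)
  have hun : 0 < ‖u‖ := norm_pos_iff.2 hu0
  set u' : Xs := (3 / 4 * ‖u‖⁻¹) • u with hu'
  have hu'U : u' ∈ U := U.smul_mem _ huU
  have hu'n : ‖u'‖ = 3 / 4 := by
    rw [hu', norm_smul, Real.norm_of_nonneg (by positivity), mul_assoc, inv_mul_cancel₀ hun.ne', mul_one]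
  have hu'P : PN N u' = 0 := by
    rw [PN_eq]
    refine Finset.sum_eq_zero fun i hi => ?_
    rw [hu', map_smul, huN i (Finset.mem_range.1 hi), smul_zero, zero_smul]
  have hε' : 0 < min ε (1 / 8) / 2 := by positivity
  obtain ⟨v', hv'⟩ := exists_emb_near u' hε'
  obtain ⟨b0, hb0⟩ := exists_supp_lt v'
  set b := max b0 N with hb
  set v : Vc := actV (muI N b) v' with hv
  have hvs : ∀ n, v n ≠ 0 → N ≤ n ∧ n < b := by
    intro n hn
    have : ((muI N b n : ℚ) : ℝ) * v' n ≠ 0 := hn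
    have h1 := left_ne_zero_of_mul this
    by_contra hcon
    apply h1
    rw [muI, if_neg hcon]; simp
  have hve : emb v = emb v' - PN N (emb v') := by
    have : PN N (emb v') = emb (actV (muI 0 N) v') := Pm_emb _ _
    rw [this, ← map_sub]
    congr 1
    ext n
    change ((muI N b n : ℚ) : ℝ) * v' n = v' n - ((muI 0 N n : ℚ) : ℝ) * v' n
    by_cases hn : v' n = 0
    · simp [hn]
    · have h1 := hb0 n hn
      have h2 : n < b := h1.trans_le (le_max_left _ _)
      unfold muI
      by_cases hN : N ≤ n
      · rw [if_pos ⟨hN, h2⟩, if_neg (by omega)]; simp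
      · rw [if_neg (by omega), if_pos (by omega)]; simp
  have hdist : ‖emb v - u'‖ ≤ min ε (1 / 8) := by
    have e : emb v - u' = -(u' - emb v') + PN N (u' - emb v') := by
      rw [map_sub, hu'P, hve]; abel
    rw [e]
    refine (norm_add_le _ _).trans ?_
    rw [norm_neg]
    have := Pm_norm_le (muI_mp 0 N) (u' - emb v')
    have h2 : ‖PN N (u' - emb v')‖ ≤ ‖u' - emb v'‖ := this
    linarith
  have hd8 : ‖emb v - u'‖ ≤ 1 / 8 := hdist.trans (min_le_right _ _)
  have hup : ‖emb v‖ ≤ 1 := by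
    have := norm_sub_norm_le (emb v) u'
    linarith
  have hlo : 1 / 4 < ‖emb v‖ := by
    have := norm_sub_norm_le u' (emb v)
    rw [norm_sub_rev] at this
    linarith
  obtain ⟨f, hf⟩ := ex_norming (by norm_num) hlo
  have hfe : pr (Wm (muI_mp N b) f).1 v = ev f (emb v) := by
    change pr (act (muI N b) f.1) v = pr f.1 v
    rw [← pr_actV, actV_fix fun n hn => ?_]
    rw [muI, if_pos (hvs n hn)]
  have hfs : ∀ n, (Wm (muI_mp N b) f).1 n ≠ 0 → N ≤ n ∧ n < b := by
    intro n hn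
    have h1 : muI N b n ≠ 0 := left_ne_zero_of_mul hn
    by_contra hcon
    exact h1 (if_neg hcon)
  rcases lt_abs.1 hf with h | h
  · exact ⟨v, Wm (muI_mp N b) f, b, le_max_right _ _, hvs, hfs, hup, by rw [hfe]; exact h.le, u', hu'U,
      hdist.trans (min_le_left _ _)⟩
  · refine ⟨-v, Wm (muI_mp N b) f, b, le_max_right _ _, fun n hn => hvs n (by simpa using hn), hfs,
      by rw [map_neg, norm_neg]; exact hup, by rw [map_neg, hfe]; exact h.le, -u', U.neg_mem hu'U, ?_⟩
    rw [map_neg, neg_sub_neg, norm_sub_rev]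
    exact hdist.trans (min_le_left _ _)

/-- averages of averages -/
def av (k : ℕ) (v : ℕ → Vc) : ℕ → ℕ → Vc
  | 0, i => v i
  | (s + 1), i => (k : ℝ)⁻¹ • ∑ r ∈ Finset.range k, av k v s (i * k + r)

lemma av_blk {k : ℕ} {v : ℕ → Vc} {a : ℕ → ℕ} (ha : Monotone a) (hv : InBlk a v) (s : ℕ) :
    ∀ i n, av k v s i n ≠ 0 → a (i * k ^ s) ≤ n ∧ n < a ((i + 1) * k ^ s) := by
  induction s with
  | zero => intro i n hn; simpa using hv i n hn
  | succ s ih =>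
    intro i n hn
    have : ∃ r ∈ Finset.range k, av k v s (i * k + r) n ≠ 0 := by
      by_contra hcon
      push Not at hcon
      apply hn
      change ((k : ℝ)⁻¹ • ∑ r ∈ Finset.range k, av k v s (i * k + r)) n = 0
      rw [Finsupp.smul_apply, Finsupp.finsetSum_apply, Finset.sum_eq_zero hcon, smul_zero]
    obtain ⟨r, hr, hrn⟩ := this
    rw [Finset.mem_range] at hr
    have h1 := ih _ _ hrn
    refine ⟨(ha ?_).trans h1.1, h1.2.trans_le (ha ?_)⟩
    · rw [pow_succ, mul_comm (k ^ s), ← mul_assoc]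
      exact Nat.mul_le_mul_right _ (Nat.le_add_right _ _)
    · rw [pow_succ, mul_comm (k ^ s), ← mul_assoc]
      refine Nat.mul_le_mul_right _ ?_
      rw [add_mul, one_mul]; omega

lemma av_dist {k : ℕ} (hk : 0 < k) {v : ℕ → Vc} {U : Submodule ℝ Xs} {ε : ℝ}
    (h : ∀ l, ∃ u ∈ U, ‖emb (v l) - u‖ ≤ ε) (s : ℕ) : ∀ i, ∃ u ∈ U, ‖emb (av k v s i) - u‖ ≤ ε := by
  induction s with
  | zero => exact h
  | succ s ih =>
    intro i
    choose u hu hd using ih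
    refine ⟨(k : ℝ)⁻¹ • ∑ r ∈ Finset.range k, u (i * k + r), U.smul_mem _ (U.sum_mem fun r _ => hu _), ?_⟩
    change ‖emb ((k : ℝ)⁻¹ • ∑ r ∈ Finset.range k, av k v s (i * k + r)) - _‖ ≤ ε
    have hk' : (0 : ℝ) < k := by exact_mod_cast hk
    rw [map_smul, map_sum, ← smul_sub, ← Finset.sum_sub_distrib, norm_smul,
      Real.norm_of_nonneg (by positivity), inv_mul_le_iff₀ hk']
    refine (norm_sum_le _ _).trans ((Finset.sum_le_card_nsmul _ _ _ fun r _ => hd _).trans ?_)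
    rw [Finset.card_range, nsmul_eq_mul]

lemma av_low {k : ℕ} (hk : 0 < k) {v : ℕ → Vc} {G : Fn} {n : ℕ} (h : ∀ l < n, 1 / 4 ≤ pr G (v l))
    (s : ℕ) : ∀ i, (i + 1) * k ^ s ≤ n → 1 / 4 ≤ pr G (av k v s i) := by
  induction s with
  | zero => intro i hi; exact h i (by simpa using hi)
  | succ s ih =>
    intro i hi
    change 1 / 4 ≤ pr G ((k : ℝ)⁻¹ • ∑ r ∈ Finset.range k, av k v s (i * k + r))
    have hk' : (0 : ℝ) < k := by exact_mod_cast hk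
    rw [map_smul, map_sum, smul_eq_mul, le_inv_mul_iff₀ hk']
    have := Finset.card_nsmul_le_sum (Finset.range k) (fun r => pr G (av k v s (i * k + r))) (1 / 4)
      (fun r hr => ih _ (le_trans ?_ hi))
    · rw [Finset.card_range, nsmul_eq_mul] at this
      exact this
    · rw [pow_succ, mul_comm (k ^ s), ← mul_assoc]
      refine Nat.mul_le_mul_right _ ?_
      rw [add_mul, one_mul]
      have := Finset.mem_range.1 hr
      omega

lemma avg_good {N k : ℕ} (hk : k = nn N * mm N) {a : ℕ → ℕ} {x : ℕ → Vc} (ha : Monotone a)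
    (hx : InBlk a x) {c : ℝ} (hc : 0 ≤ c) (h : ∀ r, ‖emb (x r)‖ ≤ c) :
    Good (2 * c) N ((k : ℝ)⁻¹ • ∑ r ∈ Finset.range k, x r) := by
  have hkp : 0 < k := by rw [hk]; exact Nat.mul_pos (nn_pos _) (mm_pos _)
  have hk' : (0 : ℝ) < k := by exact_mod_cast hkp
  have hb : ∀ (g : Fn), W g → ∀ A : Finset ℕ, |pr g (∑ r ∈ A, x r)| ≤ A.card * c := by
    intro g hg A
    rw [map_sum]
    refine (Finset.abs_sum_le_sum_abs _ _).trans ((Finset.sum_le_card_nsmul _ _ _ fun r _ =>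
      (pr_le_norm hg (x r)).trans (h r)).trans ?_)
    rw [nsmul_eq_mul]
  refine ⟨fun f hf => ?_, fun i hi f hf => ?_⟩
  · rw [map_smul, smul_eq_mul, abs_mul, abs_of_pos (inv_pos.2 hk'), inv_mul_le_iff₀ hk']
    have := hb f hf (Finset.range k)
    rw [Finset.card_range] at this
    nlinarith
  · obtain ⟨d, hd, g, hg, Ar, hAr, hcard, B, hB, hBc, heq⟩ := split hf ha hx (Finset.range k)
    rw [map_smul, smul_eq_mul, abs_mul, abs_of_pos (inv_pos.2 hk'), inv_mul_le_iff₀ hk', heq]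
    have hM := mm_posR i
    have e1 : |∑ r ∈ B, pr f (x r)| ≤ nn i * c := by
      have := hb f ⟨_, hf⟩ B
      rw [map_sum] at this
      exact this.trans (mul_le_mul_of_nonneg_right (by exact_mod_cast hBc) hc)
    have e2 : |∑ r ∈ Finset.range d, pr (g r) (∑ l ∈ Ar r, x l)| ≤ k * c := by
      refine (Finset.abs_sum_le_sum_abs _ _).trans ((Finset.sum_le_sum fun r hr =>
        hb (g r) (hg r (Finset.mem_range.1 hr)) (Ar r)).trans ?_)
      rw [← Finset.sum_mul]
      refine mul_le_mul_of_nonneg_right ?_ hc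
      rw [Finset.card_range] at hcard
      exact_mod_cast hcard
    have e3 : (nn i : ℝ) * mm i ≤ k := by
      have : nn i * mm i ≤ k := by
        rw [hk]; exact Nat.mul_le_mul (nn_mono hi.le) (mm_mono hi.le)
      exact_mod_cast this
    refine (abs_add_le _ _).trans ?_
    rw [abs_mul, abs_of_pos (inv_pos.2 hM)]
    have e4 : (nn i : ℝ) * c ≤ k * (c / mm i) := by
      rw [mul_div_assoc', le_div_iff₀ hM]
      nlinarith
    have e5 : (mm i : ℝ)⁻¹ * |∑ r ∈ Finset.range d, pr (g r) (∑ l ∈ Ar r, x l)| ≤ k * (c / mm i) := by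
      rw [mul_div_assoc', inv_mul_eq_div]
      exact div_le_div_of_nonneg_right e2 hM.le
    calc _ ≤ k * (c / mm i) + k * (c / mm i) := add_le_add (e1.trans e4) e5
      _ = _ := by ring

lemma num_kt (N : ℕ) : (nn N * mm N) ^ (2 ^ (2 * (N + 1)) + 3) ≤ nn (2 * (N + 1)) := by
  have h1 : nn N * mm N ≤ nn (2 * N + 1) ^ 2 := by
    have a := nn_mono (show N ≤ 2 * N + 1 by omega)
    have b := mm_sq_le_nn N
    have c := mm_two_le N
    nlinarith
  have h2 : 1 ≤ nn (2 * N + 1) := nn_pos _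
  have h3 : 2 * (2 ^ (2 * (N + 1)) + 3) ≤ 2 ^ (2 * N + 1 + 3) := by
    have e1 : 2 ^ (2 * N + 1 + 3) = 4 * 2 ^ (2 * (N + 1)) := by rw [show 2 * N + 1 + 3 = 2 + 2 * (N + 1) by ring, pow_add]; norm_num
    have e2 : 4 ≤ 2 ^ (2 * (N + 1)) := by
      calc 4 = 2 ^ 2 := rfl
        _ ≤ _ := Nat.pow_le_pow_right (by norm_num) (by omega)
    omega
  have h4 := nn_lb (2 * N + 1)
  have h5 : 1 ≤ mm (2 * N + 1 + 1) ^ 4 := Nat.one_le_pow _ _ (mm_pos _)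
  calc (nn N * mm N) ^ (2 ^ (2 * (N + 1)) + 3) ≤ (nn (2 * N + 1) ^ 2) ^ (2 ^ (2 * (N + 1)) + 3) :=
        Nat.pow_le_pow_left h1 _
    _ = nn (2 * N + 1) ^ (2 * (2 ^ (2 * (N + 1)) + 3)) := by rw [← pow_mul]
    _ ≤ nn (2 * N + 1) ^ (2 ^ (2 * N + 1 + 3)) := Nat.pow_le_pow_right h2 h3
    _ ≤ (2 * nn (2 * N + 1)) ^ (2 ^ (2 * N + 1 + 3)) := Nat.pow_le_pow_left (by omega) _
    _ ≤ mm (2 * N + 1 + 1) ^ 4 * (2 * nn (2 * N + 1)) ^ (2 ^ (2 * N + 1 + 3)) :=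
        Nat.le_mul_of_pos_left _ h5
    _ ≤ nn (2 * (N + 1)) := h4

theorem good_near {U : Submodule ℝ Xs} (hU : ¬ FiniteDimensional ℝ U) (N : ℕ) {ε : ℝ} (hε : 0 < ε) :
    ∃ x : Vc, Good 4 N x ∧ (∀ n, x n ≠ 0 → N ≤ n) ∧ 1 ≤ ‖emb x‖ ∧ ∃ u ∈ U, ‖emb x - u‖ ≤ ε := by
  by_contra hcon
  push Not at hcon
  set k := nn N * mm N with hk
  set j := 2 * (N + 1) with hj
  set t := 2 ^ j + 3 with ht
  have hkp : 0 < k := Nat.mul_pos (nn_pos _) (mm_pos _)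
  have hk' : (0 : ℝ) < k := by exact_mod_cast hkp
  have hε' : 0 < ε / 2 ^ t := by positivity
  have hbl := fun M => block hU M hε'
  choose V F B hB1 hB2 hB3 hB4 hB5 hB6 using hbl
  let a : ℕ → ℕ := fun n => Nat.rec N (fun _ m => B m) n
  have ha1 : ∀ n, a (n + 1) = B (a n) := fun n => rfl
  have ha : Monotone a := monotone_nat_of_le_succ fun n => by rw [ha1]; exact hB1 _
  have haN : ∀ n, N ≤ a n := fun n => ha (Nat.zero_le n)
  let v : ℕ → Vc := fun l => V (a l)
  have hv : InBlk a v := fun l n hn => hB2 (a l) n hn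
  have hd : ∀ s i, ∃ u ∈ U, ‖emb (av k v s i) - u‖ ≤ ε / 2 ^ t := fun s i =>
    av_dist hkp (fun l => hB6 (a l)) s i
  have hmain : ∀ s ≤ t, ∀ i, ‖emb (av k v s i)‖ ≤ (2 ^ s)⁻¹ := by
    intro s
    induction s with
    | zero => intro _ i; rw [pow_zero, inv_one]; exact hB4 (a i)
    | succ s ih =>
      intro hs i
      have ih := ih (by omega)
      by_contra hlt
      push Not at hlt
      obtain ⟨u, hu, hud⟩ := hd (s + 1) i
      have hg : Good (2 * (2 ^ s)⁻¹) N (av k v (s + 1) i) := by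
        refine avg_good (a := fun r => a ((i * k + r) * k ^ s)) hk ?_ ?_ (by positivity)
          fun r => ih (i * k + r)
        · intro r r' h
          exact ha (Nat.mul_le_mul_right _ (by omega))
        · intro r n hn
          exact av_blk ha hv s _ n hn
      have hg' := hg.smul (2 ^ (s + 1))
      have e : |(2 : ℝ) ^ (s + 1)| * (2 * (2 ^ s)⁻¹) = 4 := by
        rw [abs_of_pos (by positivity), pow_succ]; field_simp; norm_num
      rw [e] at hg'
      refine absurd (hcon _ hg' ?_ ?_ ((2 : ℝ) ^ (s + 1) • u) (U.smul_mem _ hu)) (not_lt.2 ?_)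
      · intro n hn
        exact (haN _).trans (av_blk ha hv (s + 1) i n (right_ne_zero_of_mul hn)).1
      · rw [map_smul, norm_smul, Real.norm_of_nonneg (by positivity)]
        have : (1 : ℝ) = 2 ^ (s + 1) * (2 ^ (s + 1))⁻¹ := by field_simp
        rw [this]
        exact mul_le_mul_of_nonneg_left hlt.le (by positivity)
      · rw [map_smul, ← smul_sub, norm_smul, Real.norm_of_nonneg (by positivity)]
        calc (2 : ℝ) ^ (s + 1) * ‖emb (av k v (s + 1) i) - u‖ ≤ 2 ^ t * (ε / 2 ^ t) := by
              refine mul_le_mul (pow_le_pow_right₀ (by norm_num) hs) hud (norm_nonneg _) (by positivity)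
          _ = ε := by field_simp
  -- the lower bound
  let f : ℕ → Wt := fun l => F (a l)
  have hff : ∀ l n, (f l).1 n ≠ 0 → a l ≤ n ∧ n < a (l + 1) := fun l n hn => hB3 (a l) n hn
  have hW : W ((mm j : ℚ)⁻¹ • ∑ l ∈ Finset.range (k ^ t), (f l).1) := by
    have : ∀ i, ∃ o, Q o (f i).1 := fun i => (f i).2
    choose o ho using this
    refine ⟨_, Q.even (N + 1) (k ^ t) (fun i => (f i).1) o (num_kt N) (fun i _ => ho i) ?_⟩
    intro r r' hr _ n n' h1 h2
    exact blk_lt ha hr (hff r n h1).2 (hff r' n' h2).1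
  have hlow : 1 / 4 ≤ pr (∑ l ∈ Finset.range (k ^ t), (f l).1) (av k v t 0) := by
    refine av_low hkp (n := k ^ t) (fun l hl => ?_) t 0 (by simp)
    rw [pr_sum, Finset.sum_eq_single l]
    · exact hB5 (a l)
    · intro l' _ hne
      refine pr_disj fun n h1 h2 => ?_
      have h3 := hff l' n h1
      have h4 := hv l n h2
      rcases lt_or_gt_of_ne hne with h | h
      · exact lt_irrefl _ (blk_lt ha h h3.2 h4.1)
      · exact lt_irrefl _ (blk_lt ha h h4.2 h3.1)
    · intro h; exact absurd (Finset.mem_range.2 hl) h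
  have h1 := pr_le_norm hW (av k v t 0)
  have h2 := hmain t le_rfl 0
  rw [pr_smul] at h1
  have hM := mm_posR j
  have h3 : (mm j : ℝ)⁻¹ * (1 / 4) ≤ (2 ^ t)⁻¹ := by
    refine le_trans ?_ (h1.trans h2)
    refine le_trans ?_ (le_abs_self _)
    push_cast
    exact mul_le_mul_of_nonneg_left hlow (by positivity)
  have h4 : (2 : ℝ) ^ t = 8 * mm j := by
    rw [ht, pow_add]
    have : (mm j : ℝ) = 2 ^ 2 ^ j := by simp [mm]
    rw [this]; ring
  rw [h4] at h3
  have : (8 * (mm j : ℝ))⁻¹ = (mm j : ℝ)⁻¹ * (1 / 8) := by field_simp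
  rw [this] at h3
  have := inv_pos.2 hM
  linarith

theorem Zs.ss {T : Xs →L[ℝ] Xs} (hT : Zs T) {U : Submodule ℝ Xs} (hU : ¬ FiniteDimensional ℝ U)
    {c : ℝ} (hc : 0 < c) (h : ∀ x ∈ U, c * ‖x‖ ≤ ‖T x‖) : False := by
  obtain ⟨N, hN⟩ := hT 4 (c / 4) (by positivity)
  have hε : 0 < min (1 / 2) (c / (8 * (‖T‖ + 1))) := by positivity
  obtain ⟨x, hx, hs, hn, u, hu, hd⟩ := good_near hU N hε
  have h1 := hN N le_rfl x hx hs
  have h2 := h u hu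
  have h3 : ‖u‖ ≥ 1 / 2 := by
    have := norm_sub_norm_le (emb x) u
    have := hd.trans (min_le_left _ _)
    linarith
  have h4 : ‖T u‖ ≤ c / 4 + c / 8 := by
    have e : T u = T (emb x) - T (emb x - u) := by rw [map_sub]; abel
    rw [e]
    refine (norm_sub_le _ _).trans (add_le_add h1 ((T.le_opNorm _).trans ?_))
    have h5 := hd.trans (min_le_right _ _)
    calc ‖T‖ * ‖emb x - u‖ ≤ (‖T‖ + 1) * (c / (8 * (‖T‖ + 1))) := by
          refine mul_le_mul (by linarith) h5 (norm_nonneg _) (by positivity)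
      _ = c / 8 := by field_simp
  nlinarith

end HISp
end


noncomputable section
namespace HISp

open Filter Topology

lemma clm_ext_eb {Y : Type*} [NormedAddCommGroup Y] [NormedSpace ℝ Y] {S T : Xs →L[ℝ] Y}
    (h : ∀ n, S (eb n) = T (eb n)) : S = T := by
  apply clm_ext
  intro v
  have : S.toLinearMap.comp emb = T.toLinearMap.comp emb := by
    refine Finsupp.lhom_ext' fun n => LinearMap.ext_ring ?_
    exact h n
  exact congrArg (fun f : Vc →ₗ[ℝ] Y => f v) this

lemma II_eb {t : ℕ} (ht : 1 ≤ t) (n : ℕ) : II t (eb n) = if lab n = t then eb n else 0 := by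
  rw [II_pos ht, Ip, eb, Pm_emb]
  have : actV (fun n => dl t (lab n)) (Finsupp.single n 1) =
      if lab n = t then Finsupp.single n (1 : ℝ) else 0 := by
    ext k
    change ((dl t (lab k) : ℚ) : ℝ) * (Finsupp.single n (1 : ℝ)) k = _
    by_cases hk : n = k
    · subst hk
      unfold dl
      split_ifs <;> simp
    · rw [Finsupp.single_eq_of_ne (Ne.symm hk), mul_zero]
      split_ifs
      · rw [Finsupp.single_eq_of_ne (Ne.symm hk)]
      · rfl
  rw [this]
  split_ifs
  · rfl
  · exact map_zero _

lemma lab_pos (n : ℕ) : 1 ≤ lab n := Nat.le_add_left _ _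

lemma lab_pair {s : ℕ} (hs : 1 ≤ s) (m : ℕ) : lab (Nat.pair (s - 1) m) = s := by
  unfold lab; rw [Nat.unpair_pair]; dsimp only; omega

lemma DD_eb (b : H) (n : ℕ) : DD b (eb n) = (b 0 + b (lab n)) • eb n := by
  have h1 : HasSum (fun s => (b s • II s) (eb n)) (DD b (eb n)) := by
    have := (hasSum_DD b).mapL (ContinuousLinearMap.apply ℝ Xs (eb n))
    simpa using this
  have hl := lab_pos n
  have h2 : HasSum (fun s => (b s • II s) (eb n))
      (∑ s ∈ ({0, lab n} : Finset ℕ), (b s • II s) (eb n)) := by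
    apply hasSum_sum_of_ne_finset_zero
    intro s hs
    simp only [Finset.mem_insert, Finset.mem_singleton, not_or] at hs
    rw [smul_apply, II_eb (by omega), if_neg (fun h => hs.2 h.symm), smul_zero]
  rw [h1.unique h2, Finset.sum_pair (by omega), smul_apply, smul_apply, II_zero, II_eb hl,
    if_pos rfl, add_smul]
  rfl

lemma Zs.sub {S T : Xs →L[ℝ] Xs} (hS : Zs S) (hT : Zs T) : Zs (S - T) := by
  intro C δ hδ
  obtain ⟨N1, h1⟩ := hS C (δ / 2) (by linarith)
  obtain ⟨N2, h2⟩ := hT C (δ / 2) (by linarith)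
  refine ⟨max N1 N2, fun N hN x hx hx' => ?_⟩
  have e1 := h1 N (le_trans (le_max_left _ _) hN) x hx hx'
  have e2 := h2 N (le_trans (le_max_right _ _) hN) x hx hx'
  rw [sub_apply]
  exact (norm_sub_le _ _).trans (by linarith)

lemma Zs.zero : Zs 0 := by
  intro C δ hδ
  exact ⟨0, fun N _ x _ _ => by simpa using hδ.le⟩

lemma Zs.eb {S : Xs →L[ℝ] Xs} (hS : Zs S) {δ : ℝ} (hδ : 0 < δ) :
    ∃ N0, ∀ n ≥ N0, ‖S (eb n)‖ ≤ δ := by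
  obtain ⟨N0, h⟩ := hS 1 δ hδ
  refine ⟨N0, fun n hn => h n hn _ (Good.basis n n) fun k hk => ?_⟩
  by_contra hlt
  exact hk (Finsupp.single_eq_of_ne (by omega))

lemma H_eq_zero {b : H} (h : ∀ s, 1 ≤ s → b 0 + b s = 0) : b = 0 := by
  have h1 : Tendsto (fun s => b s ^ 2) atTop (𝓝 0) := (norm_H_sq b).summable.tendsto_atTop_zero
  have h2 : Tendsto (fun s => b s ^ 2) atTop (𝓝 (b 0 ^ 2)) := by
    refine tendsto_const_nhds.congr' ?_
    filter_upwards [eventually_ge_atTop 1] with s hs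
    have := h s hs
    have : b s = - b 0 := by linarith
    rw [this]; ring
  have h3 : b 0 = 0 := by simpa using tendsto_nhds_unique h2 h1
  ext s
  rcases Nat.eq_zero_or_pos s with rfl | hs
  · simpa using h3
  · have := h s hs
    have : b s = 0 := by linarith
    simpa using this

lemma Zs_DD {b : H} (hb : Zs (DD b)) : b = 0 := by
  apply H_eq_zero
  intro s hs
  by_contra hne
  obtain ⟨N0, h⟩ := hb.eb (δ := |b 0 + b s| / 2) (by positivity)
  have := h (Nat.pair (s - 1) N0) (Nat.right_le_pair _ _)
  rw [DD_eb, lab_pair hs, norm_smul, norm_eb, Real.norm_eq_abs] at this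
  have := abs_pos.2 hne
  linarith

lemma eb_linInd {φ : ℕ → ℕ} (hφ : Function.Injective φ) :
    LinearIndependent ℝ (fun k => eb (φ k)) := by
  rw [linearIndependent_iff']
  intro F g hg i hi
  have := congrArg (est (φ i)) hg
  rw [map_sum, map_zero, Finset.sum_eq_single i] at this
  · simpa [est_eb] using this
  · intro j _ hj
    rw [map_smul, est_eb, if_neg (fun h => hj (hφ h)), smul_zero]
  · exact fun h => absurd hi h

lemma infdim_of_linInd {E : Type*} [NormedAddCommGroup E] [NormedSpace ℝ E] {U : Submodule ℝ E}
    {v : ℕ → E} (hv : LinearIndependent ℝ v) (hU : ∀ k, v k ∈ U) : ¬ FiniteDimensional ℝ U := by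
  intro hfd
  have : LinearIndependent ℝ (fun k => (⟨v k, hU k⟩ : U)) :=
    LinearIndependent.of_comp U.subtype hv
  have := this.finite_of_isNoetherian
  exact not_finite ℕ

lemma closed_bound {E : Type*} [NormedAddCommGroup E] [NormedSpace ℝ E] {U : Submodule ℝ E}
    (S : E →L[ℝ] E) (c : ℝ) (h : ∀ x ∈ U, c * ‖x‖ ≤ ‖S x‖) :
    ∀ x ∈ U.topologicalClosure, c * ‖x‖ ≤ ‖S x‖ := by
  intro x hx
  have hcl : IsClosed {x : E | c * ‖x‖ ≤ ‖S x‖} :=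
    isClosed_le (by fun_prop) (by fun_prop)
  have : closure (U : Set E) ⊆ {x : E | c * ‖x‖ ≤ ‖S x‖} := closure_minimal h hcl
  exact this hx

lemma est_le (n : ℕ) (x : Xs) : |est n x| ≤ ‖x‖ := ev_le _ x

lemma below {a : H} {S S' : Xs →L[ℝ] Xs} (hS : S = DD a + S') (hZ : Zs S') {s : ℕ} (hs : 1 ≤ s)
    (hc : a 0 + a s ≠ 0) : ∃ U : Submodule ℝ Xs, IsClosed (U : Set Xs) ∧ ¬ FiniteDimensional ℝ U ∧
      ∃ c : ℝ, 0 < c ∧ ∀ x ∈ U, c * ‖x‖ ≤ ‖S x‖ := by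
  set c := a 0 + a s with hcdef
  have hc0 : 0 < |c| := abs_pos.2 hc
  have : ∀ k : ℕ, ∀ᶠ m in atTop, ‖S' (eb (Nat.pair (s - 1) m))‖ ≤ |c| / 4 * (1 / 2) ^ k := by
    intro k
    obtain ⟨N0, h⟩ := hZ.eb (δ := |c| / 4 * (1 / 2) ^ k) (by positivity)
    filter_upwards [eventually_ge_atTop N0] with m hm
    exact h _ (hm.trans (Nat.right_le_pair _ _))
  obtain ⟨φ, hφ, hb⟩ := extraction_forall_of_eventually this
  have hinj : Function.Injective fun k => Nat.pair (s - 1) (φ k) := by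
    intro i j hij
    exact hφ.injective (Nat.pair_eq_pair.1 hij).2
  set v : ℕ → Xs := fun k => eb (Nat.pair (s - 1) (φ k)) with hv
  refine ⟨(Submodule.span ℝ (Set.range v)).topologicalClosure,
    Submodule.isClosed_topologicalClosure _,
    infdim_of_linInd (eb_linInd hinj) fun k => Submodule.le_topologicalClosure _
      (Submodule.subset_span ⟨k, rfl⟩), |c| / 2, by positivity, closed_bound S _ ?_⟩
  intro x hx
  obtain ⟨g, rfl⟩ := (Finsupp.mem_span_range_iff_exists_finsupp).1 hx
  set x := g.sum fun i a => a • v i with hxdef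
  have hx' : x = ∑ i ∈ g.support, g i • v i := rfl
  have hgi : ∀ i ∈ g.support, |g i| ≤ ‖x‖ := by
    intro i hi
    have h1 : est (Nat.pair (s - 1) (φ i)) x = g i := by
      rw [hx', map_sum, Finset.sum_eq_single i]
      · rw [map_smul, hv, est_eb, if_pos rfl, smul_eq_mul, mul_one]
      · intro j _ hj
        rw [map_smul, hv, est_eb, if_neg (fun h => hj (hinj h)), smul_zero]
      · exact fun h => absurd hi h
    rw [← h1]; exact est_le _ _
  have hD : DD a x = c • x := by
    rw [hx', map_sum, Finset.smul_sum]
    refine Finset.sum_congr rfl fun i _ => ?_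
    rw [map_smul, hv, DD_eb, lab_pair hs, smul_comm]
  have hS' : ‖S' x‖ ≤ |c| / 2 * ‖x‖ := by
    rw [hx', map_sum]
    refine (norm_sum_le _ _).trans ?_
    rw [← hx']
    calc ∑ i ∈ g.support, ‖S' (g i • v i)‖
        ≤ ∑ i ∈ g.support, ‖x‖ * (|c| / 4) * ((1 : ℝ) / 2) ^ i := by
          refine Finset.sum_le_sum fun i hi => ?_
          rw [map_smul, norm_smul, Real.norm_eq_abs, mul_assoc]
          exact mul_le_mul (hgi i hi) (hb i) (norm_nonneg _) (norm_nonneg _)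
      _ = ‖x‖ * (|c| / 4) * ∑ i ∈ g.support, ((1 : ℝ) / 2) ^ i := by rw [Finset.mul_sum]
      _ ≤ ‖x‖ * (|c| / 4) * 2 := by
          gcongr; exact half_sum_le _
      _ = _ := by ring
  rw [hS, add_apply, hD]
  have h1 := norm_sub_le (c • x + S' x) (S' x)
  rw [add_sub_cancel_right, norm_smul, Real.norm_eq_abs] at h1
  linarith

lemma norm_ge {a : H} {S : Xs →L[ℝ] Xs} (hS : Zs S) : ‖a‖ ≤ ‖DD a + S‖ := by
  obtain ⟨b, hb, hz⟩ := decompose (DD a + S)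
  have : Zs (DD (b - a)) := by
    have h := hS.sub hz
    have e : S - (DD a + S - DD b) = DD (b - a) := by rw [map_sub]; abel
    rwa [e] at h
  have := Zs_DD this
  rw [sub_eq_zero] at this
  rwa [← this] at hb ⊢

lemma norm_DD_ge (a : H) : ‖a‖ ≤ ‖DD a‖ := by
  have := norm_ge (a := a) Zs.zero
  rwa [add_zero] at this

lemma DD_inj : Function.Injective DD := by
  rw [injective_iff_map_eq_zero]
  intro a ha
  have := norm_DD_ge a
  rw [ha, norm_zero] at this
  exact norm_le_zero_iff.1 this

lemma DD_closed : IsClosed (Set.range DD) := by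
  have : AntilipschitzWith 1 DD := by
    refine AddMonoidHomClass.antilipschitz_of_bound DD fun x => ?_
    simpa using norm_DD_ge x
  exact this.isClosed_range DD.uniformContinuous

def hb (s : ℕ) : H := lp.single 2 s (1 : ℝ)

lemma hb_apply (s t : ℕ) : hb s t = if t = s then 1 else 0 := by
  by_cases h : t = s
  · subst h; simp [hb]
  · simp [hb, h]

lemma DD_hb (s : ℕ) : DD (hb s) = II s := by
  refine (hasSum_DD (hb s)).unique ?_
  convert hasSum_single s (f := fun t => hb s t • II t) ?_ using 1
  · simp [hb_apply]
  · intro t ht; simp [hb_apply, ht]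

lemma V_eq : (Submodule.span ℝ (Set.range II)).topologicalClosure = LinearMap.range DD.toLinearMap := by
  apply le_antisymm
  · refine Submodule.topologicalClosure_minimal _ ?_ ?_
    · rw [Submodule.span_le]
      rintro _ ⟨s, rfl⟩
      exact ⟨hb s, DD_hb s⟩
    · exact DD_closed
  · rintro _ ⟨a, rfl⟩
    have : DD a ∈ closure ((Submodule.span ℝ (Set.range II) : Submodule ℝ _) : Set (Xs →L[ℝ] Xs)) :=
      mem_closure_of_tendsto (hasSum_DD a) (Eventually.of_forall fun F =>
        Submodule.sum_mem _ fun s _ => Submodule.smul_mem _ _ (Submodule.subset_span ⟨s, rfl⟩))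
    exact this

def hfin (c : ℕ → ℝ) (F : Finset ℕ) : H := ∑ s ∈ F, c s • hb s

lemma DD_hfin (c : ℕ → ℝ) (F : Finset ℕ) : DD (hfin c F) = ∑ s ∈ F, c s • II s := by
  rw [hfin, map_sum]
  exact Finset.sum_congr rfl fun s _ => by rw [map_smul, DD_hb]

lemma hfin_apply (c : ℕ → ℝ) (F : Finset ℕ) (t : ℕ) : hfin c F t = if t ∈ F then c t else 0 := by
  rw [hfin, lp.coeFn_sum, Finset.sum_apply]
  simp [hb_apply]

lemma hfin_norm (c : ℕ → ℝ) (F : Finset ℕ) : ‖hfin c F‖ ^ 2 = ∑ s ∈ F, c s ^ 2 := by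
  refine (norm_H_sq _).unique ?_
  have : ∑ s ∈ F, c s ^ 2 = ∑ s ∈ F, (hfin c F) s ^ 2 :=
    Finset.sum_congr rfl fun s hs => by rw [hfin_apply, if_pos hs]
  rw [this]
  exact hasSum_sum_of_ne_finset_zero fun s hs => by rw [hfin_apply, if_neg hs]; simp

lemma low (c : ℕ → ℝ) (F : Finset ℕ) : Real.sqrt (∑ s ∈ F, c s ^ 2) ≤ ‖∑ s ∈ F, c s • II s‖ := by
  rw [← hfin_norm, Real.sqrt_sq (norm_nonneg _), ← DD_hfin]
  exact norm_DD_ge _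

lemma II_linInd : LinearIndependent ℝ II := by
  rw [linearIndependent_iff']
  intro F g hg i hi
  have h := low g F
  rw [hg, norm_zero] at h
  have h0 : 0 ≤ ∑ s ∈ F, g s ^ 2 := Finset.sum_nonneg fun _ _ => sq_nonneg _
  have h1 : ∑ s ∈ F, g s ^ 2 = 0 := (Real.sqrt_eq_zero h0).1 (le_antisymm h (Real.sqrt_nonneg _))
  have := (Finset.sum_eq_zero_iff_of_nonneg fun _ _ => sq_nonneg _).1 h1 i hi
  simpa using this

lemma expansion (a : H) : ∃! b : ℕ → ℝ,
    Tendsto (fun N => ∑ s ∈ Finset.range N, b s • II s) atTop (𝓝 (DD a)) := by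
  refine ⟨fun s => a s, (hasSum_DD a).tendsto_sum_nat, ?_⟩
  intro b hb'
  funext t
  have h1 : Tendsto (fun N => DD (hfin b (Finset.range N) - a)) atTop (𝓝 0) := by
    have := hb'.sub_const (DD a)
    rw [sub_self] at this
    refine this.congr fun N => ?_
    rw [map_sub, DD_hfin]
  have h2 : Tendsto (fun N => ‖DD (hfin b (Finset.range N) - a)‖) atTop (𝓝 0) := by
    simpa using h1.norm
  have h3 : ∀ᶠ N in atTop, |b t - a t| ≤ ‖DD (hfin b (Finset.range N) - a)‖ := by
    filter_upwards [eventually_gt_atTop t] with N hN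
    refine le_trans ?_ (norm_DD_ge _)
    have := lp.norm_apply_le_norm (by norm_num) (hfin b (Finset.range N) - a) t
    rw [lp.coeFn_sub, Pi.sub_apply, hfin_apply, if_pos (Finset.mem_range.2 hN)] at this
    exact this
  have h4 : |b t - a t| ≤ 0 := ge_of_tendsto h2 h3
  exact sub_eq_zero.1 (abs_eq_zero.1 (le_antisymm h4 (abs_nonneg _)))

lemma reflexive_of_equiv {E : Type*} [NormedAddCommGroup E] [NormedSpace ℝ E] (e : H ≃L[ℝ] E) :
    Function.Surjective (NormedSpace.inclusionInDoubleDual ℝ E) := by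
  intro Φ
  -- functional on H
  let ψ : StrongDual ℝ H := Φ.comp
    (((ContinuousLinearMap.compL ℝ E H ℝ).flip (e.symm : E →L[ℝ] H)).comp (innerSL ℝ (E := H)))
  let h : H := (InnerProductSpace.toDual ℝ H).symm ψ
  refine ⟨e h, ?_⟩
  ext f
  rw [NormedSpace.dual_def]
  let g : StrongDual ℝ H := f.comp (e : H →L[ℝ] E)
  let k : H := (InnerProductSpace.toDual ℝ H).symm g
  have h1 : ∀ y, inner ℝ k y = f (e y) := fun y =>
    InnerProductSpace.toDual_symm_apply (𝕜 := ℝ) (x := y) (y := g)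
  have h2 : ∀ y, inner ℝ h y = ψ y := fun y =>
    InnerProductSpace.toDual_symm_apply (𝕜 := ℝ) (x := y) (y := ψ)
  rw [← h1, real_inner_comm, h2]
  change Φ _ = Φ f
  congr 1
  ext y
  change inner ℝ k (e.symm y) = f y
  rw [h1]; simp

lemma reflexive_V : Function.Surjective
    ⇑(NormedSpace.inclusionInDoubleDual ℝ
      ↥((Submodule.span ℝ (Set.range II)).topologicalClosure)) := by
  rw [V_eq]
  exact reflexive_of_equiv (ContinuousLinearMap.equivRange DD_inj DD_closed)

lemma norm_II {s : ℕ} (hs : 1 ≤ s) : ‖II s‖ = 1 := by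
  apply le_antisymm
  · refine ContinuousLinearMap.opNorm_le_bound _ zero_le_one fun x => ?_
    rw [one_mul, II_pos hs]
    exact Pm_norm_le _ x
  · have := (II s).le_opNorm (eb (Nat.pair (s - 1) 0))
    rw [II_eb hs, if_pos (lab_pair hs 0), norm_eb, mul_one] at this
    exact this

lemma II_comp {s t : ℕ} (hs : 1 ≤ s) (ht : 1 ≤ t) :
    (II s).comp (II t) = if s = t then II s else 0 := by
  apply clm_ext_eb
  intro n
  rw [ContinuousLinearMap.comp_apply, II_eb ht]
  by_cases h : lab n = t
  · rw [if_pos h, II_eb hs, h]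
    by_cases h2 : s = t
    · rw [if_pos h2.symm, if_pos h2, II_eb hs, if_pos (h.trans h2.symm)]
    · rw [if_neg (Ne.symm h2), if_neg h2]; rfl
  · rw [if_neg h, map_zero]
    split_ifs with h2
    · rw [II_eb hs, if_neg (h2 ▸ h)]
    · rfl

lemma II_range {s : ℕ} (hs : 1 ≤ s) : LinearMap.range (II s).toLinearMap =
    (Submodule.span ℝ (Set.range fun k => eb (Nat.pair (s - 1) k))).topologicalClosure := by
  have hidem : ∀ x, II s (II s x) = II s x := fun x => by
    have := II_comp hs hs
    rw [if_pos rfl] at this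
    exact congrArg (fun T : Xs →L[ℝ] Xs => T x) this
  set U := Submodule.span ℝ (Set.range fun k => eb (Nat.pair (s - 1) k)) with hU
  apply le_antisymm
  · rintro _ ⟨x, rfl⟩
    change II s x ∈ closure (U : Set Xs)
    have h1 : Tendsto (fun N => II s (PN N x)) atTop (𝓝 (II s x)) :=
      ((II s).continuous.tendsto x).comp (PN_tendsto x)
    refine mem_closure_of_tendsto h1 (Eventually.of_forall fun N => ?_)
    rw [PN_eq, map_sum]
    refine U.sum_mem fun i _ => ?_
    rw [map_smul]
    refine U.smul_mem _ ?_
    rw [II_eb hs]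
    split_ifs with h
    · refine Submodule.subset_span ⟨(Nat.unpair i).2, ?_⟩
      have : s - 1 = (Nat.unpair i).1 := by rw [← h]; rfl
      change eb _ = eb i
      rw [this, Nat.pair_unpair]
    · exact U.zero_mem
  · refine Submodule.topologicalClosure_minimal _ ?_ ?_
    · rw [hU, Submodule.span_le]
      rintro _ ⟨k, rfl⟩
      exact ⟨eb (Nat.pair (s - 1) k), by
        change II s _ = _
        rw [II_eb hs, if_pos (lab_pair hs k)]⟩
    · have : ((LinearMap.range (II s).toLinearMap : Submodule ℝ Xs) : Set Xs) = {x | II s x = x} := by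
        ext x
        constructor
        · rintro ⟨y, rfl⟩; exact hidem y
        · intro h; exact ⟨x, h⟩
      rw [this]
      exact isClosed_eq (II s).continuous continuous_id

end HISp
end

/-- **Main theorem.**  There is an infinite-dimensional Banach space `X` with a Schauder
basis `e` such that `L(X)` decomposes as a topological direct sum `V ⊕ SS(X)`, where
`V` is the closed linear span of a sequence `(I_s)_{s=0}^∞` of projections forming an
unconditional basis of `V`: `I_0 = Id_X`, each `I_s` (`s ≥ 1`) is a norm-one projection
onto an infinite-dimensional subspace spanned by a subsequence of the basis,
`I_s I_t = δ_{st} I_s` for `s, t ≥ 1` (so `V` as a Banach algebra is the unitisation of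
the closed span of `{I_s : s ≥ 1}` with pointwise multiplication), and `V` is
infinite-dimensional and reflexive. -/
theorem banach_space_with_reflexive_quotient_LX_mod_SSX :
    ∃ (X : Type) (_ : NormedAddCommGroup X) (_ : NormedSpace ℝ X) (_ : CompleteSpace X)
      (e : ℕ → X) (I : ℕ → (X →L[ℝ] X)),
      -- X is infinite dimensional
      ¬ FiniteDimensional ℝ X ∧
      -- e is a Schauder basis of X
      (∀ x : X, ∃! a : ℕ → ℝ,
        Filter.Tendsto (fun N => ∑ i ∈ Finset.range N, a i • e i)
          Filter.atTop (nhds x)) ∧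
      -- I 0 is the identity of X
      I 0 = ContinuousLinearMap.id ℝ X ∧
      -- each I s (s ≥ 1) is a norm-one projection onto an infinite-dimensional
      -- subspace of X spanned by a subsequence of the basis
      (∀ s : ℕ, 1 ≤ s →
        ‖I s‖ = 1 ∧ (I s).comp (I s) = I s ∧
        ¬ FiniteDimensional ℝ ↥(LinearMap.range (I s).toLinearMap) ∧
        ∃ φ : ℕ → ℕ, StrictMono φ ∧
          LinearMap.range (I s).toLinearMap =
            (Submodule.span ℝ (Set.range fun n => e (φ n))).topologicalClosure) ∧
      -- pointwise multiplication: I_s I_t = δ_{st} I_s for s, t ≥ 1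
      (∀ s t : ℕ, 1 ≤ s → 1 ≤ t → (I s).comp (I t) = if s = t then I s else 0) ∧
      -- (I_s)_{s=0}^∞ is an unconditional basic sequence in L(X)
      (∀ s, I s ≠ 0) ∧
      (∃ C : ℝ, 0 < C ∧ ∀ (a : ℕ → ℝ) (n N : ℕ), n ≤ N →
        ‖∑ s ∈ Finset.range n, a s • I s‖ ≤ C * ‖∑ s ∈ Finset.range N, a s • I s‖) ∧
      (∃ C : ℝ, 0 < C ∧ ∀ (a ε : ℕ → ℝ) (N : ℕ), (∀ s, |ε s| ≤ 1) →
        ‖∑ s ∈ Finset.range N, (ε s * a s) • I s‖ ≤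
          C * ‖∑ s ∈ Finset.range N, a s • I s‖) ∧
      -- (I_s) is a basis of V := closed span {I_s : s ≥ 0}
      (∀ T ∈ (Submodule.span ℝ (Set.range I)).topologicalClosure,
        ∃! a : ℕ → ℝ,
          Filter.Tendsto (fun N => ∑ s ∈ Finset.range N, a s • I s)
            Filter.atTop (nhds T)) ∧
      -- V is infinite dimensional
      ¬ FiniteDimensional ℝ ↥((Submodule.span ℝ (Set.range I)).topologicalClosure) ∧
      -- V is reflexive
      Function.Surjective
        ⇑(NormedSpace.inclusionInDoubleDual ℝ
            ↥((Submodule.span ℝ (Set.range I)).topologicalClosure)) ∧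
      -- L(X) = V ⊕ SS(X): unique decomposition with bounded projections
      (∀ T : X →L[ℝ] X, ∃! RS : (X →L[ℝ] X) × (X →L[ℝ] X),
        RS.1 ∈ (Submodule.span ℝ (Set.range I)).topologicalClosure ∧
        StrictlySingular RS.2 ∧ T = RS.1 + RS.2) ∧
      (∃ C : ℝ, 0 < C ∧ ∀ T R S : X →L[ℝ] X,
        R ∈ (Submodule.span ℝ (Set.range I)).topologicalClosure →
        StrictlySingular S → T = R + S → ‖R‖ ≤ C * ‖T‖ ∧ ‖S‖ ≤ C * ‖T‖) := by
  have hSS : ∀ S : HISp.Xs →L[ℝ] HISp.Xs, StrictlySingular S → HISp.Zs S := by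
    intro S hS
    obtain ⟨a, _, hz⟩ := HISp.decompose S
    have h0 : a = 0 := by
      apply HISp.H_eq_zero
      intro s hs
      by_contra hne
      obtain ⟨U, h1, h2, h3⟩ := HISp.below (S := S) (add_sub_cancel (HISp.DD a) S).symm hz hs hne
      exact hS U h1 h2 h3
    rw [h0, map_zero, sub_zero] at hz
    exact hz
  have hZS : ∀ S : HISp.Xs →L[ℝ] HISp.Xs, HISp.Zs S → StrictlySingular S := by
    rintro S hS U - hU ⟨c, hc, h⟩
    exact hS.ss hU hc h
  have hstep : ∀ (a : ℕ → ℝ) (F : Finset ℕ) (r : ℝ), ∑ s ∈ F, a s ^ 2 ≤ r →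
      ‖∑ s ∈ F, a s • HISp.II s‖ ≤ 2 * Real.sqrt r := fun a F r hr =>
    (HISp.fin_bound a F).trans (by have := Real.sqrt_le_sqrt hr; linarith)
  refine ⟨HISp.Xs, inferInstance, inferInstance, inferInstance, HISp.eb, HISp.II, ?_,
    HISp.schauder, HISp.II_zero, ?_, fun s t hs ht => HISp.II_comp hs ht, ?_,
    ⟨2, two_pos, ?_⟩, ⟨2, two_pos, ?_⟩, ?_, ?_, HISp.reflexive_V, ?_, ⟨3, by norm_num, ?_⟩⟩
  · intro hfd
    have := (HISp.eb_linInd Function.injective_id).finite_of_isNoetherian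
    exact not_finite ℕ
  · intro s hs
    have hmono : StrictMono fun k => Nat.pair (s - 1) k := fun i j hij =>
      Nat.pair_lt_pair_right _ hij
    refine ⟨HISp.norm_II hs, by simpa using HISp.II_comp hs hs, ?_, _, hmono, HISp.II_range hs⟩
    refine HISp.infdim_of_linInd (HISp.eb_linInd hmono.injective) fun k => ?_
    rw [HISp.II_range hs]
    exact Submodule.le_topologicalClosure _ (Submodule.subset_span ⟨k, rfl⟩)
  · exact fun s => HISp.II_linInd.ne_zero s
  · intro a n N hn
    refine (hstep a _ (∑ s ∈ Finset.range N, a s ^ 2) ?_).trans ?_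
    · exact Finset.sum_le_sum_of_subset_of_nonneg (Finset.range_mono hn) fun _ _ _ => sq_nonneg _
    · have := HISp.low a (Finset.range N)
      linarith
  · intro a ε N hε
    refine (hstep (fun s => ε s * a s) _ (∑ s ∈ Finset.range N, a s ^ 2) ?_).trans ?_
    · refine Finset.sum_le_sum fun s _ => ?_
      have h1 : ε s ^ 2 ≤ 1 := by
        rw [← sq_abs]
        exact pow_le_one₀ (abs_nonneg _) (hε s)
      rw [mul_pow]
      exact mul_le_of_le_one_left (sq_nonneg _) h1
    · have := HISp.low a (Finset.range N)
      linarith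
  · intro T hT
    rw [HISp.V_eq] at hT
    obtain ⟨a, rfl⟩ := hT
    exact HISp.expansion a
  · exact HISp.infdim_of_linInd HISp.II_linInd fun k =>
      Submodule.le_topologicalClosure _ (Submodule.subset_span ⟨k, rfl⟩)
  · intro T
    rw [HISp.V_eq]
    obtain ⟨a, _, hz⟩ := HISp.decompose T
    refine ⟨(HISp.DD a, T - HISp.DD a), ⟨⟨a, rfl⟩, hZS _ hz, by simp⟩, ?_⟩
    rintro ⟨R, S⟩ ⟨⟨b, hb⟩, hS, hT⟩
    change HISp.DD b = R at hb
    subst hb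
    change T = HISp.DD b + S at hT
    change StrictlySingular S at hS
    have h1 : HISp.Zs (HISp.DD (b - a)) := by
      have h := hz.sub (hSS S hS)
      have e : T - HISp.DD a - S = HISp.DD (b - a) := by rw [hT, map_sub]; abel
      rwa [e] at h
    have h2 := sub_eq_zero.1 (HISp.Zs_DD h1)
    subst h2
    rw [hT]; simp
  · intro T R S hR hS hT
    rw [HISp.V_eq] at hR
    obtain ⟨a, rfl⟩ := hR
    change T = HISp.DD a + S at hT
    have h1 := HISp.norm_ge (a := a) (hSS S hS)
    rw [← hT] at h1
    have h2 := HISp.norm_DD_le a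
    have h3 : ‖S‖ ≤ ‖T‖ + ‖HISp.DD a‖ := by
      have : S = T - HISp.DD a := by rw [hT]; simp
      rw [this]; exact norm_sub_le _ _
    have h4 := norm_nonneg T
    refine ⟨?_, by linarith⟩
    change ‖HISp.DD a‖ ≤ _
    linarith


end
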